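/- Let Z be a Borel subset of B(2) ⊂ ℝ⁴ admitting a taming function I (defined for x ∈ Z, 0 < r ≤ 256) with upper bound Λ = sup I, and set β = 1/10. Then there exist constants K₁ > 1, β̄ ∈ (0, 1/100], and δ > 0 such that for every ball B_x(r) ⊆ B(2) and every s ∈ (0,r), there exists a countable family of balls S = {B_{x_i}(r_i)} covering Z ∩ B_x(r) such that: (1) r_i ≥ βs for every i; (2) for every i, either r_i ≤ s, or the set D_δ(r_i) ∩ B_{x_i}(r_i), where D_δ(t) = B(1) ∩ {z ∈ Z : I(z, βt/2) ≥ Λ − δ}, is contained in the 2β̄r_i-neighborhood of some 1-dimensional affine subspace of ℝ⁴; (3) Σ_i r_i² ≤ K₁ r². -/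

import Mathlib

open Metric MeasureTheory
open scoped RealInnerProductSpace

noncomputable section

abbrev E4 := EuclideanSpace ℝ (Fin 4)

/-- `D_μ²(x,r)`: the infimum over 2-dimensional affine subspaces `L ⊆ ℝ⁴` of
`r⁻⁴ ∫_{B_x(r)} dist(y,L)² dμ(y)`. -/
def Dmu2 (μ : Measure E4) (x : E4) (r : ℝ) : ℝ :=
  sInf { s : ℝ | ∃ L : AffineSubspace ℝ E4, (L : Set E4).Nonempty ∧
    Module.finrank ℝ L.direction = 2 ∧
    s = r ^ (-4 : ℤ) * ∫ y in ball x r, (Metric.infDist y (L : Set E4)) ^ 2 ∂μ }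

/-- `I` is a taming function for the Borel set `Z ⊆ B(R)`, with upper bound `Λ`,
pinching function `epsFn` and Reifenberg constant `C`. -/
def IsTamingFunctionWith (R : ℝ) (Z : Set E4) (I : E4 → ℝ → ℝ)
    (Λ : ℝ) (epsFn : ℝ → ℝ → ℝ → ℝ) (C : ℝ) : Prop :=
  -- (1) nonnegative, bounded (by Λ), continuous, nondecreasing in r
  (∀ x ∈ Z, ∀ r ∈ Set.Ioc (0:ℝ) (128 * R), 0 ≤ I x r ∧ I x r ≤ Λ) ∧
  ContinuousOn (fun p : E4 × ℝ => I p.1 p.2) (Z ×ˢ Set.Ioc (0:ℝ) (128 * R)) ∧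
  (∀ x ∈ Z, ∀ r₁ ∈ Set.Ioc (0:ℝ) (128 * R), ∀ r₂ ∈ Set.Ioc (0:ℝ) (128 * R),
    r₁ ≤ r₂ → I x r₁ ≤ I x r₂) ∧
  -- (2) the pinching property, with pinching function epsFn
  (∀ β ∈ Set.Ioo (0:ℝ) 1, ∀ β' ∈ Set.Ioo (0:ℝ) 1, ∀ τ > (0:ℝ),
    0 < epsFn β β' τ ∧
    ∀ x ∈ ball (0:E4) R, ∀ r ∈ Set.Ioc (0:ℝ) R, ∀ p : Fin 3 → E4,
      (∀ i, p i ∈ Z ∩ closedBall x r) →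
      (∀ j, β' * r ≤ Metric.infDist (p j)
        ((affineSpan ℝ (p '' ({j}ᶜ)) : AffineSubspace ℝ E4) : Set E4)) →
      (∀ i, I (p i) (2 * r) - I (p i) (β * r / 2) < epsFn β β' τ) →
      ∀ y ∈ Z ∩ closedBall x r, ∀ y' ∈ Z ∩ closedBall x r,
        |I y (β * r / 2) - I y' (β * r / 2)| < τ) ∧
  -- (3) the Reifenberg condition with constant C
  (0 < C ∧ ∀ μ : Measure E4, IsFiniteMeasure μ → μ Zᶜ = 0 →
    ∀ x ∈ closedBall (0:E4) (2 * R), ∀ r ∈ Set.Ioc (0:ℝ) (2 * R),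
      Dmu2 μ x r ≤ C / r ^ 2 * ∫ z in ball x r, (I z (32 * r) - I z (2 * r)) ∂μ)

/-!
Every point `p` gets the first radius among `r, r/10, r/100, …` that is at most `s` or at which the
points of `B(p, ·)` with almost maximal `I` are close to a line. One step earlier these points
contain three independent ones, so the pinching property makes `I(p, ·)` nearly constant from that
scale up to the largest one. A greedy choice of separated balls covers, and it remains to bound the
sum of the squared radii of separated balls whose centres have a small drop of `I`.

The Reifenberg condition, applied to the measure `∑ r_p² δ_p`, turns small drops into small
`∑ D²` at most points and scales. By induction on the ratio of the extreme radii this measure is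
already known to have quadratic growth. Balls that see little mass at some scale are charged to
that scale. At the remaining points the best planes at consecutive scales are close to each other,
so that a composition of smoothed nearest-plane projections almost preserves the mutual distances
and carries the balls to separated balls in a single plane, where area gives the bound, with a
constant independent of the induction.
-/

/-! ### Affine planes -/

section AffinePlane

variable {E : Type*} [NormedAddCommGroup E] [InnerProductSpace ℝ E]

/-- A two-dimensional affine subspace, encoded by a base point and its direction so that the
orthogonal projection is available without choosing a point. -/
structure AffinePlane (E : Type*) [NormedAddCommGroup E] [InnerProductSpace ℝ E] where
  point : E
  direction : Submodule ℝ E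
  finrank_direction : Module.finrank ℝ direction = 2

namespace AffinePlane

instance (L : AffinePlane E) : FiniteDimensional ℝ L.direction :=
  FiniteDimensional.of_finrank_pos (by rw [L.finrank_direction]; norm_num)

/-- Orthogonal projection onto the direction of the plane. -/
def proj (L : AffinePlane E) : E →L[ℝ] E := L.direction.starProjection

/-- The vector leading from `y` to its nearest point on the plane `L`. -/
def displacement (L : AffinePlane E) (y : E) : E := L.proj (y - L.point) - (y - L.point)

variable (L : AffinePlane E)

lemma proj_mem (v : E) : L.proj v ∈ L.direction := Submodule.starProjection_apply_mem _ _

lemma proj_eq_self {v : E} (hv : v ∈ L.direction) : L.proj v = v :=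
  Submodule.starProjection_eq_self_iff.2 hv

lemma proj_proj (v : E) : L.proj (L.proj v) = L.proj v := L.proj_eq_self (L.proj_mem v)

lemma norm_proj_le (v : E) : ‖L.proj v‖ ≤ ‖v‖ := Submodule.norm_starProjection_apply_le _ _

lemma inner_proj_left (u v : E) : inner ℝ (L.proj u) v = inner ℝ u (L.proj v) :=
  Submodule.inner_starProjection_left_eq_right _ _ _

lemma norm_sq_eq_proj_add_sub_proj (v : E) :
    ‖v‖ ^ 2 = ‖L.proj v‖ ^ 2 + ‖v - L.proj v‖ ^ 2 := by
  have horth : inner ℝ (L.proj v) (v - L.proj v) = 0 := by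
    rw [L.inner_proj_left, map_sub, L.proj_proj, sub_self, inner_zero_right]
  simpa [horth] using norm_add_sq_real (L.proj v) (v - L.proj v)

lemma norm_sub_proj_le (v : E) : ‖v - L.proj v‖ ≤ ‖v‖ := by
  refine le_of_sq_le_sq ?_ (norm_nonneg v)
  linarith [L.norm_sq_eq_proj_add_sub_proj v, sq_nonneg ‖L.proj v‖]

lemma displacement_sub (y z : E) :
    L.displacement y - L.displacement z = -((y - z) - L.proj (y - z)) := by
  simp only [displacement, map_sub]; abel

lemma proj_displacement (y : E) : L.proj (L.displacement y) = 0 := by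
  rw [displacement, map_sub, L.proj_proj, sub_self]

lemma norm_displacement_sub_le (y z : E) :
    ‖L.displacement y - L.displacement z‖ ≤ ‖y - z‖ := by
  rw [L.displacement_sub, norm_neg]; exact L.norm_sub_proj_le _

end AffinePlane

/-! ### Tilt between planes -/

/-- Quantitative linear independence of an ordered pair: `w₁` has norm at least `d` and `w₂` has
distance at least `d` from the line `ℝ w₁`. -/
def IsSpreadPair (d : ℝ) (w₁ w₂ : E) : Prop := d ≤ ‖w₁‖ ∧ ∀ s : ℝ, d ≤ ‖w₂ + s • w₁‖

lemma IsSpreadPair.abs_add_abs_mul_le {t ρ : ℝ} {w₁ w₂ : E} (h : IsSpreadPair (ρ * t) w₁ w₂)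
    (hρ : 0 < ρ) (hρ1 : ρ ≤ 1) (hw₂ : ‖w₂‖ ≤ 2 * t) (α β : ℝ) :
    (|α| + |β|) * (ρ ^ 2 * t) ≤ 4 * ‖α • w₁ + β • w₂‖ := by
  set X := ‖α • w₁ + β • w₂‖ with hX
  have hX0 : 0 ≤ X := norm_nonneg _
  have hβ : |β| * (ρ * t) ≤ X := by
    rcases eq_or_ne β 0 with rfl | hβ
    · simpa using hX0
    · have : α • w₁ + β • w₂ = β • (w₂ + (α / β) • w₁) := by
        rw [smul_add, smul_smul, mul_div_cancel₀ _ hβ]; abel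
      rw [hX, this, norm_smul, Real.norm_eq_abs]
      gcongr
      exact h.2 _
  have hα : |α| * (ρ * t) ≤ X + |β| * (2 * t) := by
    calc |α| * (ρ * t) ≤ |α| * ‖w₁‖ := by gcongr; exact h.1
      _ = ‖α • w₁ + β • w₂ - β • w₂‖ := by rw [add_sub_cancel_right, norm_smul, Real.norm_eq_abs]
      _ ≤ X + ‖β • w₂‖ := norm_sub_le _ _
      _ ≤ X + |β| * (2 * t) := by rw [norm_smul, Real.norm_eq_abs]; gcongr
  nlinarith [mul_le_mul_of_nonneg_left hα hρ.le, mul_le_mul_of_nonneg_left hβ hρ.le]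

lemma norm_smul_add_smul_le {u₁ u₂ : E} {d : ℝ} (h₁ : ‖u₁‖ ≤ d) (h₂ : ‖u₂‖ ≤ d) (α β : ℝ) :
    ‖α • u₁ + β • u₂‖ ≤ (|α| + |β|) * d := by
  refine (norm_add_le _ _).trans ?_
  rw [norm_smul, norm_smul, Real.norm_eq_abs, Real.norm_eq_abs, add_mul]
  gcongr

lemma IsSpreadPair.abs_add_abs_mul_le_of_near {t ρ δ : ℝ} {w₁ w₂ u₁ u₂ : E}
    (h : IsSpreadPair (ρ * t) w₁ w₂) (ht : 0 < t) (hρ : 0 < ρ) (hρ1 : ρ ≤ 1)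
    (hδ : δ ≤ ρ ^ 2 / 16) (hw₂ : ‖w₂‖ ≤ 2 * t)
    (hu₁ : ‖w₁ - u₁‖ ≤ 2 * δ * t) (hu₂ : ‖w₂ - u₂‖ ≤ 2 * δ * t) (α β : ℝ) :
    (|α| + |β|) * (ρ ^ 2 * t) ≤ 8 * ‖α • u₁ + β • u₂‖ := by
  have hspread := h.abs_add_abs_mul_le hρ hρ1 hw₂ α β
  have herror : ‖α • w₁ + β • w₂‖ ≤ ‖α • u₁ + β • u₂‖ + (|α| + |β|) * (2 * δ * t) := by
    have : α • w₁ + β • w₂ = (α • u₁ + β • u₂) + (α • (w₁ - u₁) + β • (w₂ - u₂)) := by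
      simp only [smul_sub]; abel
    rw [this]
    exact (norm_add_le _ _).trans (by gcongr; exact norm_smul_add_smul_le hu₁ hu₂ α β)
  have hsmall : (|α| + |β|) * (2 * δ * t) ≤ (|α| + |β|) * (ρ ^ 2 * t / 8) := by
    gcongr
    nlinarith
  linarith

lemma exists_smul_add_smul_eq_of_finrank_eq_two {V : Submodule ℝ E}
    (hV : Module.finrank ℝ V = 2) {u₁ u₂ : E} (h₁ : u₁ ∈ V) (h₂ : u₂ ∈ V)
    {d : ℝ} (hd : 0 < d) (hind : ∀ α β : ℝ, (|α| + |β|) * d ≤ ‖α • u₁ + β • u₂‖)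
    {v : E} (hv : v ∈ V) : ∃ α β : ℝ, α • u₁ + β • u₂ = v := by
  have hli : LinearIndependent ℝ ![(⟨u₁, h₁⟩ : V), ⟨u₂, h₂⟩] := by
    rw [LinearIndependent.pair_iff]
    intro α β h
    have hzero : α • u₁ + β • u₂ = 0 := by simpa using congrArg Subtype.val h
    have hle : |α| + |β| ≤ 0 := by
      have := hind α β
      rw [hzero, norm_zero] at this
      exact nonpos_of_mul_nonpos_left this hd
    exact ⟨abs_eq_zero.1 (by linarith [abs_nonneg α, abs_nonneg β]),
      abs_eq_zero.1 (by linarith [abs_nonneg α, abs_nonneg β])⟩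
  have hspan := hli.span_eq_top_of_card_eq_finrank (by simp [hV])
  have hmem : (⟨v, hv⟩ : V) ∈ Submodule.span ℝ (Set.range ![(⟨u₁, h₁⟩ : V), ⟨u₂, h₂⟩]) := by
    rw [hspan]; trivial
  rw [Matrix.range_cons, Matrix.range_cons, Matrix.range_empty, Set.union_empty,
    Set.singleton_union, Submodule.mem_span_pair] at hmem
  obtain ⟨α, β, h⟩ := hmem
  exact ⟨α, β, by simpa using congrArg Subtype.val h⟩

namespace AffinePlane

lemma norm_proj_sub_proj_proj_le (L L' : AffinePlane E) {d : ℝ} {w : E}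
    (h : ‖w - L.proj w‖ ≤ d) (h' : ‖w - L'.proj w‖ ≤ d) :
    ‖L.proj w - L'.proj (L.proj w)‖ ≤ 2 * d := by
  have : L.proj w - L'.proj (L.proj w) =
      (w - L'.proj w) - ((w - L.proj w) - L'.proj (w - L.proj w)) := by
    rw [map_sub]; abel
  rw [this]
  linarith [norm_sub_le (w - L'.proj w) ((w - L.proj w) - L'.proj (w - L.proj w)),
    L'.norm_sub_proj_le (w - L.proj w)]

lemma norm_sub_proj_le_of_spreadPair (L L' : AffinePlane E) {w₁ w₂ : E} {t ρ δ : ℝ} (ht : 0 < t)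
    (hρ : 0 < ρ) (hρ1 : ρ ≤ 1) (hδ : δ ≤ ρ ^ 2 / 16)
    (hw : IsSpreadPair (ρ * t) w₁ w₂) (hw₂ : ‖w₂‖ ≤ 2 * t)
    (hL₁ : ‖w₁ - L.proj w₁‖ ≤ 2 * δ * t) (hL₂ : ‖w₂ - L.proj w₂‖ ≤ 2 * δ * t)
    (hL₁' : ‖w₁ - L'.proj w₁‖ ≤ 2 * δ * t) (hL₂' : ‖w₂ - L'.proj w₂‖ ≤ 2 * δ * t)
    {v : E} (hv : v ∈ L.direction) :
    ‖v - L'.proj v‖ ≤ 32 * δ / ρ ^ 2 * ‖v‖ := by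
  have hind := hw.abs_add_abs_mul_le_of_near ht hρ hρ1 hδ hw₂ hL₁ hL₂
  obtain ⟨α, β, rfl⟩ := exists_smul_add_smul_eq_of_finrank_eq_two L.finrank_direction
    (L.proj_mem w₁) (L.proj_mem w₂) (d := ρ ^ 2 * t / 8) (by positivity)
    (fun α β => by linarith [hind α β]) hv
  set v := α • L.proj w₁ + β • L.proj w₂
  have hsplit : v - L'.proj v =
      α • (L.proj w₁ - L'.proj (L.proj w₁)) + β • (L.proj w₂ - L'.proj (L.proj w₂)) := by
    simp only [v, map_add, map_smul, smul_sub]; abel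
  have hle : ‖v - L'.proj v‖ ≤ (|α| + |β|) * (2 * (2 * δ * t)) := by
    rw [hsplit]
    exact norm_smul_add_smul_le (norm_proj_sub_proj_proj_le L L' hL₁ hL₁')
      (norm_proj_sub_proj_proj_le L L' hL₂ hL₂') α β
  have hδ0 : 0 ≤ δ := by
    have := (norm_nonneg _).trans hL₁
    exact (mul_nonneg_iff_of_pos_left two_pos).1 (nonneg_of_mul_nonneg_left this ht)
  refine hle.trans ?_
  rw [div_mul_eq_mul_div, le_div_iff₀ (by positivity)]
  nlinarith [mul_le_mul_of_nonneg_left (hind α β) hδ0]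

lemma norm_proj_sub_proj_le (L L' : AffinePlane E) {κ : ℝ} (hκ : 0 ≤ κ)
    (h : ∀ v ∈ L.direction, ‖v - L'.proj v‖ ≤ κ * ‖v‖)
    (h' : ∀ v ∈ L'.direction, ‖v - L.proj v‖ ≤ κ * ‖v‖) (x : E) :
    ‖L.proj x - L'.proj x‖ ≤ 2 * κ * ‖x‖ := by
  set z := x - L.proj x with hz
  have hsplit : L.proj x - L'.proj x = (L.proj x - L'.proj (L.proj x)) - L'.proj z := by
    rw [hz, map_sub]; abel
  have htangent : ‖L.proj x - L'.proj (L.proj x)‖ ≤ κ * ‖x‖ :=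
    (h _ (L.proj_mem x)).trans (by gcongr; exact L.norm_proj_le x)
  have hproj_z : L.proj z = 0 := by rw [hz, map_sub, L.proj_proj, sub_self]
  have hnormal : ‖L'.proj z‖ ≤ κ * ‖z‖ := by
    have hsq : ‖L'.proj z‖ ^ 2 = inner ℝ (L'.proj z - L.proj (L'.proj z)) z := by
      rw [inner_sub_left, L.inner_proj_left, hproj_z, inner_zero_right, sub_zero,
        ← real_inner_self_eq_norm_sq, L'.inner_proj_left, L'.proj_proj, ← L'.inner_proj_left]
    have hcs := real_inner_le_norm (L'.proj z - L.proj (L'.proj z)) z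
    have htilt := mul_le_mul_of_nonneg_right (h' _ (L'.proj_mem z)) (norm_nonneg z)
    rcases (norm_nonneg (L'.proj z)).eq_or_lt with h0 | h0
    · rw [← h0]; positivity
    · exact le_of_mul_le_mul_left (by nlinarith) h0
  rw [hsplit]
  linarith [norm_sub_le (L.proj x - L'.proj (L.proj x)) (L'.proj z),
    mul_le_mul_of_nonneg_left (L.norm_sub_proj_le x) hκ]

/-- Closeness of two planes at scale `t` near `a`: their directions make an angle at most `κ`, and
on the ball of radius `20 t` about `a` their displacements differ by at most `κ t`. -/
structure IsClose (L L' : AffinePlane E) (κ : ℝ) (a : E) (t : ℝ) : Prop where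
  norm_proj_sub_le : ∀ v, ‖L.proj v - L'.proj v‖ ≤ κ * ‖v‖
  norm_displacement_sub_le : ∀ y, ‖y - a‖ ≤ 20 * t →
    ‖L.displacement y - L'.displacement y‖ ≤ κ * t

lemma IsClose.mono {L L' : AffinePlane E} {κ κ' : ℝ} {a : E} {t : ℝ} (h : L.IsClose L' κ a t)
    (hκ : κ ≤ κ') (ht : 0 ≤ t) : L.IsClose L' κ' a t where
  norm_proj_sub_le v := (h.norm_proj_sub_le v).trans (by gcongr)
  norm_displacement_sub_le y hy := (h.norm_displacement_sub_le y hy).trans (by gcongr)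

lemma norm_sub_sub_proj_le (L : AffinePlane E) {q q₀ : E} {d : ℝ}
    (h₀ : ‖L.displacement q₀‖ ≤ d) (h : ‖L.displacement q‖ ≤ d) :
    ‖(q - q₀) - L.proj (q - q₀)‖ ≤ 2 * d := by
  rw [← norm_neg, ← L.displacement_sub]
  linarith [norm_sub_le (L.displacement q) (L.displacement q₀)]

lemma displacement_sub_displacement (L L' : AffinePlane E) (y z : E) :
    L.displacement y - L'.displacement y =
      (L.proj (y - z) - L'.proj (y - z)) + (L.displacement z - L'.displacement z) := by
  simp only [displacement, map_sub]; abel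

lemma norm_displacement_sub_le_of_norm_proj_sub_le (L L' : AffinePlane E) {κ : ℝ} (hκ : 0 ≤ κ)
    (hproj : ∀ v, ‖L.proj v - L'.proj v‖ ≤ κ * ‖v‖) {a q₀ y : E} {t : ℝ} (h₀ : ‖q₀ - a‖ ≤ t)
    (hy : ‖y - a‖ ≤ 20 * t) :
    ‖L.displacement y - L'.displacement y‖ ≤
      21 * κ * t + ‖L.displacement q₀ - L'.displacement q₀‖ := by
  have hy' : ‖y - q₀‖ ≤ 21 * t := by
    linarith [norm_sub_le_norm_sub_add_norm_sub y a q₀, norm_sub_rev a q₀]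
  rw [displacement_sub_displacement L L' y q₀]
  refine (norm_add_le _ _).trans (add_le_add_left ?_ _)
  linarith [hproj (y - q₀), mul_le_mul_of_nonneg_left hy' hκ]

lemma isClose_of_spread (L L' : AffinePlane E) {a q₀ q₁ q₂ : E} {t ρ δ : ℝ} (ht : 0 < t)
    (hρ : 0 < ρ) (hρ1 : ρ ≤ 1) (hδ : δ ≤ ρ ^ 2 / 16)
    (h₀ : ‖q₀ - a‖ ≤ t) (h₂ : ‖q₂ - a‖ ≤ t) (hspread : IsSpreadPair (ρ * t) (q₁ - q₀) (q₂ - q₀))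
    (hL : ∀ q ∈ ({q₀, q₁, q₂} : Set E), ‖L.displacement q‖ ≤ δ * t)
    (hL' : ∀ q ∈ ({q₀, q₁, q₂} : Set E), ‖L'.displacement q‖ ≤ δ * t) :
    L.IsClose L' (1400 / ρ ^ 2 * δ) a t := by
  have hδ0 : 0 ≤ δ := nonneg_of_mul_nonneg_left ((norm_nonneg _).trans (hL q₀ (by simp))) ht
  have hnear (M : AffinePlane E) (hM : ∀ q ∈ ({q₀, q₁, q₂} : Set E), ‖M.displacement q‖ ≤ δ * t)
      {q : E} (hq : q ∈ ({q₀, q₁, q₂} : Set E)) :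
      ‖(q - q₀) - M.proj (q - q₀)‖ ≤ 2 * δ * t :=
    (M.norm_sub_sub_proj_le (hM q₀ (by simp)) (hM q hq)).trans_eq (by ring)
  have hq₂ : ‖q₂ - q₀‖ ≤ 2 * t := by
    linarith [norm_sub_le_norm_sub_add_norm_sub q₂ a q₀, norm_sub_rev a q₀]
  have hone (M M' : AffinePlane E)
      (hM : ∀ q ∈ ({q₀, q₁, q₂} : Set E), ‖M.displacement q‖ ≤ δ * t)
      (hM' : ∀ q ∈ ({q₀, q₁, q₂} : Set E), ‖M'.displacement q‖ ≤ δ * t) :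
      ∀ v ∈ M.direction, ‖v - M'.proj v‖ ≤ 32 * δ / ρ ^ 2 * ‖v‖ := fun v hv =>
    norm_sub_proj_le_of_spreadPair M M' ht hρ hρ1 hδ hspread hq₂ (hnear M hM (by simp))
      (hnear M hM (by simp)) (hnear M' hM' (by simp)) (hnear M' hM' (by simp)) hv
  have hproj := norm_proj_sub_proj_le L L' (by positivity) (hone L L' hL hL') (hone L' L hL' hL)
  set κ := δ / ρ ^ 2 with hκ
  have hδκ : δ ≤ κ := by
    rw [hκ, le_div_iff₀ (by positivity)]
    exact mul_le_of_le_one_right hδ0 (pow_le_one₀ hρ.le hρ1)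
  have hκ0 : 0 ≤ κ := hδ0.trans hδκ
  rw [show 32 * δ / ρ ^ 2 = 32 * κ by ring] at hproj
  rw [show 1400 / ρ ^ 2 * δ = 1400 * κ by ring]
  refine ⟨fun v => (hproj v).trans (mul_le_mul_of_nonneg_right (by linarith) (norm_nonneg v)),
    fun y hy => (norm_displacement_sub_le_of_norm_proj_sub_le L L' (by positivity) hproj h₀
      hy).trans ?_⟩
  have := norm_sub_le (L.displacement q₀) (L'.displacement q₀)
  linarith [hL q₀ (by simp), hL' q₀ (by simp), mul_le_mul_of_nonneg_right hδκ ht.le,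
    mul_nonneg hκ0 ht.le]

end AffinePlane

end AffinePlane

/-! ### Planes close to a spread-out measure -/

lemma sum_filter_le_sum_filter {ι M : Type*} [AddCommMonoid M] [PartialOrder M]
    [IsOrderedAddMonoid M] {s t : Finset ι} {f : ι → M} (hst : s ⊆ t) (hf : ∀ i ∈ t, 0 ≤ f i)
    {p q : ι → Prop} [DecidablePred p] [DecidablePred q] (hpq : ∀ i ∈ s, p i → q i) :
    ∑ i ∈ s with p i, f i ≤ ∑ i ∈ t with q i, f i := by
  refine Finset.sum_le_sum_of_subset_of_nonneg (fun i hi => ?_) fun i hi _ =>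
    hf i (Finset.mem_filter.1 hi).1
  rw [Finset.mem_filter] at hi ⊢
  exact ⟨hst hi.1, hpq i hi.1 hi.2⟩

lemma card_Icc_neg_ceil_le {h : ℝ} (hh : 0 ≤ h) :
    ((Finset.Icc (-⌈h⌉) ⌈h⌉).card : ℝ) ≤ 2 * h + 3 := by
  have hceil : 0 ≤ ⌈h⌉ := Int.ceil_nonneg hh
  have hcard : ((⌈h⌉ + 1 - -⌈h⌉).toNat : ℤ) = 2 * ⌈h⌉ + 1 := by
    rw [Int.toNat_of_nonneg (by linarith)]; ring
  rw [Int.card_Icc, ← Int.cast_natCast (R := ℝ), hcard]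
  push_cast
  linarith [Int.ceil_lt_add_one h]

/- Pigeonhole: `f` takes values in at most `2 h + 3` unit intervals. -/
lemma sum_le_of_abs_le_of_sum_near_le {ι : Type*} {s : Finset ι} {m f : ι → ℝ} {h M : ℝ}
    (hh : 0 ≤ h) (hM : 0 ≤ M) (hm : ∀ i ∈ s, 0 ≤ m i) (hf : ∀ i ∈ s, |f i| ≤ h)
    (hnear : ∀ i ∈ s, ∑ j ∈ s with |f j - f i| < 1, m j ≤ M) :
    ∑ i ∈ s, m i ≤ (2 * h + 3) * M := by
  have hmaps : ∀ i ∈ s, ⌊f i⌋ ∈ Finset.Icc (-⌈h⌉) ⌈h⌉ := by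
    intro i hi
    have hceil : h ≤ ⌈h⌉ := Int.le_ceil _
    obtain ⟨hl, hr⟩ := abs_le.1 (hf i hi)
    rw [Finset.mem_Icc]
    refine ⟨Int.le_floor.2 (by push_cast; linarith), ?_⟩
    exact_mod_cast (Int.floor_le (f i)).trans (hr.trans hceil)
  have hfiber : ∀ z ∈ Finset.Icc (-⌈h⌉) ⌈h⌉, ∑ i ∈ s with ⌊f i⌋ = z, m i ≤ M := by
    intro z _
    rcases (s.filter fun i => ⌊f i⌋ = z).eq_empty_or_nonempty with hempty | ⟨i, hi⟩
    · rwa [hempty, Finset.sum_empty]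
    · rw [Finset.mem_filter] at hi
      refine (sum_filter_le_sum_filter subset_rfl hm fun j _ hj => ?_).trans (hnear i hi.1)
      exact Int.abs_sub_lt_one_of_floor_eq_floor (hj.trans hi.2.symm)
  calc ∑ i ∈ s, m i
      = ∑ z ∈ Finset.Icc (-⌈h⌉) ⌈h⌉, ∑ i ∈ s with ⌊f i⌋ = z, m i :=
        (Finset.sum_fiberwise_of_maps_to hmaps m).symm
    _ ≤ (Finset.Icc (-⌈h⌉) ⌈h⌉).card * M := by
        rw [← nsmul_eq_mul]; exact Finset.sum_le_card_nsmul _ _ _ hfiber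
    _ ≤ (2 * h + 3) * M := by gcongr; exact card_Icc_neg_ceil_le hh

lemma sum_filter_lt_mul_sq_le {ι : Type*} {s : Finset ι} {m f : ι → ℝ} {d : ℝ} (hd : 0 ≤ d)
    (hm : ∀ i ∈ s, 0 ≤ m i) : (∑ i ∈ s with d < f i, m i) * d ^ 2 ≤ ∑ i ∈ s, m i * f i ^ 2 := by
  rw [Finset.sum_mul]
  refine (Finset.sum_le_sum fun i hi => ?_).trans
    (Finset.sum_le_sum_of_subset_of_nonneg (Finset.filter_subset (fun i => d < f i) s)
      fun i hi _ => mul_nonneg (hm i hi) (sq_nonneg _))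
  rw [Finset.mem_filter] at hi
  have := hm i hi.1
  gcongr
  exact hi.2.le

section SpreadMeasure

variable {E : Type*} [NormedAddCommGroup E] [InnerProductSpace ℝ E]
  {Q : Finset E} {m : E → ℝ} {a q₀ w : E} {t ρ K : ℝ}

/- The position along the line, in units of `ρ t / ‖w‖`, feeds the pigeonhole principle. -/
lemma sum_le_of_forall_near_line (ht : 0 < t) (hρ : 0 < ρ) (hρ1 : ρ ≤ 1) (hK : 0 ≤ K)
    (hm : ∀ q ∈ Q, 0 ≤ m q) (hQ : ∀ q ∈ Q, ‖q - q₀‖ ≤ 2 * t)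
    (hnear : ∀ q ∈ Q, ∑ q' ∈ Q with ‖q' - q‖ ≤ 4 * ρ * t, m q' ≤ K * (ρ * t) ^ 2)
    (hline : ∀ q ∈ Q, ∃ s : ℝ, ‖(q - q₀) + s • w‖ < ρ * t) :
    ∑ q ∈ Q, m q ≤ 9 * K * ρ * t ^ 2 := by
  have hρt : 0 < ρ * t := mul_pos hρ ht
  choose! s hs using hline
  have hposition : ∀ q ∈ Q, |s q * ‖w‖ / (ρ * t)| ≤ 3 / ρ := by
    intro q hq
    have hsw : |s q| * ‖w‖ ≤ 3 * t := by
      calc |s q| * ‖w‖ = ‖((q - q₀) + s q • w) - (q - q₀)‖ := by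
            rw [add_sub_cancel_left, norm_smul, Real.norm_eq_abs]
        _ ≤ ρ * t + 2 * t := (norm_sub_le _ _).trans (add_le_add (hs q hq).le (hQ q hq))
        _ ≤ 3 * t := by linarith [mul_le_of_le_one_left ht.le hρ1]
    rw [abs_div, abs_mul, abs_norm, abs_of_pos hρt, div_le_div_iff₀ hρt hρ]
    nlinarith
  have hcluster : ∀ q ∈ Q, ∑ q' ∈ Q with |s q' * ‖w‖ / (ρ * t) - s q * ‖w‖ / (ρ * t)| < 1, m q' ≤
      K * (ρ * t) ^ 2 := by
    intro q hq
    refine (sum_filter_le_sum_filter subset_rfl hm fun q' hq' hclose => ?_).trans (hnear q hq)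
    rw [← sub_div, abs_div, abs_of_pos hρt, div_lt_one hρt, ← sub_mul, abs_mul, abs_norm] at hclose
    calc ‖q' - q‖
        = ‖((q' - q₀) + s q' • w) - ((q - q₀) + s q • w) - (s q' - s q) • w‖ := by
          rw [sub_smul]; congr 1; abel
      _ ≤ ‖(q' - q₀) + s q' • w‖ + ‖(q - q₀) + s q • w‖ + |s q' - s q| * ‖w‖ := by
          refine (norm_sub_le _ _).trans (add_le_add (norm_sub_le _ _) ?_)
          rw [norm_smul, Real.norm_eq_abs]
      _ ≤ 4 * ρ * t := by linarith [hs q hq, hs q' hq']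
  have hpigeon := sum_le_of_abs_le_of_sum_near_le (by positivity) (by positivity) hm hposition
    hcluster
  have hthree : 3 ≤ 3 / ρ := by rw [le_div_iff₀ hρ]; linarith
  calc ∑ q ∈ Q, m q ≤ (2 * (3 / ρ) + 3) * (K * (ρ * t) ^ 2) := hpigeon
    _ ≤ (3 * (3 / ρ)) * (K * (ρ * t) ^ 2) := by gcongr; linarith
    _ = 9 * K * ρ * t ^ 2 := by field_simp; ring

lemma exists_spreadPair_of_mass (ht : 0 < t) (hρ : 0 < ρ) (hρ1 : ρ ≤ 1) (hK : 0 ≤ K)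
    (hm : ∀ q ∈ Q, 0 ≤ m q) (hQ : ∀ q ∈ Q, ‖q - a‖ ≤ t)
    (hnear : ∀ q ∈ Q, ∑ q' ∈ Q with ‖q' - q‖ ≤ 4 * ρ * t, m q' ≤ K * (ρ * t) ^ 2)
    (hmass : 9 * K * ρ * t ^ 2 < ∑ q ∈ Q, m q) :
    ∃ q₀ ∈ Q, ∃ q₁ ∈ Q, ∃ q₂ ∈ Q, IsSpreadPair (ρ * t) (q₁ - q₀) (q₂ - q₀) := by
  have hdiam : ∀ q ∈ Q, ∀ q' ∈ Q, ‖q - q'‖ ≤ 2 * t := fun q hq q' hq' => by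
    linarith [norm_sub_le_norm_sub_add_norm_sub q a q', norm_sub_rev a q', hQ q hq, hQ q' hq']
  have hne : Q.Nonempty := by
    rw [Finset.nonempty_iff_ne_empty]
    rintro rfl
    rw [Finset.sum_empty] at hmass
    exact absurd hmass (not_lt.2 (by positivity))
  obtain ⟨q₀, hq₀⟩ := hne
  have hoff (w : E) : ∃ q ∈ Q, ∀ s : ℝ, ρ * t ≤ ‖(q - q₀) + s • w‖ := by
    by_contra! hline
    exact hmass.not_ge (sum_le_of_forall_near_line ht hρ hρ1 hK hm
      (fun q hq => hdiam q hq q₀ hq₀) hnear hline)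
  obtain ⟨q₁, hq₁, hfar₁⟩ := hoff 0
  obtain ⟨q₂, hq₂, hfar₂⟩ := hoff (q₁ - q₀)
  exact ⟨q₀, hq₀, q₁, hq₁, q₂, hq₂, by simpa using hfar₁ 0, hfar₂⟩

/- By Chebyshev, half of the mass lies `M ε t`-close to both planes. -/
lemma half_mass_le_sum_filter (L L' : AffinePlane E) {c M ε : ℝ} (ht : 0 < t) (hM : 0 < M)
    (hMc : 8 ≤ M ^ 2 * c) (hε : 0 < ε) (hm : ∀ q ∈ Q, 0 ≤ m q)
    (hmass : c * t ^ 2 ≤ ∑ q ∈ Q, m q)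
    (hL : ∑ q ∈ Q, m q * ‖L.displacement q‖ ^ 2 ≤ ε ^ 2 * t ^ 4)
    (hL' : ∑ q ∈ Q, m q * ‖L'.displacement q‖ ^ 2 ≤ ε ^ 2 * t ^ 4) :
    c * t ^ 2 / 2 ≤ ∑ q ∈ Q with (‖L.displacement q‖ ≤ M * ε * t ∧
      ‖L'.displacement q‖ ≤ M * ε * t), m q := by
  classical
  set d := M * ε * t with hd_def
  have hd : 0 < d := by positivity
  have hfar (N : AffinePlane E) (hN : ∑ q ∈ Q, m q * ‖N.displacement q‖ ^ 2 ≤ ε ^ 2 * t ^ 4) :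
      ∑ q ∈ Q with d < ‖N.displacement q‖, m q ≤ c * t ^ 2 / 8 := by
    have hcheb := (sum_filter_lt_mul_sq_le hd.le hm).trans hN
    refine le_of_mul_le_mul_right (hcheb.trans ?_) (pow_pos hd 2)
    have : 0 ≤ ε ^ 2 * t ^ 4 := by positivity
    calc ε ^ 2 * t ^ 4 ≤ (M ^ 2 * c / 8) * (ε ^ 2 * t ^ 4) :=
          le_mul_of_one_le_left this (by linarith)
      _ = c * t ^ 2 / 8 * d ^ 2 := by rw [hd_def]; ring
  have hsub : Q.filter (fun q => ¬(‖L.displacement q‖ ≤ d ∧ ‖L'.displacement q‖ ≤ d)) ⊆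
      Q.filter (fun q => d < ‖L.displacement q‖) ∪ Q.filter (fun q => d < ‖L'.displacement q‖) := by
    intro q hq
    rw [Finset.mem_filter, not_and_or, not_le, not_le] at hq
    simpa only [Finset.mem_union, Finset.mem_filter, ← and_or_left] using hq
  have hunion := Finset.sum_union_inter (s₁ := Q.filter (fun q => d < ‖L.displacement q‖))
    (s₂ := Q.filter (fun q => d < ‖L'.displacement q‖)) (f := m)
  have hinter : 0 ≤ ∑ q ∈ Q.filter (fun q => d < ‖L.displacement q‖) ∩
      Q.filter (fun q => d < ‖L'.displacement q‖), m q :=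
    Finset.sum_nonneg fun q hq => hm q (Finset.mem_filter.1 (Finset.mem_inter.1 hq).1).1
  have hle := Finset.sum_le_sum_of_subset_of_nonneg (f := m) hsub fun q hq _ => hm q <| by
    rcases Finset.mem_union.1 hq with h | h <;> exact (Finset.mem_filter.1 h).1
  have hsplit := Finset.sum_filter_add_sum_filter_not Q
    (fun q => ‖L.displacement q‖ ≤ d ∧ ‖L'.displacement q‖ ≤ d) m
  have hc : 0 < c := pos_of_mul_pos_right (by linarith) (sq_nonneg M)
  linarith [hfar L hL, hfar L' hL', mul_pos hc (pow_pos ht 2)]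

lemma AffinePlane.isClose_of_sum_sq_le (L L' : AffinePlane E) {c M ε : ℝ} (ht : 0 < t)
    (hρ : 0 < ρ) (hρ1 : ρ ≤ 1) (hK : 0 ≤ K) (hM : 0 < M) (hMc : 8 ≤ M ^ 2 * c)
    (hε : 0 < ε) (hMε : M * ε ≤ ρ ^ 2 / 16) (hKρ : 9 * K * ρ < c / 2)
    (hm : ∀ q ∈ Q, 0 ≤ m q) (hQ : ∀ q ∈ Q, ‖q - a‖ ≤ t)
    (hnear : ∀ q ∈ Q, ∑ q' ∈ Q with ‖q' - q‖ ≤ 4 * ρ * t, m q' ≤ K * (ρ * t) ^ 2)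
    (hmass : c * t ^ 2 ≤ ∑ q ∈ Q, m q)
    (hL : ∑ q ∈ Q, m q * ‖L.displacement q‖ ^ 2 ≤ ε ^ 2 * t ^ 4)
    (hL' : ∑ q ∈ Q, m q * ‖L'.displacement q‖ ^ 2 ≤ ε ^ 2 * t ^ 4) :
    L.IsClose L' (1400 / ρ ^ 2 * (M * ε)) a t := by
  classical
  have hhalf := half_mass_le_sum_filter L L' ht hM hMc hε hm hmass hL hL'
  set near : E → Prop := fun q => ‖L.displacement q‖ ≤ M * ε * t ∧ ‖L'.displacement q‖ ≤ M * ε * t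
  have hmem : ∀ q ∈ Q.filter near, q ∈ Q ∧ near q := fun q hq => Finset.mem_filter.1 hq
  have hmass' : 9 * K * ρ * t ^ 2 < ∑ q ∈ Q with near q, m q := by
    linarith [mul_lt_mul_of_pos_right hKρ (pow_pos ht 2)]
  obtain ⟨q₀, h₀, q₁, h₁, q₂, h₂, hspread⟩ := exists_spreadPair_of_mass ht hρ hρ1 hK
    (fun q hq => hm q (hmem q hq).1) (fun q hq => hQ q (hmem q hq).1)
    (fun q hq => (sum_filter_le_sum_filter (Finset.filter_subset _ _) hm
      fun _ _ h => h).trans (hnear q (hmem q hq).1)) hmass'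
  refine AffinePlane.isClose_of_spread L L' ht hρ hρ1 hMε (hQ _ (hmem _ h₀).1)
    (hQ _ (hmem _ h₂).1) hspread ?_ ?_
  · simpa using ⟨(hmem _ h₀).2.1, (hmem _ h₁).2.1, (hmem _ h₂).2.1⟩
  · simpa using ⟨(hmem _ h₀).2.2, (hmem _ h₁).2.2, (hmem _ h₂).2.2⟩

end SpreadMeasure

/-! ### Volume packing and greedy nets -/

lemma sum_pow_finrank_le_of_disjoint {F : Type*} [NormedAddCommGroup F] [NormedSpace ℝ F]
    [FiniteDimensional ℝ F] {ι : Type*} (S : Finset ι) (z : ι → F) (r : ι → ℝ) (x : F) {R : ℝ}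
    (hR : 0 < R) (hmem : ∀ i ∈ S, 0 < r i ∧ dist (z i) x + r i ≤ R)
    (hdisj : ∀ i ∈ S, ∀ j ∈ S, i ≠ j → r i + r j ≤ dist (z i) (z j)) :
    ∑ i ∈ S, r i ^ Module.finrank ℝ F ≤ R ^ Module.finrank ℝ F := by
  borelize F
  let μ : Measure F := Measure.addHaar
  have hvol : ∑ i ∈ S, μ (ball (z i) (r i)) ≤ μ (ball x R) := by
    rw [← measure_biUnion_finset (fun i hi j hj hij => ball_disjoint_ball (hdisj i hi j hj hij))
      (fun i _ => measurableSet_ball)]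
    exact measure_mono (Set.iUnion₂_subset fun i hi =>
      ball_subset_ball' (by linarith [(hmem i hi).2]))
  rw [Finset.sum_congr rfl fun i hi => Measure.addHaar_ball_of_pos μ (z i) (hmem i hi).1,
    Measure.addHaar_ball_of_pos μ _ hR, ← Finset.sum_mul,
    ENNReal.mul_le_mul_iff_left (measure_ball_pos μ _ one_pos).ne' measure_ball_lt_top.ne,
    ← ENNReal.ofReal_sum_of_nonneg fun i hi => pow_nonneg (hmem i hi).1.le _] at hvol
  exact (ENNReal.ofReal_le_ofReal_iff (by positivity)).1 hvol

lemma AffinePlane.sum_sq_le_of_le_norm_proj {E : Type*} [NormedAddCommGroup E]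
    [InnerProductSpace ℝ E] (L : AffinePlane E) {ι : Type*} (S : Finset ι) (z : ι → E) (r : ι → ℝ)
    (x : E) {R : ℝ} (hR : 0 < R) (hmem : ∀ i ∈ S, 0 < r i ∧ ‖z i - x‖ + r i ≤ R)
    (hsep : ∀ i ∈ S, ∀ j ∈ S, i ≠ j → r i + r j ≤ ‖L.proj (z i - z j)‖) :
    ∑ i ∈ S, r i ^ 2 ≤ R ^ 2 := by
  have hdist (u v : E) : dist (⟨L.proj u, L.proj_mem u⟩ : L.direction) ⟨L.proj v, L.proj_mem v⟩ =
      ‖L.proj (u - v)‖ := by rw [Subtype.dist_eq, dist_eq_norm, ← map_sub]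
  have hpack := sum_pow_finrank_le_of_disjoint S
    (fun i => (⟨L.proj (z i), L.proj_mem _⟩ : L.direction)) r ⟨L.proj x, L.proj_mem _⟩ hR
    (fun i hi => ⟨(hmem i hi).1, by rw [hdist]; linarith [L.norm_proj_le (z i - x), hmem i hi]⟩)
    (fun i hi j hj hij => by rw [hdist]; exact hsep i hi j hj hij)
  rwa [L.finrank_direction] at hpack

lemma card_mul_pow_finrank_le {F : Type*} [NormedAddCommGroup F] [NormedSpace ℝ F]
    [FiniteDimensional ℝ F] (S : Finset F) (x : F) {s R : ℝ} (hs : 0 < s) (hR : 0 < R)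
    (hmem : ∀ p ∈ S, ‖p - x‖ ≤ R) (hsep : ∀ p ∈ S, ∀ q ∈ S, p ≠ q → s ≤ ‖p - q‖) :
    (S.card : ℝ) * s ^ Module.finrank ℝ F ≤ (2 * R + s) ^ Module.finrank ℝ F := by
  have hpack := sum_pow_finrank_le_of_disjoint S id (fun _ => s / 2) x (R := R + s / 2)
    (by positivity)
    (fun p hp => ⟨by positivity, by rw [id, dist_eq_norm]; linarith [hmem p hp]⟩)
    (fun p hp q hq hpq => by rw [id, id, dist_eq_norm]; linarith [hsep p hp q hq hpq])
  rw [Finset.sum_const, nsmul_eq_mul, show R + s / 2 = (2 * R + s) / 2 by ring, div_pow, div_pow,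
    ← mul_div_assoc] at hpack
  exact (div_le_div_iff_of_pos_right (by positivity)).1 hpack

/-- A finite subset `N` of `S` that is separated at the scales `u` and such that every point of
`S` lies in a ball `B(q, u q)` centred at a point `q` of `N` with at least as large a scale. -/
structure IsGreedyNet {X : Type*} [PseudoMetricSpace X] (S : Set X) (u : X → ℝ)
    (N : Finset X) : Prop where
  subset : (N : Set X) ⊆ S
  le_dist : ∀ p ∈ N, ∀ q ∈ N, p ≠ q → u p ≤ dist p q
  exists_mem : ∀ p ∈ S, ∃ q ∈ N, u p ≤ u q ∧ dist p q < u q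

section GreedyNet

variable {X : Type*} [PseudoMetricSpace X] {S : Set X} {u : X → ℝ} {N : Finset X}

lemma IsGreedyNet.insert [DecidableEq X] {p : X} (hp : p ∈ S) (hmax : ∀ q ∈ S, u q ≤ u p)
    (h : IsGreedyNet (S \ ball p (u p)) u N) : IsGreedyNet S u (insert p N) where
  subset := by
    rw [Finset.coe_insert]
    exact Set.insert_subset hp (h.subset.trans Set.sdiff_subset)
  le_dist q hq q' hq' hne := by
    have hfar : ∀ q ∈ N, u p ≤ dist q p := fun q hq => not_lt.1 (h.subset hq).2
    rcases Finset.mem_insert.1 hq with rfl | hqN <;> rcases Finset.mem_insert.1 hq' with rfl | hqN'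
    · exact absurd rfl hne
    · rw [dist_comm]; exact hfar q' hqN'
    · exact (hmax q (h.subset hqN).1).trans (hfar q hqN)
    · exact h.le_dist q hqN q' hqN' hne
  exists_mem q hq := by
    by_cases hball : q ∈ ball p (u p)
    · exact ⟨p, Finset.mem_insert_self _ _, hmax q hq, hball⟩
    · obtain ⟨q', hq', hcover⟩ := h.exists_mem q ⟨hq, hball⟩
      exact ⟨q', Finset.mem_insert_of_mem hq', hcover⟩

lemma exists_isGreedyNet {s : ℝ} (hs : 0 < s) (hsu : ∀ p ∈ S, s ≤ u p) (hfin : (u '' S).Finite)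
    {n : ℕ} (hcard : ∀ F : Finset X, (F : Set X) ⊆ S →
      (∀ p ∈ F, ∀ q ∈ F, p ≠ q → s ≤ dist p q) → F.card ≤ n) :
    ∃ N, IsGreedyNet S u N := by
  classical
  induction n generalizing S with
  | zero =>
    have hempty : S = ∅ := Set.eq_empty_of_forall_notMem fun p hp => by
      simpa using hcard {p} (by simpa using hp) (by simp)
    exact ⟨∅, by simp, by simp, by simp [hempty]⟩
  | succ n ih =>
    rcases S.eq_empty_or_nonempty with rfl | hne
    · exact ⟨∅, by simp, by simp, by simp⟩
    obtain ⟨_, ⟨p, hp, rfl⟩, hmax⟩ := (u '' S).exists_max_image id hfin (hne.image u)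
    rw [Set.forall_mem_image] at hmax
    obtain ⟨N, hN⟩ := ih (S := S \ ball p (u p)) (fun q hq => hsu q hq.1)
      (hfin.subset (Set.image_mono Set.sdiff_subset)) fun F hF hsep => by
        have hfar : ∀ q ∈ F, s ≤ dist q p := fun q hq =>
          (hsu p hp).trans (not_lt.1 (hF hq).2)
        have hpF : p ∉ F := fun h => by simpa using (hfar p h).trans_lt' hs
        have hle := hcard (insert p F)
          (by rw [Finset.coe_insert]; exact Set.insert_subset hp (hF.trans Set.sdiff_subset)) ?_
        · rw [Finset.card_insert_of_notMem hpF] at hle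
          omega
        · intro q hq q' hq' hne
          rcases Finset.mem_insert.1 hq with rfl | hqF <;>
            rcases Finset.mem_insert.1 hq' with rfl | hqF'
          · exact absurd rfl hne
          · rw [dist_comm]; exact hfar q' hqF'
          · exact hfar q hqF
          · exact hsep q hqF q' hqF' hne
    exact ⟨insert p N, hN.insert hp fun q hq => hmax hq⟩

lemma exists_isGreedyNet_finset (S : Finset X) (hu : ∀ p ∈ S, 0 < u p) :
    ∃ N, IsGreedyNet (S : Set X) u N := by
  rcases S.eq_empty_or_nonempty with rfl | hne
  · exact ⟨∅, by simp, by simp, by simp⟩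
  obtain ⟨o, ho, hmin⟩ := S.exists_min_image u hne
  exact exists_isGreedyNet (hu o ho) hmin (S.finite_toSet.image u)
    fun F hF _ => Finset.card_le_card (Finset.coe_subset.1 hF)

lemma IsGreedyNet.sum_le_sum {S : Finset X} (h : IsGreedyNet (S : Set X) u N) {m b : X → ℝ}
    (hm : ∀ p ∈ S, 0 ≤ m p)
    (hb : ∀ q ∈ N, ∑ p ∈ S with (u p ≤ u q ∧ dist p q < u q), m p ≤ b q) :
    ∑ p ∈ S, m p ≤ ∑ q ∈ N, b q := by
  classical
  calc ∑ p ∈ S, m p ≤ ∑ p ∈ S, ∑ q ∈ N, if u p ≤ u q ∧ dist p q < u q then m p else 0 := by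
        refine Finset.sum_le_sum fun p hp => ?_
        obtain ⟨q, hq, hcover⟩ := h.exists_mem p hp
        refine (if_pos hcover).ge.trans (Finset.single_le_sum (f := fun q =>
          if u p ≤ u q ∧ dist p q < u q then m p else 0) (fun q _ => ?_) hq)
        split_ifs
        exacts [hm p hp, le_rfl]
    _ = ∑ q ∈ N, ∑ p ∈ S with (u p ≤ u q ∧ dist p q < u q), m p := by
        rw [Finset.sum_comm]
        exact Finset.sum_congr rfl fun q _ => (Finset.sum_filter _ _).symm
    _ ≤ ∑ q ∈ N, b q := Finset.sum_le_sum hb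

end GreedyNet

/-! ### Averages of displacements -/

section Averages

lemma norm_sum_smul_le {F ι : Type*} [SeminormedAddCommGroup F] [NormedSpace ℝ F]
    {Q : Finset ι} {w : ι → ℝ} {f : ι → F} {b s : ℝ} (hs : ∑ q ∈ Q, |w q| ≤ s) (hb : 0 ≤ b)
    (hf : ∀ q ∈ Q, ‖f q‖ ≤ b) : ‖∑ q ∈ Q, w q • f q‖ ≤ s * b := by
  calc ‖∑ q ∈ Q, w q • f q‖ ≤ ∑ q ∈ Q, |w q| * b :=
        norm_sum_le_of_le _ fun q hq => by
          rw [norm_smul, Real.norm_eq_abs]; gcongr; exact hf q hq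
    _ = (∑ q ∈ Q, |w q|) * b := by rw [Finset.sum_mul]
    _ ≤ s * b := by gcongr

lemma norm_sum_smul_le_of_sum_eq_one {F ι : Type*} [SeminormedAddCommGroup F] [NormedSpace ℝ F]
    {Q : Finset ι} {w : ι → ℝ} {f : ι → F} {b : ℝ} (hw : ∀ q ∈ Q, 0 ≤ w q)
    (hs : ∑ q ∈ Q, w q = 1) (hf : ∀ q ∈ Q, ‖f q‖ ≤ b) : ‖∑ q ∈ Q, w q • f q‖ ≤ b :=
  mem_closedBall_zero_iff.1 <| (convex_closedBall (0 : F) b).sum_mem hw hs fun q hq =>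
    mem_closedBall_zero_iff.2 (hf q hq)

lemma sum_abs_div_sum_sub_div_sum_le {ι : Type*} {Q : Finset ι} {f g : ι → ℝ}
    (hg : ∀ q ∈ Q, 0 ≤ g q) (hf_pos : 0 < ∑ q ∈ Q, f q) (hg_pos : 0 < ∑ q ∈ Q, g q) :
    ∑ q ∈ Q, |f q / ∑ i ∈ Q, f i - g q / ∑ i ∈ Q, g i| ≤
      2 * (∑ q ∈ Q, |f q - g q|) / ∑ q ∈ Q, f q := by
  set S := ∑ q ∈ Q, f q with hS
  set S' := ∑ q ∈ Q, g q with hS'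
  set T := ∑ q ∈ Q, |f q - g q|
  have hST : |S - S'| ≤ T := by
    rw [hS, hS', ← Finset.sum_sub_distrib]; exact Finset.abs_sum_le_sum_abs _ _
  have hterm : ∀ q ∈ Q, |f q / S - g q / S'| ≤ |f q - g q| / S + g q * (T / (S * S')) := by
    intro q hq
    have : f q / S - g q / S' = (f q - g q) / S + g q * ((S' - S) / (S * S')) := by
      field_simp; ring
    rw [this]
    refine (abs_add_le _ _).trans ?_
    rw [abs_div, abs_mul, abs_div, abs_of_pos hf_pos, abs_of_nonneg (hg q hq),
      abs_of_pos (mul_pos hf_pos hg_pos), abs_sub_comm S' S]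
    have := hg q hq
    gcongr
  calc _ ≤ ∑ q ∈ Q, (|f q - g q| / S + g q * (T / (S * S'))) := Finset.sum_le_sum hterm
    _ = T / S + S' * (T / (S * S')) := by
        rw [Finset.sum_add_distrib, ← Finset.sum_div, ← Finset.sum_mul]
    _ = 2 * T / S := by field_simp; ring

namespace AffinePlane

variable {E : Type*} [NormedAddCommGroup E] [InnerProductSpace ℝ E] {ι : Type*} {Q : Finset ι}
  {L : ι → AffinePlane E} {L₀ : AffinePlane E} {w w' : ι → ℝ} {a y y' : E}

lemma norm_displacement_le_add (L L₀ : AffinePlane E) {η : ℝ}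
    (h : ‖L.displacement y - L₀.displacement y‖ ≤ η) :
    ‖L.displacement y‖ ≤ ‖L₀.displacement y‖ + η := by
  linarith [norm_sub_norm_le (L.displacement y) (L₀.displacement y)]

lemma norm_displacement_add_sum_le {η : ℝ} (hw : ∀ q ∈ Q, 0 ≤ w q) (hs : ∑ q ∈ Q, w q = 1)
    (h : ∀ q ∈ Q, ‖(L q).displacement y - L₀.displacement y‖ ≤ η) :
    ‖L₀.displacement (y + ∑ q ∈ Q, w q • (L q).displacement y)‖ ≤ η := by
  set u := ∑ q ∈ Q, w q • (L q).displacement y with hu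
  have hmove : L₀.displacement (y + u) = L₀.displacement y - (u - L₀.proj u) := by
    have := L₀.displacement_sub (y + u) y
    rw [add_sub_cancel_left] at this
    rw [sub_eq_add_neg, ← this]; abel
  have hone : L₀.displacement y = ∑ q ∈ Q, w q • L₀.displacement y := by
    rw [← Finset.sum_smul, hs, one_smul]
  have haverage : L₀.displacement (y + u) = ∑ q ∈ Q, w q •
      (-(((L q).displacement y - L₀.displacement y) -
        L₀.proj ((L q).displacement y - L₀.displacement y))) := by
    rw [hmove, hu, map_sum]
    conv_lhs => rw [hone]
    rw [← Finset.sum_sub_distrib, ← Finset.sum_sub_distrib]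
    refine Finset.sum_congr rfl fun q _ => ?_
    rw [map_smul, map_sub, L₀.proj_displacement]
    module
  rw [haverage]
  refine norm_sum_smul_le_of_sum_eq_one hw hs fun q hq => ?_
  rw [norm_neg]
  exact (L₀.norm_sub_proj_le _).trans (h q hq)

lemma add_sum_sub_add_sum (hs : ∑ q ∈ Q, w q = 1) :
    (y + ∑ q ∈ Q, w q • (L q).displacement y) - (y' + ∑ q ∈ Q, w' q • (L q).displacement y') =
      ∑ q ∈ Q, w q • (L q).proj (y - y') +
        ∑ q ∈ Q, (w q - w' q) • (L q).displacement y' := by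
  have hone : y - y' = ∑ q ∈ Q, w q • (y - y') := by rw [← Finset.sum_smul, hs, one_smul]
  rw [add_sub_add_comm, ← Finset.sum_sub_distrib, ← Finset.sum_add_distrib]
  conv_lhs => rw [hone]
  rw [← Finset.sum_add_distrib]
  refine Finset.sum_congr rfl fun q _ => ?_
  rw [eq_add_of_sub_eq ((L q).displacement_sub y y')]
  module

section Difference

variable {t e B : ℝ} (ht : 0 < t) (hw : ∀ q ∈ Q, 0 ≤ w q) (hs : ∑ q ∈ Q, w q = 1)
  (hdiff : ∑ q ∈ Q, |w q - w' q| ≤ B * (‖y - y'‖ / t))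
  (hclose : ∀ q ∈ Q, (L q).IsClose L₀ e a t) (hy' : ‖y' - a‖ ≤ 20 * t)
  (h₀ : ‖L₀.displacement y'‖ ≤ e * t)

include ht hw hs hdiff hclose hy' h₀

lemma norm_normal_average_sub_le {D : E}
    (hD : D = (y + ∑ q ∈ Q, w q • (L q).displacement y) -
      (y' + ∑ q ∈ Q, w' q • (L q).displacement y')) :
    ‖D - L₀.proj D‖ ≤ (1 + 2 * B) * e * ‖y - y'‖ := by
  have he : 0 ≤ e := nonneg_of_mul_nonneg_left ((norm_nonneg _).trans h₀) ht
  have hsplit : D - L₀.proj D =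
      ∑ q ∈ Q, w q • ((L q).proj ((L q).proj (y - y')) - L₀.proj ((L q).proj (y - y'))) +
      ∑ q ∈ Q, (w q - w' q) • ((L q).displacement y' - L₀.proj ((L q).displacement y')) := by
    rw [hD, add_sum_sub_add_sum hs, map_add, map_sum, map_sum, add_sub_add_comm,
      ← Finset.sum_sub_distrib, ← Finset.sum_sub_distrib]
    simp only [map_smul, proj_proj, smul_sub]
  have hproj := norm_sum_smul_le_of_sum_eq_one hw hs
    (f := fun q => (L q).proj ((L q).proj (y - y')) - L₀.proj ((L q).proj (y - y')))
    (b := e * ‖y - y'‖) fun q hq => ((hclose q hq).norm_proj_sub_le _).trans <| by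
      gcongr; exact (L q).norm_proj_le _
  have hweights := norm_sum_smul_le hdiff
    (f := fun q => (L q).displacement y' - L₀.proj ((L q).displacement y')) (b := e * t + e * t)
    (by positivity) fun q hq => (L₀.norm_sub_proj_le _).trans <|
      (norm_displacement_le_add _ L₀ ((hclose q hq).norm_displacement_sub_le y' hy')).trans
        (by gcongr)
  calc ‖D - L₀.proj D‖ ≤ e * ‖y - y'‖ + B * (‖y - y'‖ / t) * (e * t + e * t) := by
        rw [hsplit]; exact (norm_add_le _ _).trans (add_le_add hproj hweights)
    _ = (1 + 2 * B) * e * ‖y - y'‖ := by field_simp; ring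

/- The tangential part changes only to second order: projecting a vector normal to one plane onto
a nearby plane already costs one factor `e`, and normal components are themselves of order `e`. -/
lemma norm_tangential_average_sub_le {D : E}
    (hD : D = (y + ∑ q ∈ Q, w q • (L q).displacement y) -
      (y' + ∑ q ∈ Q, w' q • (L q).displacement y')) :
    ‖L₀.proj D - L₀.proj (y - y')‖ ≤
      e * ‖(y - y') - L₀.proj (y - y')‖ + (1 + 2 * B) * e ^ 2 * ‖y - y'‖ := by
  have he : 0 ≤ e := nonneg_of_mul_nonneg_left ((norm_nonneg _).trans h₀) ht
  set d := y - y' with hd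
  have hone : L₀.proj d = ∑ q ∈ Q, w q • L₀.proj d := by rw [← Finset.sum_smul, hs, one_smul]
  have hsplit : L₀.proj D - L₀.proj d =
      ∑ q ∈ Q, w q • ((L q).proj (d - (L q).proj d) - L₀.proj (d - (L q).proj d)) +
      ∑ q ∈ Q, (w q - w' q) •
        (-((L q).proj ((L q).displacement y') - L₀.proj ((L q).displacement y'))) := by
    rw [hone, hD, add_sum_sub_add_sum hs, ← hd, map_add, map_sum, map_sum, add_sub_right_comm,
      ← Finset.sum_sub_distrib]
    simp only [map_smul, map_sub, proj_proj, proj_displacement, smul_sub, sub_self, zero_sub,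
      neg_neg, neg_sub]
  have hnormal : ∀ q ∈ Q, ‖d - (L q).proj d‖ ≤ ‖d - L₀.proj d‖ + e * ‖d‖ := fun q hq => by
    have : d - (L q).proj d = (d - L₀.proj d) - ((L q).proj d - L₀.proj d) := by abel
    rw [this]
    exact (norm_sub_le _ _).trans (by gcongr; exact (hclose q hq).norm_proj_sub_le d)
  have hproj := norm_sum_smul_le_of_sum_eq_one hw hs
    (f := fun q => (L q).proj (d - (L q).proj d) - L₀.proj (d - (L q).proj d))
    (b := e * (‖d - L₀.proj d‖ + e * ‖d‖)) fun q hq =>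
      ((hclose q hq).norm_proj_sub_le _).trans (by gcongr; exact hnormal q hq)
  have hweights := norm_sum_smul_le hdiff
    (f := fun q => -((L q).proj ((L q).displacement y') - L₀.proj ((L q).displacement y')))
    (b := e * (e * t + e * t)) (by positivity) fun q hq => by
      rw [norm_neg]
      refine ((hclose q hq).norm_proj_sub_le _).trans ?_
      gcongr
      exact (norm_displacement_le_add _ L₀ ((hclose q hq).norm_displacement_sub_le y' hy')).trans
        (by gcongr)
  calc ‖L₀.proj D - L₀.proj d‖
      ≤ e * (‖d - L₀.proj d‖ + e * ‖d‖) + B * (‖d‖ / t) * (e * (e * t + e * t)) := by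
        rw [hsplit]; exact (norm_add_le _ _).trans (add_le_add hproj hweights)
    _ = e * ‖d - L₀.proj d‖ + (1 + 2 * B) * e ^ 2 * ‖d‖ := by field_simp; ring

end Difference

end AffinePlane

end Averages

/-! ### One smoothing step -/

section Smoothing

variable {E : Type*} [NormedAddCommGroup E]

/-- The weighted finite set `(Q, m)` has two-dimensional density about `a` at scale `t`: its mass
in the ball of radius `t` is at least `c t ^ 2`, and in the ball of radius `8 t` at most
`K t ^ 2`. -/
structure IsAhlforsAt (Q : Finset E) (m : E → ℝ) (a : E) (t c K : ℝ) : Prop where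
  nonneg : ∀ q ∈ Q, 0 ≤ m q
  lower : c * t ^ 2 ≤ ∑ q ∈ Q with ‖q - a‖ < t, m q
  upper : ∑ q ∈ Q with ‖q - a‖ < 8 * t, m q ≤ K * t ^ 2

/-- The weight of the atom `m q` at `q` seen from `y` through a tent of width `4 t`. -/
def tentWeight (m : E → ℝ) (t : ℝ) (y q : E) : ℝ := m q * max 0 (4 - ‖y - q‖ / t)

/-- The tent weights normalised to have sum one over `Q`. -/
def averagingWeight (Q : Finset E) (m : E → ℝ) (t : ℝ) (y q : E) : ℝ :=
  tentWeight m t y q / ∑ i ∈ Q, tentWeight m t y i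

variable {Q : Finset E} {m : E → ℝ} {a y y' q : E} {t c K : ℝ}

lemma tentWeight_nonneg (hm : 0 ≤ m q) : 0 ≤ tentWeight m t y q :=
  mul_nonneg hm (le_max_left _ _)

lemma averagingWeight_nonneg (hm : ∀ q ∈ Q, 0 ≤ m q) (hq : q ∈ Q) :
    0 ≤ averagingWeight Q m t y q :=
  div_nonneg (tentWeight_nonneg (hm q hq)) (Finset.sum_nonneg fun i hi =>
    tentWeight_nonneg (hm i hi))

lemma tentWeight_eq_zero (ht : 0 < t) (hy : ‖y - a‖ ≤ t) (hq : 8 * t ≤ ‖q - a‖) :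
    tentWeight m t y q = 0 := by
  have h4 : 4 ≤ ‖y - q‖ / t := by
    rw [le_div_iff₀ ht]
    linarith [norm_sub_le_norm_sub_add_norm_sub q y a, norm_sub_rev q y]
  rw [tentWeight, max_eq_left (by linarith), mul_zero]

lemma averagingWeight_eq_zero (ht : 0 < t) (hy : ‖y - a‖ ≤ t) (hq : 8 * t ≤ ‖q - a‖) :
    averagingWeight Q m t y q = 0 := by
  rw [averagingWeight, tentWeight_eq_zero ht hy hq, zero_div]

lemma abs_tentWeight_sub_le (ht : 0 < t) (hm : 0 ≤ m q) :
    |tentWeight m t y q - tentWeight m t y' q| ≤ m q * (‖y - y'‖ / t) := by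
  rw [tentWeight, tentWeight, ← mul_sub, abs_mul, abs_of_nonneg hm]
  gcongr
  rw [max_comm 0, max_comm 0]
  calc |max (4 - ‖y - q‖ / t) 0 - max (4 - ‖y' - q‖ / t) 0|
      ≤ |(4 - ‖y - q‖ / t) - (4 - ‖y' - q‖ / t)| := abs_max_sub_max_le_abs _ _ _
    _ = |‖y - q‖ - ‖y' - q‖| / t := by
        rw [sub_sub_sub_cancel_left, ← sub_div, abs_div, abs_of_pos ht, abs_sub_comm]
    _ ≤ ‖y - y'‖ / t := by
        gcongr
        simpa using abs_norm_sub_norm_le (y - q) (y' - q)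

namespace IsAhlforsAt

variable (h : IsAhlforsAt Q m a t c K) (ht : 0 < t)

include h ht

lemma le_sum_tentWeight (hy : ‖y - a‖ ≤ t) : 2 * c * t ^ 2 ≤ ∑ q ∈ Q, tentWeight m t y q := by
  calc 2 * c * t ^ 2 ≤ ∑ q ∈ Q with ‖q - a‖ < t, m q * 2 := by
        rw [← Finset.sum_mul]; linarith [h.lower]
    _ ≤ ∑ q ∈ Q with ‖q - a‖ < t, tentWeight m t y q := by
        refine Finset.sum_le_sum fun q hq => ?_
        rw [Finset.mem_filter] at hq
        refine mul_le_mul_of_nonneg_left (le_max_of_le_right ?_) (h.nonneg q hq.1)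
        have : ‖y - q‖ / t ≤ 2 := by
          rw [div_le_iff₀ ht]
          linarith [hq.2, norm_sub_le_norm_sub_add_norm_sub y a q, norm_sub_rev a q]
        linarith
    _ ≤ ∑ q ∈ Q, tentWeight m t y q :=
        Finset.sum_le_sum_of_subset_of_nonneg (Finset.filter_subset _ _)
          fun q hq _ => tentWeight_nonneg (h.nonneg q hq)

lemma sum_tentWeight_pos (hc : 0 < c) (hy : ‖y - a‖ ≤ t) : 0 < ∑ q ∈ Q, tentWeight m t y q :=
  lt_of_lt_of_le (by positivity) (h.le_sum_tentWeight ht hy)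

lemma sum_averagingWeight (hc : 0 < c) (hy : ‖y - a‖ ≤ t) :
    ∑ q ∈ Q with ‖q - a‖ < 8 * t, averagingWeight Q m t y q = 1 := by
  rw [Finset.sum_filter_of_ne fun q _ hq =>
    not_le.1 fun hfar => hq (averagingWeight_eq_zero ht hy hfar)]
  simp only [averagingWeight, ← Finset.sum_div]
  exact div_self (h.sum_tentWeight_pos ht hc hy).ne'

lemma sum_abs_tentWeight_sub_le (hy : ‖y - a‖ ≤ t) (hy' : ‖y' - a‖ ≤ t) :
    ∑ q ∈ Q, |tentWeight m t y q - tentWeight m t y' q| ≤ K * t ^ 2 * (‖y - y'‖ / t) := by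
  calc ∑ q ∈ Q, |tentWeight m t y q - tentWeight m t y' q|
      = ∑ q ∈ Q with ‖q - a‖ < 8 * t, |tentWeight m t y q - tentWeight m t y' q| := by
        refine (Finset.sum_filter_of_ne fun q _ hq => not_le.1 fun hfar => hq ?_).symm
        rw [tentWeight_eq_zero ht hy hfar, tentWeight_eq_zero ht hy' hfar, sub_self, abs_zero]
    _ ≤ ∑ q ∈ Q with ‖q - a‖ < 8 * t, m q * (‖y - y'‖ / t) :=
        Finset.sum_le_sum fun q hq =>
          abs_tentWeight_sub_le ht (h.nonneg q (Finset.mem_filter.1 hq).1)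
    _ ≤ K * t ^ 2 * (‖y - y'‖ / t) := by
        rw [← Finset.sum_mul]
        exact mul_le_mul_of_nonneg_right h.upper (by positivity)

lemma sum_abs_averagingWeight_sub_le (hc : 0 < c) (hy : ‖y - a‖ ≤ t) (hy' : ‖y' - a‖ ≤ t) :
    ∑ q ∈ Q with ‖q - a‖ < 8 * t, |averagingWeight Q m t y q - averagingWeight Q m t y' q| ≤
      K / c * (‖y - y'‖ / t) := by
  have hsum := h.sum_abs_tentWeight_sub_le ht hy hy'
  calc _ ≤ ∑ q ∈ Q, |averagingWeight Q m t y q - averagingWeight Q m t y' q| :=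
        Finset.sum_le_sum_of_subset_of_nonneg (Finset.filter_subset _ _) fun _ _ _ => abs_nonneg _
    _ ≤ 2 * (∑ q ∈ Q, |tentWeight m t y q - tentWeight m t y' q|) /
          ∑ q ∈ Q, tentWeight m t y q :=
        sum_abs_div_sum_sub_div_sum_le (fun q hq => tentWeight_nonneg (h.nonneg q hq))
          (h.sum_tentWeight_pos ht hc hy) (h.sum_tentWeight_pos ht hc hy')
    _ ≤ 2 * (K * t ^ 2 * (‖y - y'‖ / t)) / (2 * c * t ^ 2) := by
        have : 0 ≤ K * t ^ 2 * (‖y - y'‖ / t) :=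
          (Finset.sum_nonneg fun _ _ => abs_nonneg _).trans hsum
        gcongr
        exact h.le_sum_tentWeight ht hy
    _ = K / c * (‖y - y'‖ / t) := by field_simp

end IsAhlforsAt

variable [InnerProductSpace ℝ E] {L : E → AffinePlane E} {L₀ : AffinePlane E} {e : ℝ}

/-- One smoothing step: `y` is moved by a local average of its displacements to the planes `L q`
attached to the points `q` of `Q`. -/
def smoothing (Q : Finset E) (m : E → ℝ) (t : ℝ) (L : E → AffinePlane E) (y : E) : E :=
  y + ∑ q ∈ Q, averagingWeight Q m t y q • (L q).displacement y

lemma smoothing_eq (ht : 0 < t) (hy : ‖y - a‖ ≤ t) :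
    smoothing Q m t L y =
      y + ∑ q ∈ Q with ‖q - a‖ < 8 * t, averagingWeight Q m t y q • (L q).displacement y := by
  rw [smoothing, Finset.sum_filter_of_ne fun q _ hq => not_le.1 fun hfar => hq ?_]
  rw [averagingWeight_eq_zero ht hy hfar, zero_smul]

section Estimates

variable (h : IsAhlforsAt Q m a t c K) (ht : 0 < t) (hc : 0 < c)
  (hclose : ∀ q ∈ Q, ‖q - a‖ < 8 * t → (L q).IsClose L₀ e a t) (hy : ‖y - a‖ ≤ t)

include h ht hc hclose hy

lemma norm_displacement_smoothing_le : ‖L₀.displacement (smoothing Q m t L y)‖ ≤ e * t := by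
  rw [smoothing_eq ht hy]
  refine AffinePlane.norm_displacement_add_sum_le
    (fun q hq => averagingWeight_nonneg h.nonneg (Finset.mem_filter.1 hq).1)
    (h.sum_averagingWeight ht hc hy) fun q hq => ?_
  rw [Finset.mem_filter] at hq
  exact (hclose q hq.1 hq.2).norm_displacement_sub_le y (by linarith)

lemma norm_smoothing_sub_self_le :
    ‖smoothing Q m t L y - y‖ ≤ ‖L₀.displacement y‖ + e * t := by
  rw [smoothing_eq ht hy, add_sub_cancel_left]
  refine norm_sum_smul_le_of_sum_eq_one
    (fun q hq => averagingWeight_nonneg h.nonneg (Finset.mem_filter.1 hq).1)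
    (h.sum_averagingWeight ht hc hy) fun q hq => ?_
  rw [Finset.mem_filter] at hq
  exact AffinePlane.norm_displacement_le_add _ _
    ((hclose q hq.1 hq.2).norm_displacement_sub_le y (by linarith))

variable (hy' : ‖y' - a‖ ≤ t) (h₀ : ‖L₀.displacement y'‖ ≤ e * t)

include hy' h₀

lemma norm_normal_smoothing_sub_le :
    ‖(smoothing Q m t L y - smoothing Q m t L y') -
        L₀.proj (smoothing Q m t L y - smoothing Q m t L y')‖ ≤
      (1 + 2 * (K / c)) * e * ‖y - y'‖ :=
  AffinePlane.norm_normal_average_sub_le ht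
    (fun q hq => averagingWeight_nonneg h.nonneg (Finset.mem_filter.1 hq).1)
    (h.sum_averagingWeight ht hc hy) (h.sum_abs_averagingWeight_sub_le ht hc hy hy')
    (fun q hq => hclose q (Finset.mem_filter.1 hq).1 (Finset.mem_filter.1 hq).2)
    (by linarith) h₀ (by rw [smoothing_eq ht hy, smoothing_eq ht hy'])

lemma norm_tangential_smoothing_sub_le :
    ‖L₀.proj (smoothing Q m t L y - smoothing Q m t L y') - L₀.proj (y - y')‖ ≤
      e * ‖(y - y') - L₀.proj (y - y')‖ + (1 + 2 * (K / c)) * e ^ 2 * ‖y - y'‖ :=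
  AffinePlane.norm_tangential_average_sub_le ht
    (fun q hq => averagingWeight_nonneg h.nonneg (Finset.mem_filter.1 hq).1)
    (h.sum_averagingWeight ht hc hy) (h.sum_abs_averagingWeight_sub_le ht hc hy hy')
    (fun q hq => hclose q (Finset.mem_filter.1 hq).1 (Finset.mem_filter.1 hq).2)
    (by linarith) h₀ (by rw [smoothing_eq ht hy, smoothing_eq ht hy'])

end Estimates

end Smoothing

/-! ### Flattening a separated family of balls -/

section Flattening

/-- Pairwise separated balls together with the geometric sequence of scales `top / 16 ^ k` at which
they are examined; a ball takes part at a scale when its radius is at most `ratio` times that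
scale. -/
structure SeparatedBalls (E : Type*) [NormedAddCommGroup E] where
  centers : Finset E
  radius : E → ℝ
  top : ℝ
  ratio : ℝ
  top_pos : 0 < top
  ratio_pos : 0 < ratio
  ratio_le_one : ratio ≤ 1
  radius_pos : ∀ p ∈ centers, 0 < radius p
  radius_le_norm_sub : ∀ p ∈ centers, ∀ q ∈ centers, p ≠ q → radius p ≤ ‖p - q‖

namespace SeparatedBalls

variable {E : Type*} [NormedAddCommGroup E] (P : SeparatedBalls E)

/-- The `k`-th scale. -/
def scale (k : ℕ) : ℝ := P.top / 16 ^ k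

/-- The centres of the balls which are small compared with the `k`-th scale. -/
def active (k : ℕ) : Finset E := P.centers.filter fun p => P.radius p ≤ P.ratio * P.scale k

lemma scale_zero : P.scale 0 = P.top := by simp [scale]

lemma scale_succ (k : ℕ) : P.scale (k + 1) = P.scale k / 16 := by
  unfold scale; rw [pow_succ]; field_simp

lemma scale_pos (k : ℕ) : 0 < P.scale k := by
  have := P.top_pos
  unfold scale; positivity

lemma active_subset (k : ℕ) : P.active k ⊆ P.centers := Finset.filter_subset _ _

variable {P} {k : ℕ} {p a b : E}

lemma mem_active : p ∈ P.active k ↔ p ∈ P.centers ∧ P.radius p ≤ P.ratio * P.scale k := by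
  simp [active]

lemma mem_active_of_succ (h : p ∈ P.active (k + 1)) : p ∈ P.active k := by
  rw [mem_active] at *
  refine ⟨h.1, h.2.trans (mul_le_mul_of_nonneg_left ?_ P.ratio_pos.le)⟩
  rw [P.scale_succ]
  linarith [P.scale_pos k]

lemma active_antitone : Antitone P.active := antitone_nat_of_succ_le fun _ _ => mem_active_of_succ

lemma scale_antitone : Antitone P.scale := antitone_nat_of_succ_le fun k => by
  rw [P.scale_succ]
  linarith [P.scale_pos k]

variable (P) in
lemma exists_active_eq_empty : ∃ N, ∀ k ≥ N, P.active k = ∅ := by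
  have hlim : Filter.Tendsto (fun k => P.ratio * P.scale k) Filter.atTop (nhds 0) := by
    have := (tendsto_pow_atTop_nhds_zero_of_lt_one (r := (1 / 16 : ℝ)) (by norm_num)
      (by norm_num)).const_mul (P.ratio * P.top)
    rw [mul_zero] at this
    refine this.congr fun k => ?_
    rw [scale, one_div, inv_pow]; ring
  obtain ⟨N, hN⟩ := Filter.eventually_atTop.1 <| (Filter.eventually_all_finset P.centers).2
    fun p hp => hlim.eventually_lt_const (P.radius_pos p hp)
  exact ⟨N, fun k hk => Finset.filter_eq_empty_iff.2 fun p hp => not_le.2 (hN k hk p hp)⟩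

/- At the last scale for which both points are active and four times as close as the scale, one of
the two conditions is about to fail; by separation either failure bounds the distance below. -/
lemma exists_last_common_scale (ha : a ∈ P.active 0) (hb : b ∈ P.active 0) (hab : a ≠ b)
    (hd : 4 * ‖a - b‖ ≤ P.top) :
    ∃ j, a ∈ P.active j ∧ b ∈ P.active j ∧ 4 * ‖a - b‖ ≤ P.scale j ∧
      P.ratio * P.scale j ≤ 64 * ‖a - b‖ := by
  classical
  set J : ℕ → Prop := fun k => a ∈ P.active k ∧ b ∈ P.active k ∧ 4 * ‖a - b‖ ≤ P.scale k
  have hfail : ∃ k, ¬ J k := by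
    obtain ⟨N, hN⟩ := P.exists_active_eq_empty
    exact ⟨N, fun h => by simpa [hN N le_rfl] using h.1⟩
  have hJ0 : J 0 := ⟨ha, hb, by rwa [P.scale_zero]⟩
  obtain ⟨j, hj⟩ := Nat.exists_eq_succ_of_ne_zero fun h : Nat.find hfail = 0 =>
    Nat.find_spec hfail (h ▸ hJ0)
  have hJj : J j := not_not.1 (Nat.find_min hfail (by omega))
  have hJsucc : ¬ J (j + 1) := Nat.succ_eq_add_one j ▸ hj ▸ Nat.find_spec hfail
  refine ⟨j, hJj.1, hJj.2.1, hJj.2.2, ?_⟩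
  by_contra! hnear
  have haC := P.active_subset j hJj.1
  have hbC := P.active_subset j hJj.2.1
  have hrad_a := P.radius_le_norm_sub a haC b hbC hab
  have hrad_b := P.radius_le_norm_sub b hbC a haC hab.symm
  rw [norm_sub_rev] at hrad_b
  have hscale := mul_le_of_le_one_left (P.scale_pos j).le P.ratio_le_one
  have := mul_pos P.ratio_pos (P.scale_pos j)
  refine hJsucc ⟨mem_active.2 ⟨haC, ?_⟩, mem_active.2 ⟨hbC, ?_⟩, ?_⟩ <;>
    rw [P.scale_succ] <;> linarith

variable [InnerProductSpace ℝ E]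

/-- The hypotheses under which a family of balls can be flattened near the points of `G`: the plane
`L k p` attached to `p` at the `k`-th scale turns by at most `ε k a` when `p` moves within distance
`8 * scale k` of `a ∈ G` or when the scale drops, and the squares of these errors are summable. -/
structure IsFlatOn (P : SeparatedBalls E) (G : Finset E) (L : ℕ → E → AffinePlane E)
    (ε : ℕ → E → ℝ) (c K κ : ℝ) : Prop where
  c_pos : 0 < c
  K_nonneg : 0 ≤ K
  κ_pos : 0 < κ
  κ_small : κ * (100000 * (1 + 2 * (K / c))) ≤ P.ratio ^ 2
  subset : G ⊆ P.active 0
  ε_nonneg : ∀ a ∈ G, ∀ k, 0 ≤ ε k a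
  sum_sq_le : ∀ a ∈ G, ∀ n, ∑ k ∈ Finset.range n, ε k a ^ 2 ≤ κ ^ 2
  ahlfors : ∀ a ∈ G, ∀ k, a ∈ P.active k →
    IsAhlforsAt (P.active k) (fun q => P.radius q ^ 2) a (P.scale k) c K
  close : ∀ a ∈ G, ∀ k, a ∈ P.active k → ∀ q ∈ P.active k, ‖q - a‖ < 8 * P.scale k →
    (L k q).IsClose (L k a) (ε k a) a (P.scale k)
  close_succ : ∀ a ∈ G, ∀ k, a ∈ P.active (k + 1) →
    (L k a).IsClose (L (k + 1) a) (ε k a) a (P.scale (k + 1))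
  radius_mul_norm_le : ∀ a ∈ G, ∀ k, a ∈ P.active k →
    P.radius a * ‖(L k a).displacement a‖ ≤ ε k a * P.scale k ^ 2

/-- The iterated smoothing `Y k` of the family: a point is smoothed at all scales from the finest
at which it is active up to the `k`-th. -/
structure IsFlattening (P : SeparatedBalls E) (L : ℕ → E → AffinePlane E) (Y : ℕ → E → E) :
    Prop where
  eq_smoothing : ∀ k, ∀ p ∈ P.active k,
    Y k p = smoothing (P.active k) (fun q => P.radius q ^ 2) (P.scale k) (L k) (Y (k + 1) p)
  eq_self : ∀ k, ∀ p ∉ P.active k, Y k p = p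

open Classical in
/-- The composition of the `n` smoothing steps from scale `k + n` to scale `k`. -/
def iterateSmoothing (P : SeparatedBalls E) (L : ℕ → E → AffinePlane E) : ℕ → ℕ → E → E
  | 0, _, p => p
  | n + 1, k, p =>
    if p ∈ P.active k then
      smoothing (P.active k) (fun q => P.radius q ^ 2) (P.scale k) (L k)
        (P.iterateSmoothing L n (k + 1) p)
    else p

lemma exists_isFlattening (P : SeparatedBalls E) (L : ℕ → E → AffinePlane E) :
    ∃ Y, P.IsFlattening L Y := by
  obtain ⟨N, hN⟩ := P.exists_active_eq_empty
  refine ⟨fun k => P.iterateSmoothing L (N - k) k, fun k p hp => ?_, fun k p hp => ?_⟩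
  · have hk : k < N := not_le.1 fun h => by simp [hN k h] at hp
    rw [show N - k = N - (k + 1) + 1 by omega, iterateSmoothing, if_pos hp]
  · cases N - k <;> simp [iterateSmoothing, hp]

/-- The distance over which flattening may move an active point, relative to the scale. -/
def offset (P : SeparatedBalls E) (κ : ℝ) : ℝ := 16 * κ / P.ratio

namespace IsFlatOn

variable {G : Finset E} {L : ℕ → E → AffinePlane E} {ε : ℕ → E → ℝ} {c K κ : ℝ}
  {Y : ℕ → E → E} {n j : ℕ} (h : P.IsFlatOn G L ε c K κ) (hY : P.IsFlattening L Y)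

section Constants

include h

lemma one_le : 1 ≤ 1 + 2 * (K / c) := by linarith [div_nonneg h.K_nonneg h.c_pos.le]

lemma ε_le (ha : a ∈ G) (k : ℕ) : ε k a ≤ κ := by
  have hsingle : ε k a ^ 2 ≤ ∑ i ∈ Finset.range (k + 1), ε i a ^ 2 :=
    Finset.single_le_sum (f := fun i => ε i a ^ 2) (fun _ _ => sq_nonneg _)
      (Finset.self_mem_range_succ k)
  exact (abs_le_of_sq_le_sq' (hsingle.trans (h.sum_sq_le a ha (k + 1))) h.κ_pos.le).2

lemma offset_pos : 0 < P.offset κ := div_pos (by linarith [h.κ_pos]) P.ratio_pos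

lemma le_offset : 16 * κ ≤ P.offset κ :=
  le_div_self (by linarith [h.κ_pos]) P.ratio_pos P.ratio_le_one

lemma mul_offset_le : 6250 * (1 + 2 * (K / c)) * P.offset κ ≤ P.ratio := by
  rw [offset, ← mul_div_assoc, div_le_iff₀ P.ratio_pos]
  linarith [h.κ_small]

lemma offset_le : 6250 * P.offset κ ≤ P.ratio :=
  le_trans (by nlinarith [h.one_le, h.offset_pos]) h.mul_offset_le

end Constants

include h hY

lemma norm_displacement_le_of_active_succ (ha : a ∈ G) (hak : a ∈ P.active (k + 1))
    (hbk : b ∈ P.active (k + 1)) (hb₂ : ‖Y (k + 2) b - a‖ ≤ P.scale (k + 1))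
    (hb₁ : ‖Y (k + 1) b - a‖ ≤ P.scale k) :
    ‖(L k a).displacement (Y (k + 1) b)‖ ≤ (ε k a + ε (k + 1) a) * P.scale k := by
  have hscale := P.scale_pos k
  have hfine := norm_displacement_smoothing_le (h.ahlfors a ha _ hak) (P.scale_pos (k + 1)) h.c_pos
    (h.close a ha _ hak) hb₂
  rw [← hY.eq_smoothing (k + 1) b hbk] at hfine
  have hcoarse := AffinePlane.norm_displacement_le_add _ _
    ((h.close_succ a ha k hak).norm_displacement_sub_le (Y (k + 1) b)
      (by rw [P.scale_succ]; linarith))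
  rw [P.scale_succ] at hfine hcoarse
  linarith [mul_nonneg (h.ε_nonneg a ha k) hscale.le,
    mul_nonneg (h.ε_nonneg a ha (k + 1)) hscale.le]

omit hY in
lemma norm_displacement_self_le (ha : a ∈ G) (hak : a ∈ P.active k)
    (hak' : a ∉ P.active (k + 1)) : ‖(L k a).displacement a‖ ≤ P.offset κ * P.scale k := by
  have hscale := P.scale_pos k
  have hrad : P.ratio * P.scale k / 16 < P.radius a := by
    by_contra! hle
    exact hak' (mem_active.2 ⟨P.active_subset k hak, by rw [P.scale_succ]; linarith⟩)
  have hprod : P.ratio * P.scale k / 16 * ‖(L k a).displacement a‖ ≤ κ * P.scale k ^ 2 :=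
    calc _ ≤ P.radius a * ‖(L k a).displacement a‖ := by gcongr
      _ ≤ ε k a * P.scale k ^ 2 := h.radius_mul_norm_le a ha k hak
      _ ≤ κ * P.scale k ^ 2 := by gcongr; exact h.ε_le ha k
  rw [offset, div_mul_eq_mul_div, le_div_iff₀ P.ratio_pos]
  refine le_of_mul_le_mul_left ?_ hscale
  linarith

lemma norm_displacement_le_of_norm_sub_le (ha : a ∈ G) (hak : a ∈ P.active k)
    (h₁ : ‖Y (k + 1) a - a‖ ≤ 2 * P.offset κ * P.scale (k + 1))
    (h₂ : ‖Y (k + 2) a - a‖ ≤ 2 * P.offset κ * P.scale (k + 2)) :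
    ‖(L k a).displacement (Y (k + 1) a)‖ ≤ P.offset κ * P.scale k := by
  by_cases hak' : a ∈ P.active (k + 1)
  · have hscale := P.scale_pos k
    have hoffset : P.offset κ ≤ 1 := by linarith [h.offset_le, P.ratio_le_one, h.offset_pos]
    have hprod := mul_le_of_le_one_left hscale.le hoffset
    refine (h.norm_displacement_le_of_active_succ hY ha hak' hak' ?_ ?_).trans ?_
    · rw [P.scale_succ (k + 1), P.scale_succ] at h₂
      rw [P.scale_succ]; linarith
    · rw [P.scale_succ] at h₁; linarith
    · gcongr
      linarith [h.ε_le ha k, h.ε_le ha (k + 1), h.le_offset, h.κ_pos]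
  · rw [hY.eq_self _ _ hak']
    exact h.norm_displacement_self_le ha hak hak'

lemma norm_sub_self_le (ha : a ∈ G) (k : ℕ) : ‖Y k a - a‖ ≤ 2 * P.offset κ * P.scale k := by
  have hoff := h.offset_pos
  obtain ⟨N, hN⟩ := P.exists_active_eq_empty
  obtain ⟨n, hn⟩ : ∃ n, N ≤ k + n := ⟨N, by omega⟩
  induction n generalizing k with
  | zero =>
    rw [hY.eq_self k a (by simp [hN k hn]), sub_self, norm_zero]
    linarith [mul_pos hoff (P.scale_pos k)]
  | succ n ih =>
    by_cases hak : a ∈ P.active k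
    · have hscale := mul_pos hoff (P.scale_pos k)
      have h₁ := ih (k + 1) (by omega)
      have hdisp := h.norm_displacement_le_of_norm_sub_le hY ha hak h₁ (ih (k + 2) (by omega))
      rw [P.scale_succ] at h₁
      have hmove := norm_smoothing_sub_self_le (h.ahlfors a ha k hak) (P.scale_pos k) h.c_pos
        (h.close a ha k hak) (y := Y (k + 1) a)
        (by nlinarith [h.offset_le, P.ratio_le_one, P.scale_pos k])
      rw [← hY.eq_smoothing k a hak] at hmove
      have hε : 16 * (ε k a * P.scale k) ≤ P.offset κ * P.scale k := by
        rw [← mul_assoc]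
        exact mul_le_mul_of_nonneg_right (by linarith [h.ε_le ha k, h.le_offset])
          (P.scale_pos k).le
      linarith [norm_sub_le_norm_sub_add_norm_sub (Y k a) (Y (k + 1) a) a]
    · rw [hY.eq_self k a hak, sub_self, norm_zero]
      linarith [mul_pos hoff (P.scale_pos k)]

lemma norm_displacement_le (ha : a ∈ G) (hak : a ∈ P.active k) :
    ‖(L k a).displacement (Y (k + 1) a)‖ ≤ P.offset κ * P.scale k :=
  h.norm_displacement_le_of_norm_sub_le hY ha hak (h.norm_sub_self_le hY ha _)
    (h.norm_sub_self_le hY ha _)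

lemma norm_flattening_sub_le (hb : b ∈ G) (hab : 4 * ‖a - b‖ ≤ P.scale k) :
    ‖Y (k + 1) b - a‖ ≤ P.scale k := by
  have hmove := h.norm_sub_self_le hY hb (k + 1)
  rw [P.scale_succ] at hmove
  have := mul_le_of_le_one_left (P.scale_pos k).le
    (show P.offset κ ≤ 1 by linarith [h.offset_le, P.ratio_le_one, h.offset_pos])
  linarith [norm_sub_le_norm_sub_add_norm_sub (Y (k + 1) b) b a, norm_sub_rev b a, P.scale_pos k]

end IsFlatOn

end SeparatedBalls

end Flattening

section Chain

lemma one_sub_sum_mul_le {x δ : ℕ → ℝ} {n : ℕ} (hx : ∀ k, 0 ≤ x k) (hδ : ∀ k, 0 ≤ δ k)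
    (hstep : ∀ k < n, (1 - δ k) * x (k + 1) ≤ x k) (hsum : ∑ k ∈ Finset.range n, δ k ≤ 1) :
    (1 - ∑ k ∈ Finset.range n, δ k) * x n ≤ x 0 := by
  induction n with
  | zero => simp
  | succ n ih =>
    rw [Finset.sum_range_succ] at hsum ⊢
    set S := ∑ k ∈ Finset.range n, δ k
    have hS0 : 0 ≤ S := Finset.sum_nonneg fun k _ => hδ k
    have hS1 : S ≤ 1 := by linarith [hδ n]
    calc (1 - (S + δ n)) * x (n + 1) ≤ (1 - S) * ((1 - δ n) * x (n + 1)) := by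
          nlinarith [mul_nonneg (mul_nonneg hS0 (hδ n)) (hx (n + 1))]
      _ ≤ (1 - S) * x n :=
          mul_le_mul_of_nonneg_left (hstep n n.lt_succ_self) (by linarith)
      _ ≤ x 0 := ih (fun k hk => hstep k (hk.trans n.lt_succ_self)) hS1

variable {E : Type*} [NormedAddCommGroup E] [InnerProductSpace ℝ E]

lemma AffinePlane.one_sub_sq_mul_norm_le (M : AffinePlane E) {D : E} {α : ℝ}
    (h : ‖D - M.proj D‖ ≤ α * ‖D‖) : (1 - α ^ 2) * ‖D‖ ≤ ‖M.proj D‖ := by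
  have hpyth := M.norm_sq_eq_proj_add_sub_proj D
  have hsq : ‖D - M.proj D‖ ^ 2 ≤ α ^ 2 * ‖D‖ ^ 2 := by
    rw [← mul_pow]; exact pow_le_pow_left₀ (norm_nonneg _) h 2
  rcases le_total 1 (α ^ 2) with hα | hα
  · exact (mul_nonpos_of_nonpos_of_nonneg (by linarith) (norm_nonneg D)).trans (norm_nonneg _)
  · refine le_of_sq_le_sq ?_ (norm_nonneg _)
    calc ((1 - α ^ 2) * ‖D‖) ^ 2 = (1 - α ^ 2) ^ 2 * ‖D‖ ^ 2 := mul_pow _ _ 2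
      _ ≤ (1 - α ^ 2) * ‖D‖ ^ 2 := by
          gcongr; exact pow_le_of_le_one (by linarith) (by linarith [sq_nonneg α]) two_ne_zero
      _ ≤ ‖M.proj D‖ ^ 2 := by linarith

lemma AffinePlane.one_sub_two_mul_sq_mul_norm_le (M : AffinePlane E) {D D' : E} {α f B : ℝ}
    (hf : 0 ≤ f) (hB : 1 ≤ B) (hα : 2 * B * f ≤ α)
    (htangential : ‖M.proj D' - M.proj D‖ ≤ f * ‖D - M.proj D‖ + B * f ^ 2 * ‖D‖)
    (hnormal : ‖D - M.proj D‖ ≤ α * ‖D‖) : (1 - 2 * α ^ 2) * ‖D‖ ≤ ‖D'‖ := by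
  have hfα : f ≤ α / 2 := by nlinarith
  have hloss : f * α + B * f ^ 2 ≤ α ^ 2 := by
    have : B * f * f ≤ α / 2 * (α / 2) :=
      mul_le_mul (by linarith) hfα hf (by linarith)
    nlinarith
  have hchange : ‖M.proj D' - M.proj D‖ ≤ α ^ 2 * ‖D‖ :=
    calc _ ≤ f * (α * ‖D‖) + B * f ^ 2 * ‖D‖ := by grw [htangential, hnormal]
      _ = (f * α + B * f ^ 2) * ‖D‖ := by ring
      _ ≤ α ^ 2 * ‖D‖ := by gcongr
  linarith [M.one_sub_sq_mul_norm_le hnormal, M.norm_proj_le D',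
    norm_sub_norm_le (M.proj D) (M.proj D'), norm_sub_rev (M.proj D) (M.proj D')]

/-- The bound on the angle between the `(k + 1)`-st difference and the `k`-th plane of a chain with
tilts `f` and distortion `B`. -/
def angleBound (B : ℝ) (f : ℕ → ℝ) (k : ℕ) : ℝ := 2 * B * (f k + f (k + 1))

/-- Differences `X (j + 1), X j, …, X 0` of the images of two points under successive smoothing
steps along the planes `M j, …, M 0`, with tilts `f k` and distortion `B`: the normal part changes
to first order in `f k`, the tangential part to second order. -/
structure IsFlatChain (X : ℕ → E) (M : ℕ → AffinePlane E) (f : ℕ → ℝ) (B : ℝ) (j : ℕ) :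
    Prop where
  one_le : 1 ≤ B
  nonneg : ∀ k, 0 ≤ f k
  normal_le : ∀ k ≤ j, ‖X k - (M k).proj (X k)‖ ≤ B * f k * ‖X (k + 1)‖
  tangential_le : ∀ k ≤ j, ‖(M k).proj (X k) - (M k).proj (X (k + 1))‖ ≤
    f k * ‖X (k + 1) - (M k).proj (X (k + 1))‖ + B * f k ^ 2 * ‖X (k + 1)‖
  tilt_le : ∀ k < j, ∀ v, ‖(M k).proj v - (M (k + 1)).proj v‖ ≤ f k * ‖v‖
  start_le : ‖X (j + 1) - (M j).proj (X (j + 1))‖ ≤ angleBound B f j * ‖X (j + 1)‖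
  sum_le : ∑ k ∈ Finset.range (j + 1), 2 * angleBound B f k ^ 2 ≤ 1 / 2

namespace IsFlatChain

variable {X : ℕ → E} {M : ℕ → AffinePlane E} {f : ℕ → ℝ} {B : ℝ} {j k : ℕ}
  (h : IsFlatChain X M f B j)

include h

lemma one_sub_mul_norm_le_of_angle (hk : k ≤ j)
    (hangle : ‖X (k + 1) - (M k).proj (X (k + 1))‖ ≤ angleBound B f k * ‖X (k + 1)‖) :
    (1 - 2 * angleBound B f k ^ 2) * ‖X (k + 1)‖ ≤ ‖X k‖ := by
  refine (M k).one_sub_two_mul_sq_mul_norm_le (h.nonneg k) h.one_le ?_ (h.tangential_le k hk) hangle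
  have := mul_nonneg (show 0 ≤ 2 * B by linarith [h.one_le]) (h.nonneg (k + 1))
  rw [angleBound]; linarith

lemma norm_succ_le_of_angle (hk : k ≤ j)
    (hangle : ‖X (k + 1) - (M k).proj (X (k + 1))‖ ≤ angleBound B f k * ‖X (k + 1)‖) :
    ‖X (k + 1)‖ ≤ 2 * ‖X k‖ := by
  have hsmall : 2 * angleBound B f k ^ 2 ≤ 1 / 2 := le_trans (Finset.single_le_sum
    (f := fun k => 2 * angleBound B f k ^ 2) (fun _ _ => by positivity)
    (Finset.mem_range.2 (Nat.lt_succ_of_le hk))) h.sum_le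
  have := h.one_sub_mul_norm_le_of_angle hk hangle
  nlinarith [norm_nonneg (X (k + 1))]

lemma norm_sub_proj_le (hk : k ≤ j) :
    ‖X (k + 1) - (M k).proj (X (k + 1))‖ ≤ angleBound B f k * ‖X (k + 1)‖ := by
  induction hk using Nat.decreasingInduction with
  | self => exact h.start_le
  | of_succ k hk ih =>
    have hB : 0 ≤ B := by linarith [h.one_le]
    have hf := h.nonneg k
    have hnormal : ‖X (k + 1) - (M (k + 1)).proj (X (k + 1))‖ ≤
        B * f (k + 1) * (2 * ‖X (k + 1)‖) :=
      (h.normal_le (k + 1) hk).trans <| mul_le_mul_of_nonneg_left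
        (h.norm_succ_le_of_angle hk ih) (mul_nonneg hB (h.nonneg _))
    have htilt : ‖(M k).proj (X (k + 1)) - (M (k + 1)).proj (X (k + 1))‖ ≤
        2 * B * f k * ‖X (k + 1)‖ :=
      (h.tilt_le k hk _).trans <| mul_le_mul_of_nonneg_right (by nlinarith [h.one_le])
        (norm_nonneg _)
    calc ‖X (k + 1) - (M k).proj (X (k + 1))‖
        = ‖(X (k + 1) - (M (k + 1)).proj (X (k + 1))) -
            ((M k).proj (X (k + 1)) - (M (k + 1)).proj (X (k + 1)))‖ := by congr 1; abel
      _ ≤ angleBound B f k * ‖X (k + 1)‖ := by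
          refine (norm_sub_le _ _).trans ((add_le_add hnormal htilt).trans_eq ?_)
          rw [angleBound]; ring

lemma norm_last_le : ‖X (j + 1)‖ ≤ 2 * ‖X 0‖ := by
  have hloss := one_sub_sum_mul_le (x := fun k => ‖X k‖)
    (δ := fun k => 2 * angleBound B f k ^ 2) (n := j + 1) (fun _ => norm_nonneg _)
    (fun _ => by positivity) (fun k hk =>
      have hk := Nat.le_of_lt_succ hk
      h.one_sub_mul_norm_le_of_angle hk (h.norm_sub_proj_le hk)) (h.sum_le.trans (by norm_num))
  have hhalf := mul_le_mul_of_nonneg_right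
    (show 1 / 2 ≤ 1 - ∑ k ∈ Finset.range (j + 1), 2 * angleBound B f k ^ 2 by linarith [h.sum_le])
    (norm_nonneg (X (j + 1)))
  linarith

lemma norm_first_sub_proj_le : ‖X 0 - (M 0).proj (X 0)‖ ≤ B * f 0 * (2 * ‖X 0‖) :=
  (h.normal_le 0 j.zero_le).trans <| mul_le_mul_of_nonneg_left
    (h.norm_succ_le_of_angle j.zero_le (h.norm_sub_proj_le j.zero_le))
    (mul_nonneg (by linarith [h.one_le]) (h.nonneg 0))

end IsFlatChain

end Chain

section Packing

namespace SeparatedBalls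

variable {E : Type*} [NormedAddCommGroup E] [InnerProductSpace ℝ E] {P : SeparatedBalls E}

/-- The tilts of the chain comparing two points which separate at the `j`-th scale. The value from
`j` on accounts for the offset of the two points relative to their distance. -/
def tilt (P : SeparatedBalls E) (ε : ℕ → E → ℝ) (κ : ℝ) (j : ℕ) (a : E) (k : ℕ) : ℝ :=
  if k < j then ε k a + ε (k + 1) a else 200 * P.offset κ / P.ratio

lemma sum_add_sq_le (f : ℕ → ℝ) (n : ℕ) :
    ∑ k ∈ Finset.range n, (f k + f (k + 1)) ^ 2 ≤ 4 * ∑ k ∈ Finset.range (n + 1), f k ^ 2 := by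
  calc ∑ k ∈ Finset.range n, (f k + f (k + 1)) ^ 2
      ≤ ∑ k ∈ Finset.range n, 2 * (f k ^ 2 + f (k + 1) ^ 2) :=
        Finset.sum_le_sum fun k _ => add_sq_le
    _ = 2 * (∑ k ∈ Finset.range n, f k ^ 2 + ∑ k ∈ Finset.range n, f (k + 1) ^ 2) := by
        rw [← Finset.mul_sum, Finset.sum_add_distrib]
    _ ≤ 4 * ∑ k ∈ Finset.range (n + 1), f k ^ 2 := by
        have hlast := Finset.sum_range_succ (fun k => f k ^ 2) n
        have hfirst := Finset.sum_range_succ' (fun k => f k ^ 2) n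
        linarith [sq_nonneg (f n), sq_nonneg (f 0)]

namespace IsFlatOn

variable {G : Finset E} {L : ℕ → E → AffinePlane E} {ε : ℕ → E → ℝ} {c K κ : ℝ}
  {Y : ℕ → E → E} {j k : ℕ} {a b : E} (h : P.IsFlatOn G L ε c K κ) (hY : P.IsFlattening L Y)

include h

lemma offset_le_tilt_tail : 200 * P.offset κ ≤ 200 * P.offset κ / P.ratio :=
  le_div_self (by linarith [h.offset_pos]) P.ratio_pos P.ratio_le_one

lemma ε_le_tilt (ha : a ∈ G) (j k : ℕ) : ε k a ≤ P.tilt ε κ j a k := by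
  unfold tilt
  split_ifs
  · linarith [h.ε_nonneg a ha (k + 1)]
  · linarith [h.ε_le ha k, h.le_offset, h.offset_le_tilt_tail, h.κ_pos]

lemma tilt_nonneg (ha : a ∈ G) (j k : ℕ) : 0 ≤ P.tilt ε κ j a k :=
  (h.ε_nonneg a ha k).trans (h.ε_le_tilt ha j k)

lemma tilt_le (ha : a ∈ G) (j k : ℕ) : P.tilt ε κ j a k ≤ 200 * P.offset κ / P.ratio := by
  unfold tilt
  split_ifs
  · linarith [h.ε_le ha k, h.ε_le ha (k + 1), h.le_offset, h.offset_le_tilt_tail, h.κ_pos]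
  · exact le_rfl

lemma mul_offset_div_ratio_le : (1 + 2 * (K / c)) * (P.offset κ / P.ratio) ≤ 1 / 6250 := by
  rw [← mul_div_assoc, div_le_iff₀ P.ratio_pos]
  linarith [h.mul_offset_le]

lemma sum_tilt_sq_le (ha : a ∈ G) (j : ℕ) :
    ∑ k ∈ Finset.range (j + 2), P.tilt ε κ j a k ^ 2 ≤ 80004 * (P.offset κ / P.ratio) ^ 2 := by
  have hinit : ∑ k ∈ Finset.range j, P.tilt ε κ j a k ^ 2 ≤ 4 * κ ^ 2 :=
    calc _ = ∑ k ∈ Finset.range j, (ε k a + ε (k + 1) a) ^ 2 := Finset.sum_congr rfl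
          fun k hk => by rw [tilt, if_pos (Finset.mem_range.1 hk)]
      _ ≤ 4 * κ ^ 2 := (sum_add_sq_le _ j).trans (by gcongr; exact h.sum_sq_le a ha (j + 1))
  have hκ : κ ^ 2 ≤ (P.offset κ / P.ratio) ^ 2 := pow_le_pow_left₀ h.κ_pos.le
    (by linarith [h.le_offset, h.κ_pos, le_div_self h.offset_pos.le P.ratio_pos P.ratio_le_one]) 2
  rw [Finset.sum_range_succ, Finset.sum_range_succ, tilt, if_neg (lt_irrefl j), tilt,
    if_neg (by omega), mul_div_assoc]
  linarith

lemma sum_angleBound_sq_le (ha : a ∈ G) (j : ℕ) :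
    ∑ k ∈ Finset.range (j + 1), 2 * angleBound (1 + 2 * (K / c)) (P.tilt ε κ j a) k ^ 2 ≤
      1 / 2 := by
  set B := 1 + 2 * (K / c)
  have hB : (B * (P.offset κ / P.ratio)) ^ 2 ≤ (1 / 6250) ^ 2 := by
    have := h.one_le
    have := h.offset_pos
    have := P.ratio_pos
    gcongr
    exact h.mul_offset_div_ratio_le
  calc _ = 8 * B ^ 2 *
          ∑ k ∈ Finset.range (j + 1), (P.tilt ε κ j a k + P.tilt ε κ j a (k + 1)) ^ 2 := by
        rw [Finset.mul_sum]
        exact Finset.sum_congr rfl fun k _ => by rw [angleBound]; ring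
    _ ≤ 8 * B ^ 2 * (4 * (80004 * (P.offset κ / P.ratio) ^ 2)) := by
        grw [sum_add_sq_le, h.sum_tilt_sq_le ha j]
    _ = 2560128 * (B * (P.offset κ / P.ratio)) ^ 2 := by ring
    _ ≤ 1 / 2 := by linarith

include hY

lemma norm_displacement_le_two_mul_offset (ha : a ∈ G) (hb : b ∈ G) (haj : a ∈ P.active j)
    (hbj : b ∈ P.active j) (hab : 4 * ‖a - b‖ ≤ P.scale j) :
    ‖(L j a).displacement (Y (j + 1) b)‖ ≤ 2 * P.offset κ * P.scale j := by
  have hscale := P.scale_pos j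
  have hclose : (L j b).IsClose (L j a) (ε j a) a (P.scale j) :=
    h.close a ha j haj b hbj (by linarith [norm_sub_rev a b])
  have htransfer := AffinePlane.norm_displacement_le_add (L j a) (L j b)
    (y := Y (j + 1) b) (η := ε j a * P.scale j) <| by
      rw [norm_sub_rev]
      exact hclose.norm_displacement_sub_le (Y (j + 1) b)
        ((h.norm_flattening_sub_le hY hb hab).trans (by linarith))
  have hε : ε j a * P.scale j ≤ P.offset κ * P.scale j :=
    mul_le_mul_of_nonneg_right (by linarith [h.ε_le ha j, h.le_offset, h.κ_pos]) hscale.le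
  linarith [h.norm_displacement_le hY hb hbj]

lemma norm_displacement_le_tilt (ha : a ∈ G) (hb : b ∈ G) (haj : a ∈ P.active j)
    (hbj : b ∈ P.active j) (hab : 4 * ‖a - b‖ ≤ P.scale j) (hk : k ≤ j) :
    ‖(L k a).displacement (Y (k + 1) b)‖ ≤ P.tilt ε κ j a k * P.scale k := by
  have hscale := P.scale_pos k
  rcases hk.lt_or_eq with hlt | rfl
  · have hclose : ∀ i ≤ j, ‖Y (i + 1) b - a‖ ≤ P.scale i := fun i hi =>
      h.norm_flattening_sub_le hY hb (hab.trans (scale_antitone hi))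
    rw [tilt, if_pos hlt]
    exact h.norm_displacement_le_of_active_succ hY ha (active_antitone hlt haj)
      (active_antitone hlt hbj) (hclose (k + 1) hlt) (hclose k hk)
  · rw [tilt, if_neg (lt_irrefl k)]
    refine (h.norm_displacement_le_two_mul_offset hY ha hb haj hbj hab).trans ?_
    gcongr
    linarith [h.offset_pos, h.offset_le_tilt_tail]

lemma half_norm_sub_le (ha : a ∈ G) (hb : b ∈ G)
    (hsep : P.ratio * P.scale j ≤ 64 * ‖a - b‖) :
    ‖a - b‖ / 2 ≤ ‖Y (j + 1) a - Y (j + 1) b‖ := by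
  have hmove_a := h.norm_sub_self_le hY ha (j + 1)
  have hmove_b := h.norm_sub_self_le hY hb (j + 1)
  rw [P.scale_succ] at hmove_a hmove_b
  have hoffset := mul_le_mul_of_nonneg_right h.offset_le (P.scale_pos j).le
  have htriangle := norm_sub_le_norm_sub_add_norm_sub a (Y (j + 1) a) b
  have htriangle' := norm_sub_le_norm_sub_add_norm_sub (Y (j + 1) a) (Y (j + 1) b) b
  linarith [norm_sub_rev a (Y (j + 1) a), norm_nonneg (a - b)]

lemma norm_sub_proj_le_angleBound (ha : a ∈ G) (hb : b ∈ G) (haj : a ∈ P.active j)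
    (hbj : b ∈ P.active j) (hab : 4 * ‖a - b‖ ≤ P.scale j)
    (hsep : P.ratio * P.scale j ≤ 64 * ‖a - b‖) :
    ‖(Y (j + 1) a - Y (j + 1) b) - (L j a).proj (Y (j + 1) a - Y (j + 1) b)‖ ≤
      angleBound (1 + 2 * (K / c)) (P.tilt ε κ j a) j * ‖Y (j + 1) a - Y (j + 1) b‖ := by
  set D := Y (j + 1) a - Y (j + 1) b with hD
  have hoff := h.offset_pos
  have hratio := P.ratio_pos
  have hheight : ‖D - (L j a).proj D‖ ≤ 3 * P.offset κ * P.scale j := by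
    rw [hD, ← norm_neg, ← AffinePlane.displacement_sub]
    refine (norm_sub_le _ _).trans ?_
    linarith [h.norm_displacement_le hY ha haj,
      h.norm_displacement_le_two_mul_offset hY ha hb haj hbj hab]
  have hscale : P.scale j ≤ 128 * ‖D‖ / P.ratio := by
    rw [le_div_iff₀ hratio]
    linarith [h.half_norm_sub_le hY ha hb hsep]
  calc ‖D - (L j a).proj D‖ ≤ 3 * P.offset κ * (128 * ‖D‖ / P.ratio) := by
        grw [hheight, hscale]
    _ = 384 * (P.offset κ / P.ratio * ‖D‖) := by ring
    _ ≤ 800 * (1 + 2 * (K / c)) * (P.offset κ / P.ratio * ‖D‖) := by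
        gcongr; linarith [h.one_le]
    _ = angleBound (1 + 2 * (K / c)) (P.tilt ε κ j a) j * ‖D‖ := by
        rw [angleBound, tilt, if_neg (lt_irrefl j), tilt, if_neg (by omega)]; ring

lemma isFlatChain (ha : a ∈ G) (hb : b ∈ G) (haj : a ∈ P.active j) (hbj : b ∈ P.active j)
    (hab : 4 * ‖a - b‖ ≤ P.scale j) (hsep : P.ratio * P.scale j ≤ 64 * ‖a - b‖) :
    IsFlatChain (fun k => Y k a - Y k b) (fun k => L k a) (P.tilt ε κ j a) (1 + 2 * (K / c)) j := by
  have hclose : ∀ k ≤ j, ∀ q ∈ P.active k, ‖q - a‖ < 8 * P.scale k →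
      (L k q).IsClose (L k a) (P.tilt ε κ j a k) a (P.scale k) := fun k hk q hq hqa =>
    (h.close a ha k (active_antitone hk haj) q hq hqa).mono (h.ε_le_tilt ha j k)
      (P.scale_pos k).le
  have hself : ∀ k, ‖Y (k + 1) a - a‖ ≤ P.scale k := fun k =>
    h.norm_flattening_sub_le hY ha (by simpa using (P.scale_pos k).le)
  have hother : ∀ k ≤ j, ‖Y (k + 1) b - a‖ ≤ P.scale k := fun k hk =>
    h.norm_flattening_sub_le hY hb (hab.trans (scale_antitone hk))
  refine ⟨h.one_le, h.tilt_nonneg ha j, fun k hk => ?_, fun k hk => ?_, fun k hk v =>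
    ((h.close_succ a ha k (active_antitone hk haj)).norm_proj_sub_le v).trans
      (mul_le_mul_of_nonneg_right (h.ε_le_tilt ha j k) (norm_nonneg v)),
    h.norm_sub_proj_le_angleBound hY ha hb haj hbj hab hsep, h.sum_angleBound_sq_le ha j⟩
  all_goals
    have hak := active_antitone hk haj
    simp only [hY.eq_smoothing k a hak, hY.eq_smoothing k b (active_antitone hk hbj)]
  · exact norm_normal_smoothing_sub_le (h.ahlfors a ha k hak) (P.scale_pos k) h.c_pos
      (hclose k hk) (hself k) (hother k hk)
      (h.norm_displacement_le_tilt hY ha hb haj hbj hab hk)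
  · simpa only [map_sub] using norm_tangential_smoothing_sub_le (h.ahlfors a ha k hak)
      (P.scale_pos k) h.c_pos (hclose k hk) (hself k) (hother k hk)
      (h.norm_displacement_le_tilt hY ha hb haj hbj hab hk)

lemma flattening_biLipschitz (ha : a ∈ G) (hb : b ∈ G) (hab : a ≠ b)
    (hd : 4 * ‖a - b‖ ≤ P.top) :
    ‖a - b‖ ≤ 4 * ‖Y 0 a - Y 0 b‖ ∧
      ‖(Y 0 a - Y 0 b) - (L 0 a).proj (Y 0 a - Y 0 b)‖ ≤ 1 / 4 * ‖Y 0 a - Y 0 b‖ := by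
  obtain ⟨j, haj, hbj, hclose, hsep⟩ :=
    exists_last_common_scale (h.subset ha) (h.subset hb) hab hd
  have hchain := h.isFlatChain hY ha hb haj hbj hclose hsep
  refine ⟨?_, hchain.norm_first_sub_proj_le.trans ?_⟩
  · linarith [hchain.norm_last_le, h.half_norm_sub_le hY ha hb hsep]
  · have hsmall : (1 + 2 * (K / c)) * P.tilt ε κ j a 0 ≤ 1 / 8 :=
      calc _ ≤ (1 + 2 * (K / c)) * (200 * P.offset κ / P.ratio) :=
            mul_le_mul_of_nonneg_left (h.tilt_le ha j 0) (by linarith [h.one_le])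
        _ = 200 * ((1 + 2 * (K / c)) * (P.offset κ / P.ratio)) := by ring
        _ ≤ 1 / 8 := by linarith [h.mul_offset_div_ratio_le]
    nlinarith [norm_nonneg (Y 0 a - Y 0 b)]

lemma norm_sub_le_norm_proj (ha : a ∈ G) (hb : b ∈ G) (hab : a ≠ b) {o : E} (ho : o ∈ G)
    (hd : 4 * ‖a - b‖ ≤ P.top) (hao : ‖a - o‖ < P.top) :
    ‖a - b‖ ≤ 8 * ‖(L 0 o).proj (Y 0 a - Y 0 b)‖ := by
  obtain ⟨hdist, hnormal⟩ := h.flattening_biLipschitz hY ha hb hab hd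
  set D := Y 0 a - Y 0 b
  have htilt : ‖(L 0 a).proj D - (L 0 o).proj D‖ ≤ 1 / 4 * ‖D‖ :=
    ((h.close o ho 0 (h.subset ho) a (h.subset ha) (by
      rw [P.scale_zero]; linarith [P.top_pos])).norm_proj_sub_le D).trans <| by
        gcongr; linarith [h.ε_le ho 0, h.le_offset, h.offset_le, P.ratio_le_one]
  have hsplit : ‖D‖ ≤ ‖D - (L 0 a).proj D‖ + ‖(L 0 a).proj D - (L 0 o).proj D‖ +
      ‖(L 0 o).proj D‖ := by
    refine le_of_eq_of_le ?_ norm_add₃_le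
    congr 1; abel
  linarith

/- Since `Y 0` is bilipschitz and nearly tangent to one plane, projecting to that plane keeps the
balls disjoint up to a fixed factor, and the bound is the packing bound in the plane. -/
omit hY in
theorem sum_radius_sq_le {x : E} (hx : ∀ a ∈ G, ‖a - x‖ ≤ P.top / 100) :
    ∑ a ∈ G, P.radius a ^ 2 ≤ 1024 * P.top ^ 2 := by
  have htop := P.top_pos
  rcases G.eq_empty_or_nonempty with rfl | ⟨o, ho⟩
  · simp only [Finset.sum_empty]; positivity
  obtain ⟨Y, hY⟩ := exists_isFlattening P L
  have hdist : ∀ a ∈ G, ∀ b ∈ G, ‖a - b‖ ≤ P.top / 50 := fun a ha b hb => by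
    linarith [norm_sub_le_norm_sub_add_norm_sub a x b, hx a ha, hx b hb, norm_sub_rev b x]
  have hpack := (L 0 o).sum_sq_le_of_le_norm_proj G (Y 0) (fun a => P.radius a / 16) x
    (R := 2 * P.top) (by linarith) ?_ ?_
  · simp only [div_pow, ← Finset.sum_div] at hpack
    linarith
  · intro a ha
    obtain ⟨haC, harad⟩ := mem_active.1 (h.subset ha)
    rw [P.scale_zero] at harad
    have hmove := h.norm_sub_self_le hY ha 0
    rw [P.scale_zero] at hmove
    refine ⟨by linarith [P.radius_pos a haC], ?_⟩
    have hratio := mul_le_of_le_one_left htop.le P.ratio_le_one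
    have hoffset := mul_le_mul_of_nonneg_right (h.offset_le.trans P.ratio_le_one) htop.le
    linarith [norm_sub_le_norm_sub_add_norm_sub (Y 0 a) a x, hx a ha]
  · intro a ha b hb hab
    have haC := P.active_subset 0 (h.subset ha)
    have hbC := P.active_subset 0 (h.subset hb)
    have := h.norm_sub_le_norm_proj hY ha hb hab ho (by linarith [hdist a ha b hb])
      (by linarith [hdist a ha o ho])
    linarith [P.radius_le_norm_sub a haC b hbC hab, P.radius_le_norm_sub b hbC a haC hab.symm,
      norm_sub_rev a b]

end IsFlatOn

end SeparatedBalls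

end Packing

section Fitting

namespace SeparatedBalls

variable {E : Type*} [NormedAddCommGroup E] [InnerProductSpace ℝ E] {P : SeparatedBalls E}

/-- The family has two-dimensional density near the points of `G`, and at every scale near `a ∈ G`
its balls are fitted by the planes `L k q` with mean square error `η k a ^ 2`, summable in `k`. -/
structure IsFittedOn (P : SeparatedBalls E) (G : Finset E) (L : ℕ → E → AffinePlane E)
    (η : ℕ → E → ℝ) (c K s : ℝ) : Prop where
  c_pos : 0 < c
  K_nonneg : 0 ≤ K
  subset : G ⊆ P.active 0
  nonneg : ∀ a ∈ G, ∀ k, 0 ≤ η k a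
  pos : ∀ a ∈ G, ∀ k, a ∈ P.active k → 0 < η k a
  sum_sq_le : ∀ a ∈ G, ∀ n, ∑ k ∈ Finset.range n, η k a ^ 2 ≤ s
  lower : ∀ a ∈ G, ∀ k, a ∈ P.active k →
    c * P.scale k ^ 2 ≤ ∑ q ∈ P.active k with ‖q - a‖ < P.scale k, P.radius q ^ 2
  upper : ∀ a ∈ P.centers, ∀ u, P.radius a ≤ u →
    ∑ q ∈ P.centers with ‖q - a‖ < u, P.radius q ^ 2 ≤ K * u ^ 2
  sum_displacement_le : ∀ a ∈ G, ∀ k, a ∈ P.active k → ∀ q ∈ P.active k, ‖q - a‖ < 8 * P.scale k →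
    ∑ p ∈ P.active k with ‖p - q‖ < 10 * P.scale k, P.radius p ^ 2 * ‖(L k q).displacement p‖ ^ 2 ≤
      η k a ^ 2 * P.scale k ^ 4

/-- The turning of the planes of a fitted family, in terms of the fitting errors at two successive
scales; `M` is the factor by which a point may be farther from a plane than the mean error. -/
def turn (P : SeparatedBalls E) (η : ℕ → E → ℝ) (M : ℝ) (k : ℕ) (a : E) : ℝ :=
  1400 / P.ratio ^ 2 * (M * (256 * η k a + η (k + 1) a))

namespace IsFittedOn

variable {G : Finset E} {L : ℕ → E → AffinePlane E} {η : ℕ → E → ℝ} {c K s M κ : ℝ} {a : E}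
  (h : P.IsFittedOn G L η c K s)

include h

lemma error_nonneg (ha : a ∈ G) (k : ℕ) : 0 ≤ 256 * η k a + η (k + 1) a := by
  linarith [h.nonneg a ha k, h.nonneg a ha (k + 1)]

lemma sum_turn_sq_le (hs : (1400 / P.ratio ^ 2 * M) ^ 2 * (131074 * s) ≤ κ ^ 2) (ha : a ∈ G)
    (n : ℕ) : ∑ k ∈ Finset.range n, P.turn η M k a ^ 2 ≤ κ ^ 2 := by
  have hshift : ∑ k ∈ Finset.range n, η (k + 1) a ^ 2 ≤ s := by
    have := h.sum_sq_le a ha (n + 1)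
    rw [Finset.sum_range_succ'] at this
    linarith [sq_nonneg (η 0 a)]
  calc ∑ k ∈ Finset.range n, P.turn η M k a ^ 2
      ≤ ∑ k ∈ Finset.range n,
          (1400 / P.ratio ^ 2 * M) ^ 2 * (2 * ((256 * η k a) ^ 2 + η (k + 1) a ^ 2)) :=
        Finset.sum_le_sum fun k _ => by
          rw [turn, ← mul_assoc, mul_pow]
          gcongr
          exact add_sq_le
    _ = (1400 / P.ratio ^ 2 * M) ^ 2 * (2 * (65536 * ∑ k ∈ Finset.range n, η k a ^ 2 +
          ∑ k ∈ Finset.range n, η (k + 1) a ^ 2)) := by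
        rw [← Finset.mul_sum, ← Finset.mul_sum, Finset.sum_add_distrib, Finset.mul_sum]
        simp only [mul_pow]; norm_num
    _ ≤ (1400 / P.ratio ^ 2 * M) ^ 2 * (2 * (65536 * s + s)) := by
        grw [h.sum_sq_le a ha n, hshift]
    _ ≤ κ ^ 2 := by linarith

lemma mul_error_le (hκ : 0 ≤ κ) (hκ1 : κ ≤ 1)
    (hs : (1400 / P.ratio ^ 2 * M) ^ 2 * (131074 * s) ≤ κ ^ 2) (ha : a ∈ G) (k : ℕ) :
    M * (256 * η k a + η (k + 1) a) ≤ P.ratio ^ 2 / 16 := by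
  have hratio := pow_pos P.ratio_pos 2
  have hturn : P.turn η M k a ≤ 1 := by
    refine (abs_le_of_sq_le_sq' ?_ hκ).2.trans hκ1
    exact (Finset.single_le_sum (f := fun k => P.turn η M k a ^ 2) (fun _ _ => sq_nonneg _)
      (Finset.self_mem_range_succ k)).trans (h.sum_turn_sq_le hs ha (k + 1))
  rw [turn, div_mul_eq_mul_div, div_le_one hratio] at hturn
  linarith

lemma sum_near_le (k : ℕ) :
    ∀ q ∈ (P.active k).filter (fun q => ‖q - a‖ < P.scale k),
      ∑ q' ∈ (P.active k).filter (fun q => ‖q - a‖ < P.scale k) with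
        ‖q' - q‖ ≤ 4 * P.ratio * P.scale k, P.radius q' ^ 2 ≤
          25 * K * (P.ratio * P.scale k) ^ 2 := by
  intro q hq
  obtain ⟨hqC, hqr⟩ := mem_active.1 (Finset.mem_filter.1 hq).1
  have hpos := mul_pos P.ratio_pos (P.scale_pos k)
  calc _ ≤ ∑ q' ∈ P.centers with ‖q' - q‖ < 5 * (P.ratio * P.scale k), P.radius q' ^ 2 :=
        sum_filter_le_sum_filter ((Finset.filter_subset _ _).trans (P.active_subset k))
          (fun _ _ => sq_nonneg _) fun q' _ _ => by linarith
    _ ≤ K * (5 * (P.ratio * P.scale k)) ^ 2 := h.upper q hqC _ (by linarith)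
    _ = 25 * K * (P.ratio * P.scale k) ^ 2 := by ring

lemma isAhlforsAt (ha : a ∈ G) {k : ℕ} (hak : a ∈ P.active k) :
    IsAhlforsAt (P.active k) (fun q => P.radius q ^ 2) a (P.scale k) c (64 * K) := by
  refine ⟨fun _ _ => sq_nonneg _, h.lower a ha k hak, ?_⟩
  obtain ⟨haC, har⟩ := mem_active.1 hak
  have hscale := (P.scale_pos k).le
  calc _ ≤ ∑ q ∈ P.centers with ‖q - a‖ < 8 * P.scale k, P.radius q ^ 2 :=
        sum_filter_le_sum_filter (P.active_subset k) (fun _ _ => sq_nonneg _) fun _ _ hq => hq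
    _ ≤ K * (8 * P.scale k) ^ 2 := h.upper a haC _ <| by
        linarith [mul_le_of_le_one_left hscale P.ratio_le_one]
    _ = 64 * K * P.scale k ^ 2 := by ring

lemma sum_displacement_near_le (ha : a ∈ G) {k : ℕ} (hak : a ∈ P.active k) {q : E}
    (hq : q ∈ P.active k) (hqa : ‖q - a‖ < 8 * P.scale k) :
    ∑ p ∈ P.active k with ‖p - a‖ < P.scale k, P.radius p ^ 2 * ‖(L k q).displacement p‖ ^ 2 ≤
      η k a ^ 2 * P.scale k ^ 4 :=
  (sum_filter_le_sum_filter le_rfl (fun _ _ => by positivity) fun p _ hp => by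
    linarith [norm_sub_le_norm_sub_add_norm_sub p a q, norm_sub_rev q a, P.scale_pos k]).trans
    (h.sum_displacement_le a ha k hak q hq hqa)

lemma sum_displacement_succ_le (ha : a ∈ G) {k : ℕ} (hak : a ∈ P.active (k + 1)) :
    ∑ p ∈ P.active (k + 1) with ‖p - a‖ < P.scale (k + 1),
      P.radius p ^ 2 * ‖(L k a).displacement p‖ ^ 2 ≤ (256 * η k a) ^ 2 * P.scale (k + 1) ^ 4 := by
  have hscale := P.scale_pos k
  have hak' := mem_active_of_succ hak
  have hnear := h.sum_displacement_near_le ha hak' hak' (by rw [sub_self, norm_zero]; positivity)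
  refine (sum_filter_le_sum_filter (active_antitone k.le_succ) (fun _ _ => by positivity)
    fun p _ hp => ?_).trans (hnear.trans_eq ?_)
  · rw [scale_succ] at hp; linarith
  · rw [scale_succ]; ring

section Close

variable (hM : 0 < M) (hMc : 8 ≤ M ^ 2 * c) (hKρ : 9 * (25 * K) * P.ratio < c / 2)
  (ha : a ∈ G) {k : ℕ} (hsmall : M * (256 * η k a + η (k + 1) a) ≤ P.ratio ^ 2 / 16)

include hM hMc hKρ ha hsmall

lemma isClose_of_sum_le {i : ℕ} (hai : a ∈ P.active i) (hpos : 0 < 256 * η k a + η (k + 1) a)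
    {L₁ L₂ : AffinePlane E} {η₁ η₂ : ℝ}
    (h₁ : ∑ q ∈ P.active i with ‖q - a‖ < P.scale i, P.radius q ^ 2 * ‖L₁.displacement q‖ ^ 2 ≤
      η₁ ^ 2 * P.scale i ^ 4)
    (h₂ : ∑ q ∈ P.active i with ‖q - a‖ < P.scale i, P.radius q ^ 2 * ‖L₂.displacement q‖ ^ 2 ≤
      η₂ ^ 2 * P.scale i ^ 4)
    (hη₁ : 0 ≤ η₁) (hη₂ : 0 ≤ η₂) (hη₁' : η₁ ≤ 256 * η k a + η (k + 1) a)
    (hη₂' : η₂ ≤ 256 * η k a + η (k + 1) a) :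
    L₁.IsClose L₂ (P.turn η M k a) a (P.scale i) :=
  L₁.isClose_of_sum_sq_le L₂ (P.scale_pos i) P.ratio_pos P.ratio_le_one
    (mul_nonneg (by norm_num) h.K_nonneg) hM hMc hpos hsmall hKρ (fun _ _ => sq_nonneg _)
    (fun _ hq => (Finset.mem_filter.1 hq).2.le) (h.sum_near_le i) (h.lower a ha i hai)
    (h₁.trans (by gcongr)) (h₂.trans (by gcongr))

lemma isClose_of_near (hak : a ∈ P.active k) {q : E} (hq : q ∈ P.active k)
    (hqa : ‖q - a‖ < 8 * P.scale k) :
    (L k q).IsClose (L k a) (P.turn η M k a) a (P.scale k) := by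
  have hη := h.pos a ha k hak
  have hη' := h.nonneg a ha (k + 1)
  refine h.isClose_of_sum_le hM hMc hKρ ha hsmall hak (by linarith)
    (h.sum_displacement_near_le ha hak hq hqa) (h.sum_displacement_near_le ha hak hak ?_)
    hη.le hη.le (by linarith) (by linarith)
  rw [sub_self, norm_zero]; linarith [P.scale_pos k]

lemma isClose_succ (hak : a ∈ P.active (k + 1)) :
    (L k a).IsClose (L (k + 1) a) (P.turn η M k a) a (P.scale (k + 1)) := by
  have hη := h.nonneg a ha k
  have hη' := h.pos a ha (k + 1) hak
  refine h.isClose_of_sum_le hM hMc hKρ ha hsmall hak (by linarith)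
    (h.sum_displacement_succ_le ha hak) (h.sum_displacement_near_le ha hak hak ?_)
    (by linarith) hη'.le (by linarith) (by linarith)
  rw [sub_self, norm_zero]; linarith [P.scale_pos (k + 1)]

end Close

lemma radius_mul_norm_le (ha : a ∈ G) {k : ℕ} (hak : a ∈ P.active k) :
    P.radius a * ‖(L k a).displacement a‖ ≤ η k a * P.scale k ^ 2 := by
  have hscale := P.scale_pos k
  have hzero : ‖a - a‖ < 8 * P.scale k := by rw [sub_self, norm_zero]; positivity
  refine (abs_le_of_sq_le_sq' ?_ (mul_nonneg (h.nonneg a ha k) (sq_nonneg _))).2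
  calc (P.radius a * ‖(L k a).displacement a‖) ^ 2
      = P.radius a ^ 2 * ‖(L k a).displacement a‖ ^ 2 := mul_pow _ _ 2
    _ ≤ ∑ p ∈ P.active k with ‖p - a‖ < P.scale k,
          P.radius p ^ 2 * ‖(L k a).displacement p‖ ^ 2 :=
        Finset.single_le_sum (f := fun p => P.radius p ^ 2 * ‖(L k a).displacement p‖ ^ 2)
          (fun _ _ => by positivity)
          (Finset.mem_filter.2 ⟨hak, by rw [sub_self, norm_zero]; positivity⟩)
    _ ≤ η k a ^ 2 * P.scale k ^ 4 := h.sum_displacement_near_le ha hak hak hzero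
    _ = (η k a * P.scale k ^ 2) ^ 2 := by ring

/- Two planes which fit the same set of dense mass agree up to the fitting error: at a single scale
the planes of two nearby balls, and at successive scales the planes of the same ball. -/
theorem isFlatOn (hM : 1 ≤ M) (hMc : 8 ≤ M ^ 2 * c) (hKρ : 9 * (25 * K) * P.ratio < c / 2)
    (hκ : 0 < κ) (hκρ : κ * (100000 * (1 + 2 * (64 * K / c))) ≤ P.ratio ^ 2)
    (hs : (1400 / P.ratio ^ 2 * M) ^ 2 * (131074 * s) ≤ κ ^ 2) :
    P.IsFlatOn G L (P.turn η M) c (64 * K) κ := by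
  have hratio : 1 ≤ 1400 / P.ratio ^ 2 := by
    rw [one_le_div (pow_pos P.ratio_pos 2)]
    linarith [pow_le_one₀ P.ratio_pos.le P.ratio_le_one (n := 2)]
  have hκ1 : κ ≤ 1 := by
    have := div_nonneg (mul_nonneg (by norm_num : (0 : ℝ) ≤ 64) h.K_nonneg) h.c_pos.le
    nlinarith [pow_le_one₀ P.ratio_pos.le P.ratio_le_one (n := 2)]
  have hM0 : 0 < M := by linarith
  have hsmall := fun a ha => h.mul_error_le (a := a) hκ.le hκ1 hs ha
  refine ⟨h.c_pos, mul_nonneg (by norm_num) h.K_nonneg, hκ, hκρ, h.subset, fun a ha k => ?_,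
    fun a ha => h.sum_turn_sq_le hs ha, fun a ha k => h.isAhlforsAt ha,
    fun a ha k hak q => h.isClose_of_near hM0 hMc hKρ ha (hsmall a ha k) hak,
    fun a ha k => h.isClose_succ hM0 hMc hKρ ha (hsmall a ha k),
    fun a ha k hak => (h.radius_mul_norm_le ha hak).trans ?_⟩
  · exact mul_nonneg (by linarith) (mul_nonneg hM0.le (h.error_nonneg ha k))
  · have hle : 256 * η k a + η (k + 1) a ≤ P.turn η M k a := by
      have herr := h.error_nonneg ha k
      exact (le_mul_of_one_le_left herr hM).trans
        (le_mul_of_one_le_left (mul_nonneg hM0.le herr) hratio)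
    exact mul_le_mul_of_nonneg_right
      (by linarith [h.nonneg a ha k, h.nonneg a ha (k + 1)]) (sq_nonneg _)

end IsFittedOn

end SeparatedBalls

end Fitting

/-! ### Planes from the Reifenberg condition -/

section WeightedDirac

variable {X : Type*} [MeasurableSpace X]

/-- The measure with atoms of mass `m p` at the points `p` of a finite set. -/
def weightedDirac (P : Finset X) (m : X → ℝ) : Measure X :=
  ∑ p ∈ P, ENNReal.ofReal (m p) • Measure.dirac p

variable {P : Finset X} {m : X → ℝ}

instance isFiniteMeasure_weightedDirac : IsFiniteMeasure (weightedDirac P m) := by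
  unfold weightedDirac
  constructor
  simp [ENNReal.sum_lt_top]

lemma weightedDirac_compl {S : Set X} (hS : MeasurableSet S) (hP : ∀ p ∈ P, p ∈ S) :
    weightedDirac P m Sᶜ = 0 := by
  rw [weightedDirac, Measure.finsetSum_apply]
  refine Finset.sum_eq_zero fun p hp => ?_
  rw [Measure.smul_apply, Measure.dirac_apply' _ hS.compl]
  simp [hP p hp]

lemma setIntegral_weightedDirac [MeasurableSingletonClass X] {S : Set X} (hS : MeasurableSet S)
    (hP : ∀ p ∈ P, p ∈ S) (hm : ∀ p ∈ P, 0 ≤ m p) (f : X → ℝ) :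
    ∫ y in S, f y ∂(weightedDirac P m) = ∑ p ∈ P, m p * f p := by
  rw [Measure.restrict_eq_self_of_ae_mem (weightedDirac_compl hS hP), weightedDirac,
    integral_finsetSum_measure fun p _ =>
      (integrable_dirac (by finiteness)).smul_measure ENNReal.ofReal_ne_top]
  refine Finset.sum_congr rfl fun p hp => ?_
  rw [integral_smul_measure, integral_dirac, ENNReal.toReal_ofReal (hm p hp), smul_eq_mul]

end WeightedDirac

lemma AffinePlane.norm_displacement_le_infDist {E : Type*} [NormedAddCommGroup E]
    [InnerProductSpace ℝ E] (L : AffineSubspace ℝ E) {c : E} (hc : c ∈ L)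
    (hL : Module.finrank ℝ L.direction = 2) (y : E) :
    ‖(AffinePlane.mk c L.direction hL).displacement y‖ ≤ infDist y (L : Set E) := by
  refine (le_infDist ⟨c, hc⟩).2 fun z hz => ?_
  set M := AffinePlane.mk c L.direction hL
  have hmem : z - M.point ∈ M.direction := L.vsub_mem_direction hz hc
  have hz0 : M.displacement z = 0 := by rw [displacement, M.proj_eq_self hmem, sub_self]
  simpa only [hz0, sub_zero, dist_eq_norm] using M.norm_displacement_sub_le y z

instance : Nonempty (AffinePlane E4) := by
  have hindep := ((EuclideanSpace.basisFun (Fin 4) ℝ).orthonormal.comp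
    (Fin.castLE (by norm_num : 2 ≤ 4)) (Fin.castLE_injective _)).linearIndependent
  exact ⟨0, _, (finrank_span_eq_card hindep).trans (by simp)⟩

namespace IsTamingFunctionWith

variable {R : ℝ} {Z : Set E4} {I : E4 → ℝ → ℝ} {Λ : ℝ} {epsFn : ℝ → ℝ → ℝ → ℝ} {C : ℝ}

lemma le_of_le (hI : IsTamingFunctionWith R Z I Λ epsFn C) {x : E4} (hx : x ∈ Z) {r₁ r₂ : ℝ}
    (h₁ : 0 < r₁) (h₁₂ : r₁ ≤ r₂) (h₂ : r₂ ≤ 128 * R) : I x r₁ ≤ I x r₂ :=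
  hI.2.2.1 x hx r₁ ⟨h₁, h₁₂.trans h₂⟩ r₂ ⟨h₁.trans_le h₁₂, h₂⟩ h₁₂

lemma Dmu2_weightedDirac_le (hI : IsTamingFunctionWith R Z I Λ epsFn C) (hZ : MeasurableSet Z)
    {P : Finset E4} {m : E4 → ℝ} (hm : ∀ p ∈ P, 0 ≤ m p) (hP : ∀ p ∈ P, p ∈ Z) {x : E4} {t : ℝ}
    (hPx : ∀ p ∈ P, p ∈ ball x t) (hx : ‖x‖ ≤ 2 * R) (ht : 0 < t) (htR : t ≤ 2 * R) :
    Dmu2 (weightedDirac P m) x t ≤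
      C / t ^ 2 * ∑ p ∈ P, m p * (I p (32 * t) - I p (2 * t)) := by
  rw [← setIntegral_weightedDirac measurableSet_ball hPx hm]
  exact hI.2.2.2.2.2 _ inferInstance (weightedDirac_compl hZ hP) x
    (by rwa [mem_closedBall, dist_zero_right]) t ⟨ht, htR⟩

lemma exists_affinePlane_sum_le (hI : IsTamingFunctionWith R Z I Λ epsFn C) (hZ : MeasurableSet Z)
    {P : Finset E4} {m : E4 → ℝ} (hm : ∀ p ∈ P, 0 ≤ m p) (hP : ∀ p ∈ P, p ∈ Z) {x : E4} {t : ℝ}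
    (hPx : ∀ p ∈ P, ‖p - x‖ < t) (hx : ‖x‖ ≤ 2 * R) (ht : 0 < t) (htR : t ≤ 2 * R) {η : ℝ}
    (hη : 0 < η) :
    ∃ L : AffinePlane E4, ∑ p ∈ P, m p * ‖L.displacement p‖ ^ 2 ≤
      C * t ^ 2 * ∑ p ∈ P, m p * (I p (32 * t) - I p (2 * t)) + η := by
  have hball : ∀ p ∈ P, p ∈ ball x t := fun p hp => mem_ball_iff_norm.2 (hPx p hp)
  have ht4 := pow_pos ht 4
  have hlt := (hI.Dmu2_weightedDirac_le hZ hm hP hball hx ht htR).trans_lt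
    (lt_add_of_pos_right _ (div_pos hη ht4))
  obtain ⟨L₀⟩ : Nonempty (AffinePlane E4) := inferInstance
  obtain ⟨_, ⟨L, ⟨c, hc⟩, hL, rfl⟩, hs⟩ := exists_lt_of_csInf_lt
    (by exact ⟨_, AffineSubspace.mk' L₀.point L₀.direction, ⟨_, AffineSubspace.self_mem_mk' _ _⟩,
      by rw [AffineSubspace.direction_mk', L₀.finrank_direction], rfl⟩) hlt
  refine ⟨⟨c, L.direction, hL⟩, ?_⟩
  rw [setIntegral_weightedDirac measurableSet_ball hball hm] at hs
  calc _ ≤ ∑ p ∈ P, m p * infDist p (L : Set E4) ^ 2 := Finset.sum_le_sum fun p hp => by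
        have := hm p hp
        grw [AffinePlane.norm_displacement_le_infDist L hc hL p]
    _ = t ^ 4 * (t ^ (-4 : ℤ) * ∑ p ∈ P, m p * infDist p (L : Set E4) ^ 2) := by
        rw [← mul_assoc, zpow_neg, show t ^ (4 : ℤ) = t ^ 4 from zpow_natCast t 4,
          mul_inv_cancel₀ ht4.ne', one_mul]
    _ ≤ t ^ 4 * (C / t ^ 2 * ∑ p ∈ P, m p * (I p (32 * t) - I p (2 * t)) + η / t ^ 4) := by
        gcongr
    _ = _ := by field_simp

end IsTamingFunctionWith

/-! ### Pinched families and crude packing bounds -/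

section PinchedFamily

/-- A finite family of balls `B(p, r p)` in `B(x₀, 2 r₀)`, centred on `Z` and separated, along whose
centres the taming function varies by at most `τ` between the radius and the largest scale. -/
structure IsPinchedFamily (Z : Set E4) (I : E4 → ℝ → ℝ) (τ : ℝ) (x₀ : E4) (r₀ : ℝ)
    (S : Finset E4) (r : E4 → ℝ) : Prop where
  scale_pos : 0 < r₀
  scale_le : r₀ ≤ 1 / 250
  mem : ∀ p ∈ S, p ∈ Z
  norm_sub_lt : ∀ p ∈ S, ‖p - x₀‖ < r₀
  radius_pos : ∀ p ∈ S, 0 < r p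
  radius_le : ∀ p ∈ S, r p ≤ r₀
  radius_le_norm_sub : ∀ p ∈ S, ∀ q ∈ S, p ≠ q → r p ≤ ‖p - q‖
  drop_le : ∀ p ∈ S, I p 256 - I p (r p / 2) ≤ τ

/-- The packing estimate for pinched families whose radii are at least `2⁻ⁿ r₀`. -/
def PackingBound (Z : Set E4) (I : E4 → ℝ → ℝ) (τ K : ℝ) (n : ℕ) : Prop :=
  ∀ (x₀ : E4) (r₀ : ℝ) (S : Finset E4) (r : E4 → ℝ), IsPinchedFamily Z I τ x₀ r₀ S r →
    (∀ p ∈ S, (1 / 2) ^ n * r₀ ≤ r p) → ∑ p ∈ S, r p ^ 2 ≤ K * r₀ ^ 2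

lemma card_le_of_half_separated {S : Finset E4} {x : E4} {R : ℝ} (hR : 0 < R)
    (hS : ∀ p ∈ S, ‖p - x‖ ≤ R) (hsep : ∀ p ∈ S, ∀ q ∈ S, p ≠ q → R / 2 ≤ ‖p - q‖) :
    (S.card : ℝ) ≤ 625 := by
  have hcard := card_mul_pow_finrank_le S x (half_pos hR) hR hS hsep
  rw [finrank_euclideanSpace_fin, show (2 * R + R / 2) ^ 4 = 625 * (R / 2) ^ 4 by ring] at hcard
  exact le_of_mul_le_mul_right hcard (by positivity)

namespace IsPinchedFamily

variable {Z : Set E4} {I : E4 → ℝ → ℝ} {Λ : ℝ} {epsFn : ℝ → ℝ → ℝ → ℝ} {C τ K : ℝ} {n : ℕ}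
  {x₀ : E4} {r₀ : ℝ} {S S' : Finset E4} {r : E4 → ℝ} (h : IsPinchedFamily Z I τ x₀ r₀ S r)

include h

lemma mono (hS : S' ⊆ S) : IsPinchedFamily Z I τ x₀ r₀ S' r where
  scale_pos := h.scale_pos
  scale_le := h.scale_le
  mem p hp := h.mem p (hS hp)
  norm_sub_lt p hp := h.norm_sub_lt p (hS hp)
  radius_pos p hp := h.radius_pos p (hS hp)
  radius_le p hp := h.radius_le p (hS hp)
  radius_le_norm_sub p hp q hq := h.radius_le_norm_sub p (hS hp) q (hS hq)
  drop_le p hp := h.drop_le p (hS hp)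

lemma recenter (hS : S' ⊆ S) {x : E4} {u : ℝ} (hu : 0 < u) (hur : u ≤ r₀)
    (hx : ∀ p ∈ S', ‖p - x‖ < u) (hr : ∀ p ∈ S', r p ≤ u) : IsPinchedFamily Z I τ x u S' r where
  __ := h.mono hS
  scale_pos := hu
  scale_le := hur.trans h.scale_le
  norm_sub_lt := hx
  radius_le := hr

lemma sub_le (hI : IsTamingFunctionWith 2 Z I Λ epsFn C) {p : E4} (hp : p ∈ S) {a b : ℝ}
    (ha : r p / 2 ≤ a) (hab : a ≤ b) (hb : b ≤ 256) : I p b - I p a ≤ τ := by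
  have hr := half_pos (h.radius_pos p hp)
  have := hI.le_of_le (h.mem p hp) hr ha (by linarith)
  have := hI.le_of_le (h.mem p hp) (hr.trans_le (ha.trans hab)) hb (by norm_num)
  linarith [h.drop_le p hp]

lemma enlarge (hI : IsTamingFunctionWith 2 Z I Λ epsFn C) {u : E4 → ℝ} (hS : S' ⊆ S)
    (hru : ∀ p ∈ S', r p ≤ u p) (hur : ∀ p ∈ S', u p ≤ r₀)
    (hsep : ∀ p ∈ S', ∀ q ∈ S', p ≠ q → u p ≤ ‖p - q‖) : IsPinchedFamily Z I τ x₀ r₀ S' u where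
  __ := h.mono hS
  radius_pos p hp := (h.radius_pos p (hS hp)).trans_le (hru p hp)
  radius_le := hur
  radius_le_norm_sub := hsep
  drop_le p hp := h.sub_le hI (hS hp) (by linarith [hru p hp])
    (by linarith [hur p hp, h.scale_le]) le_rfl

lemma sum_sq_le_of_large (hlarge : ∀ p ∈ S, r₀ / 2 ≤ r p) : ∑ p ∈ S, r p ^ 2 ≤ 625 * r₀ ^ 2 := by
  calc ∑ p ∈ S, r p ^ 2 ≤ S.card • r₀ ^ 2 := Finset.sum_le_card_nsmul _ _ _ fun p hp =>
        pow_le_pow_left₀ (h.radius_pos p hp).le (h.radius_le p hp) 2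
    _ ≤ 625 * r₀ ^ 2 := by
        rw [nsmul_eq_mul]
        gcongr
        exact card_le_of_half_separated h.scale_pos (fun p hp => (h.norm_sub_lt p hp).le)
          fun p hp q hq hpq => (hlarge p hp).trans (h.radius_le_norm_sub p hp q hq hpq)

lemma sum_sq_le_of_small (hPB : PackingBound Z I τ K n) (hK : 0 ≤ K)
    (hlow : ∀ p ∈ S, (1 / 2) ^ (n + 1) * r₀ ≤ r p) (hsmall : ∀ p ∈ S, r p ≤ r₀ / 2) :
    ∑ p ∈ S, r p ^ 2 ≤ 625 * (K * (r₀ / 2) ^ 2) := by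
  have hr₀ := half_pos h.scale_pos
  obtain ⟨N, hN⟩ := exists_isGreedyNet_finset (u := fun _ => r₀ / 2) S fun _ _ => hr₀
  calc ∑ p ∈ S, r p ^ 2 ≤ ∑ _q ∈ N, K * (r₀ / 2) ^ 2 :=
        hN.sum_le_sum (fun _ _ => sq_nonneg _) fun q _ => by
          refine hPB q (r₀ / 2) _ r (h.recenter (Finset.filter_subset _ _) hr₀
            (by linarith) (fun p hp => ?_) fun p hp => ?_) fun p hp => ?_ <;>
            rw [Finset.mem_filter] at hp
          · rw [← dist_eq_norm]; exact hp.2.2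
          · exact hsmall p hp.1
          · exact (hlow p hp.1).trans_eq' (by ring)
    _ ≤ 625 * (K * (r₀ / 2) ^ 2) := by
        rw [Finset.sum_const, nsmul_eq_mul]
        gcongr
        exact card_le_of_half_separated h.scale_pos
          (fun p hp => (h.norm_sub_lt p (hN.subset hp)).le)
          fun p hp q hq hpq => (hN.le_dist p hp q hq hpq).trans_eq (dist_eq_norm p q)

lemma sum_sq_le (hPB : PackingBound Z I τ K n) (hK : 1 ≤ K)
    (hlow : ∀ p ∈ S, (1 / 2) ^ (n + 1) * r₀ ≤ r p) : ∑ p ∈ S, r p ^ 2 ≤ 5120 * K * r₀ ^ 2 := by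
  rw [← Finset.sum_filter_add_sum_filter_not S fun p => r₀ / 2 < r p]
  have hlarge := (h.mono (Finset.filter_subset (fun p => r₀ / 2 < r p) S)).sum_sq_le_of_large
    fun p hp => (Finset.mem_filter.1 hp).2.le
  have hsmall := (h.mono (Finset.filter_subset (fun p => ¬ r₀ / 2 < r p) S)).sum_sq_le_of_small hPB
    (by linarith) (fun p hp => hlow p (Finset.mem_filter.1 hp).1)
    fun p hp => not_lt.1 (Finset.mem_filter.1 hp).2
  nlinarith [sq_nonneg r₀]

lemma sum_sq_ball_le (hPB : PackingBound Z I τ K n) (hK : 1 ≤ K)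
    (hlow : ∀ p ∈ S, (1 / 2) ^ (n + 1) * r₀ ≤ r p) {a : E4} (ha : a ∈ S) {u : ℝ} (hu : r a ≤ u) :
    ∑ p ∈ S with ‖p - a‖ < u, r p ^ 2 ≤ 20480 * K * u ^ 2 := by
  have hu0 := (h.radius_pos a ha).trans_le hu
  have hsub : S.filter (fun p => ‖p - a‖ < u) ⊆ S := Finset.filter_subset _ _
  rcases le_or_gt u (r₀ / 2) with hsmall | hlarge
  · have hrad : ∀ p ∈ S.filter (fun p => ‖p - a‖ < u), r p ≤ u := fun p hp => by
      rw [Finset.mem_filter] at hp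
      rcases eq_or_ne p a with rfl | hpa
      · exact hu
      · exact (h.radius_le_norm_sub p hp.1 a ha hpa).trans hp.2.le
    have hbound := hPB a u _ r (h.recenter hsub hu0 (by linarith [h.scale_pos])
      (fun p hp => (Finset.mem_filter.1 hp).2) hrad) fun p hp => by
        have : (1 / 2) ^ n * u ≤ (1 / 2) ^ n * (r₀ / 2) := by gcongr
        exact this.trans ((hlow p (hsub hp)).trans_eq' (by ring))
    have : 0 ≤ K * u ^ 2 := by positivity
    linarith
  · calc _ ≤ 5120 * K * r₀ ^ 2 := (h.mono hsub).sum_sq_le hPB hK fun p hp => hlow p (hsub hp)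
      _ ≤ 5120 * K * (2 * u) ^ 2 := by
          have := h.scale_pos
          gcongr
          linarith
      _ = 20480 * K * u ^ 2 := by ring

end IsPinchedFamily

end PinchedFamily

/-! ### Large balls and balls of low density -/

section LargeAndLight

lemma AffinePlane.sum_sq_le_of_norm_displacement_le {E : Type*} [NormedAddCommGroup E]
    [InnerProductSpace ℝ E] (L : AffinePlane E) {S : Finset E} {r : E → ℝ} {x : E} {R : ℝ}
    (hR : 0 < R) (hx : ∀ p ∈ S, ‖p - x‖ ≤ R) (hr : ∀ p ∈ S, 0 < r p) (hrR : ∀ p ∈ S, r p ≤ R)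
    (hsep : ∀ p ∈ S, ∀ q ∈ S, p ≠ q → r p ≤ ‖p - q‖)
    (hdisp : ∀ p ∈ S, ‖L.displacement p‖ ≤ r p / 10) : ∑ p ∈ S, r p ^ 2 ≤ 64 * R ^ 2 := by
  have hpack := L.sum_sq_le_of_le_norm_proj S id (fun p => r p / 4) x (R := 2 * R) (by positivity)
    (fun p hp => ⟨by linarith [hr p hp], by rw [id]; linarith [hx p hp, hrR p hp]⟩)
    fun p hp q hq hpq => by
      have hnormal : ‖(p - q) - L.proj (p - q)‖ ≤ r p / 10 + r q / 10 := by
        rw [← norm_neg, ← L.displacement_sub]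
        exact (norm_sub_le _ _).trans (add_le_add (hdisp p hp) (hdisp q hq))
      have htri := norm_add_le ((p - q) - L.proj (p - q)) (L.proj (p - q))
      rw [sub_add_cancel] at htri
      simp only [id]
      linarith [hsep p hp q hq hpq, hsep q hq p hp hpq.symm, norm_sub_rev p q, hr p hp, hr q hq]
  simp only [div_pow, ← Finset.sum_div] at hpack
  linarith

namespace IsPinchedFamily

variable {Z : Set E4} {I : E4 → ℝ → ℝ} {Λ : ℝ} {epsFn : ℝ → ℝ → ℝ → ℝ} {C τ K ρ : ℝ} {n : ℕ}
  {x₀ : E4} {r₀ : ℝ} {S N : Finset E4} {r u : E4 → ℝ} (h : IsPinchedFamily Z I τ x₀ r₀ S r)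

include h

lemma exists_affinePlane_sum_le (hI : IsTamingFunctionWith 2 Z I Λ epsFn C) (hZm : MeasurableSet Z)
    (hZ : Z ⊆ ball 0 2) (hτ : 0 < τ) (hmass : ∑ p ∈ S, r p ^ 2 ≤ K * r₀ ^ 2) :
    ∃ L : AffinePlane E4, ∑ p ∈ S, r p ^ 2 * ‖L.displacement p‖ ^ 2 ≤
      C * τ * (4 * K + 1) * r₀ ^ 4 := by
  have hr₀ := h.scale_pos
  have hC : 0 < C := hI.2.2.2.2.1
  rcases S.eq_empty_or_nonempty with rfl | ⟨o, ho⟩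
  · have := nonneg_of_mul_nonneg_left (hmass.trans' (by simp)) (by positivity)
    exact ⟨Classical.arbitrary _, by rw [Finset.sum_empty]; positivity⟩
  have ho2 : ‖o‖ < 2 := mem_ball_zero_iff.1 (hZ (h.mem o ho))
  have hnear : ∀ p ∈ S, ‖p - o‖ < 2 * r₀ := fun p hp => by
    linarith [norm_sub_le_norm_sub_add_norm_sub p x₀ o, norm_sub_rev x₀ o, h.norm_sub_lt p hp,
      h.norm_sub_lt o ho]
  have hscale := h.scale_le
  obtain ⟨L, hL⟩ := hI.exists_affinePlane_sum_le hZm (m := fun p => r p ^ 2)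
    (η := C * τ * r₀ ^ 4) (fun _ _ => sq_nonneg _) h.mem hnear (by linarith) (by linarith)
    (by linarith) (by positivity)
  refine ⟨L, hL.trans ?_⟩
  calc _ ≤ C * (2 * r₀) ^ 2 * ∑ p ∈ S, r p ^ 2 * τ + C * τ * r₀ ^ 4 := by
        gcongr with p hp
        exact h.sub_le hI hp (by linarith [h.radius_le p hp]) (by linarith) (by linarith)
    _ ≤ C * (2 * r₀) ^ 2 * (K * r₀ ^ 2 * τ) + C * τ * r₀ ^ 4 := by
        rw [← Finset.sum_mul]
        gcongr
    _ = _ := by ring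

lemma sum_sq_le_of_ratio_lt (hI : IsTamingFunctionWith 2 Z I Λ epsFn C) (hZm : MeasurableSet Z)
    (hZ : Z ⊆ ball 0 2) (hτ : 0 < τ) (hmass : ∑ p ∈ S, r p ^ 2 ≤ K * r₀ ^ 2) (hρ : 0 < ρ)
    (hlarge : ∀ p ∈ S, ρ * (100 * r₀) ≤ r p) (hτρ : C * τ * (4 * K + 1) ≤ 10 ^ 6 * ρ ^ 4) :
    ∑ p ∈ S, r p ^ 2 ≤ 64 * r₀ ^ 2 := by
  have hr₀ := h.scale_pos
  obtain ⟨L, hL⟩ := h.exists_affinePlane_sum_le hI hZm hZ hτ hmass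
  refine L.sum_sq_le_of_norm_displacement_le hr₀ (fun p hp => (h.norm_sub_lt p hp).le)
    h.radius_pos h.radius_le h.radius_le_norm_sub fun p hp => ?_
  have hprod : (r p * ‖L.displacement p‖) ^ 2 ≤ (1000 * ρ ^ 2 * r₀ ^ 2) ^ 2 :=
    calc (r p * ‖L.displacement p‖) ^ 2 = r p ^ 2 * ‖L.displacement p‖ ^ 2 := mul_pow _ _ _
      _ ≤ C * τ * (4 * K + 1) * r₀ ^ 4 := (Finset.single_le_sum
          (f := fun p => r p ^ 2 * ‖L.displacement p‖ ^ 2) (fun _ _ => by positivity) hp).trans hL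
      _ ≤ 10 ^ 6 * ρ ^ 4 * r₀ ^ 4 := by gcongr
      _ = (1000 * ρ ^ 2 * r₀ ^ 2) ^ 2 := by ring
  refine le_of_mul_le_mul_left ?_ (h.radius_pos p hp)
  calc r p * ‖L.displacement p‖ ≤ 1000 * ρ ^ 2 * r₀ ^ 2 :=
        (abs_le_of_sq_le_sq' hprod (by positivity)).2
    _ = (ρ * (100 * r₀)) * (ρ * (100 * r₀)) / 10 := by ring
    _ ≤ r p * (r p / 10) := by
        rw [← mul_div_assoc]
        have := mul_self_le_mul_self (by positivity) (hlarge p hp)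
        gcongr

/- A net with one scale above `2 r₀` has a single point; otherwise the balls of radius `u` form a
pinched family themselves. -/
lemma sum_net_sq_le (hI : IsTamingFunctionWith 2 Z I Λ epsFn C) (hPB : PackingBound Z I τ K n)
    (hK : 1 ≤ K) (hlow : ∀ p ∈ S, (1 / 2) ^ (n + 1) * r₀ ≤ r p)
    (hN : N ⊆ S) (hsep : ∀ p ∈ N, ∀ q ∈ N, p ≠ q → u p ≤ ‖p - q‖) (hru : ∀ p ∈ N, r p ≤ u p)
    (hu : ∀ p ∈ N, u p ≤ 100 * r₀) (hgap : ∀ p ∈ N, 2 * r₀ ≤ u p ∨ u p ≤ r₀) :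
    ∑ p ∈ N, u p ^ 2 ≤ 10000 * K * r₀ ^ 2 := by
  have hr₀ := h.scale_pos
  have hK0 : 0 ≤ K * r₀ ^ 2 := by positivity
  by_cases hbig : ∃ q ∈ N, 2 * r₀ ≤ u q
  · obtain ⟨q, hq, hqu⟩ := hbig
    have hsingle : N = {q} := Finset.eq_singleton_iff_unique_mem.2 ⟨hq, fun p hp => by
      by_contra hpq
      linarith [hsep q hq p hp (Ne.symm hpq), norm_sub_le_norm_sub_add_norm_sub q x₀ p,
        h.norm_sub_lt q (hN hq), h.norm_sub_lt p (hN hp), norm_sub_rev x₀ p]⟩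
    rw [hsingle, Finset.sum_singleton]
    calc u q ^ 2 ≤ (100 * r₀) ^ 2 := pow_le_pow_left₀ (by linarith) (hu q hq) 2
      _ = 10000 * 1 * r₀ ^ 2 := by ring
      _ ≤ 10000 * K * r₀ ^ 2 := by gcongr
  · push Not at hbig
    have hur : ∀ p ∈ N, u p ≤ r₀ := fun p hp => (hgap p hp).resolve_left (not_le.2 (hbig p hp))
    have := (h.enlarge hI hN hru hur hsep).sum_sq_le hPB hK
      fun p hp => (hlow p (hN hp)).trans (hru p hp)
    linarith

omit h in
/-- The balls of a pinched family, examined at the scales `100 r₀ / 16 ^ k`. -/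
def separatedBalls (h : IsPinchedFamily Z I τ x₀ r₀ S r) (hρ : 0 < ρ) (hρ1 : ρ ≤ 1) :
    SeparatedBalls E4 where
  centers := S
  radius := r
  top := 100 * r₀
  ratio := ρ
  top_pos := mul_pos (by norm_num) h.scale_pos
  ratio_pos := hρ
  ratio_le_one := hρ1
  radius_pos := h.radius_pos
  radius_le_norm_sub := h.radius_le_norm_sub

lemma scale_gap (hρ : 0 < ρ) (hρ1 : ρ ≤ 1) (k : ℕ) :
    2 * r₀ ≤ (h.separatedBalls hρ hρ1).scale k ∨ (h.separatedBalls hρ hρ1).scale k ≤ r₀ := by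
  have hr₀ := h.scale_pos
  have h0 : (h.separatedBalls hρ hρ1).scale 0 = 100 * r₀ := SeparatedBalls.scale_zero _
  rcases k with _ | _ | k
  · left; linarith
  · left; rw [SeparatedBalls.scale_succ]; linarith
  · right
    refine (SeparatedBalls.scale_antitone (Nat.le_add_left 2 k)).trans ?_
    rw [SeparatedBalls.scale_succ, SeparatedBalls.scale_succ]
    linarith

/- Cover the light balls by a net of balls in which the family has low density, and bound the net by
the a priori packing estimate. -/
lemma sum_sq_le_of_light (hI : IsTamingFunctionWith 2 Z I Λ epsFn C)
    (hPB : PackingBound Z I τ K n) (hK : 1 ≤ K) (hlow : ∀ p ∈ S, (1 / 2) ^ (n + 1) * r₀ ≤ r p)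
    (hρ : 0 < ρ) (hρ1 : ρ ≤ 1) {P : SeparatedBalls E4} (hP : P = h.separatedBalls hρ hρ1)
    {S' : Finset E4} (hlight : ∀ p ∈ S', ∃ k, p ∈ P.active k ∧
      ∑ q ∈ P.active k with ‖q - p‖ < P.scale k, r q ^ 2 ≤ 1 / 40000 * P.scale k ^ 2) :
    ∑ p ∈ S', r p ^ 2 ≤ K / 4 * r₀ ^ 2 := by
  choose! k hactive hdensity using hlight
  obtain ⟨N, hN⟩ := exists_isGreedyNet_finset (u := fun p => P.scale (k p)) S'
    fun p _ => P.scale_pos _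
  subst hP
  set P := h.separatedBalls hρ hρ1
  have hS' : S' ⊆ S := fun p hp => P.active_subset (k p) (hactive p hp)
  have hcover : ∑ p ∈ S', r p ^ 2 ≤ ∑ q ∈ N, 1 / 40000 * P.scale (k q) ^ 2 := by
    refine hN.sum_le_sum (fun _ _ => sq_nonneg _) fun q hq => (hdensity q (hN.subset hq)).trans' ?_
    refine Finset.sum_le_sum_of_subset_of_nonneg (fun p hp => ?_) fun _ _ _ => sq_nonneg _
    obtain ⟨hp, hscale, hdist⟩ := Finset.mem_filter.1 hp
    refine Finset.mem_filter.2 ⟨SeparatedBalls.mem_active.2 ⟨hS' hp, ?_⟩, ?_⟩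
    · exact (SeparatedBalls.mem_active.1 (hactive p hp)).2.trans
        (mul_le_mul_of_nonneg_left hscale hρ.le)
    · rwa [← dist_eq_norm]
  have hnet := h.sum_net_sq_le hI hPB hK hlow (hN.subset.trans hS')
    (fun p hp q hq hpq => (hN.le_dist p hp q hq hpq).trans_eq (dist_eq_norm p q))
    (fun p hp => (SeparatedBalls.mem_active.1 (hactive p (hN.subset hp))).2.trans
      (mul_le_of_le_one_left (P.scale_pos _).le hρ1))
    (fun p _ => (SeparatedBalls.scale_antitone (Nat.zero_le _)).trans_eq P.scale_zero)
    fun p _ => h.scale_gap hρ hρ1 (k p)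
  rw [← Finset.mul_sum] at hcover
  linarith

end IsPinchedFamily

end LargeAndLight

/-! ### Errors of the best fitting planes -/

lemma sum_indicator_sub_le {α : Type*} {F : ℕ → ℝ} {A : ℕ → Set α} (hA : Antitone A) {q : α} {B : ℝ}
    (hF : ∀ k, q ∈ A k → B ≤ F (k + 1)) (h0 : B ≤ F 0) (n : ℕ) :
    ∑ k ∈ Finset.range n, (A k).indicator (fun _ => F k - F (k + 1)) q ≤ F 0 - B := by
  induction n generalizing F A with
  | zero => simpa using h0
  | succ n ih =>
    by_cases hq : q ∈ A 0
    · rw [Finset.sum_range_succ', Set.indicator_of_mem hq]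
      linarith [ih (F := fun k => F (k + 1)) (A := fun k => A (k + 1))
        (fun i j hij => hA (by omega)) (fun k => hF (k + 1)) (hF 0 hq)]
    · rw [Finset.sum_eq_zero fun k _ => Set.indicator_of_notMem (fun h => hq (hA k.zero_le h)) _]
      linarith

namespace SeparatedBalls

variable {R : ℝ} {Z : Set E4} {I : E4 → ℝ → ℝ} {Λ : ℝ} {epsFn : ℝ → ℝ → ℝ → ℝ} {C η τ K : ℝ}
  {P : SeparatedBalls E4} {k : ℕ} {a q : E4}

/-- The variation of the taming function between the radii `20 * scale k` and `320 * scale k`. -/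
def scaleDrop (I : E4 → ℝ → ℝ) (P : SeparatedBalls E4) (k : ℕ) (q : E4) : ℝ :=
  I q (320 * P.scale k) - I q (20 * P.scale k)

/-- A bound for the mean square distance of the active balls near `a` from their best planes at the
`k`-th scale, as supplied by the Reifenberg condition with constant `C`; the summand `η` absorbs the
failure of the infimum over planes to be attained. -/
def fitError (I : E4 → ℝ → ℝ) (P : SeparatedBalls E4) (C η : ℝ) (k : ℕ) : E4 → ℝ :=
  (P.active k : Set E4).indicator fun a => 100 * C / P.scale k ^ 2 *
    ∑ q ∈ P.active k with ‖q - a‖ < 20 * P.scale k, P.radius q ^ 2 * scaleDrop I P k q + η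

lemma scale_le_top (k : ℕ) : P.scale k ≤ P.top :=
  (scale_antitone k.zero_le).trans_eq P.scale_zero

lemma radius_le_scale (hq : q ∈ P.active k) : P.radius q ≤ P.scale k :=
  (mem_active.1 hq).2.trans (mul_le_of_le_one_left (P.scale_pos k).le P.ratio_le_one)

lemma sum_mul_indicator_active (P : SeparatedBalls E4) (k : ℕ) (m f : E4 → ℝ) :
    ∑ a ∈ P.centers, m a * (P.active k : Set E4).indicator f a = ∑ a ∈ P.active k, m a * f a := by
  simp only [← Set.indicator_mul_right]
  exact Finset.sum_indicator_subset _ (P.active_subset k)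

section Taming

variable (hI : IsTamingFunctionWith R Z I Λ epsFn C) (htop : 5 * P.top ≤ R)
  (hPZ : ∀ p ∈ P.centers, p ∈ Z)

include hI htop hPZ

lemma scaleDrop_nonneg (hq : q ∈ P.active k) : 0 ≤ scaleDrop I P k q := by
  have := P.scale_pos k
  have := P.scale_le_top k
  exact sub_nonneg.2 (hI.le_of_le (hPZ q (P.active_subset k hq)) (by positivity) (by linarith)
    (by linarith))

lemma sum_scaleDrop_le (hq : q ∈ P.centers) (hqtop : P.radius q ≤ P.top)
    (hdrop : I q (128 * R) - I q (P.radius q / 2) ≤ τ) (n : ℕ) :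
    ∑ k ∈ Finset.range n, (P.active k : Set E4).indicator (scaleDrop I P k) q ≤ τ := by
  have hq0 := half_pos (P.radius_pos q hq)
  have htop0 := P.top_pos
  have hstep : ∀ k, 320 * P.scale (k + 1) = 20 * P.scale k := fun k => by rw [scale_succ]; ring
  have hF : ∀ k, q ∈ P.active k → I q (P.radius q / 2) ≤ I q (320 * P.scale (k + 1)) := by
    intro k hk
    have := P.radius_le_scale hk
    rw [hstep]
    exact hI.le_of_le (hPZ q hq) hq0 (by linarith) (by linarith [P.scale_le_top k])
  have htele := sum_indicator_sub_le (F := fun k => I q (320 * P.scale k))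
    (A := fun k => (P.active k : Set E4)) (fun _ _ h => Finset.coe_subset.2 (active_antitone h)) hF
    (hI.le_of_le (hPZ q hq) hq0 (by rw [scale_zero]; linarith) (by rw [scale_zero]; linarith)) n
  have hmax : I q (320 * P.scale 0) ≤ I q (128 * R) := by
    rw [scale_zero]
    exact hI.le_of_le (hPZ q hq) (by positivity) (by linarith) le_rfl
  simp only [hstep] at htele
  exact htele.trans (by linarith)

lemma exists_affinePlane_sum_active_le (hZm : MeasurableSet Z) (hZ : Z ⊆ ball 0 R) (hη : 0 < η)
    (k : ℕ) (hq : q ∈ P.centers) :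
    ∃ L : AffinePlane E4, ∑ p ∈ P.active k with ‖p - q‖ < 10 * P.scale k,
      P.radius p ^ 2 * ‖L.displacement p‖ ^ 2 ≤
        100 * C * P.scale k ^ 2 * ∑ p ∈ P.active k with ‖p - q‖ < 10 * P.scale k,
          P.radius p ^ 2 * scaleDrop I P k p + η * P.scale k ^ 4 := by
  have hs := P.scale_pos k
  have hqR : ‖q‖ < R := mem_ball_zero_iff.1 (hZ (hPZ q hq))
  obtain ⟨L, hL⟩ := hI.exists_affinePlane_sum_le hZm (m := fun p => P.radius p ^ 2)
    (P := (P.active k).filter fun p => ‖p - q‖ < 10 * P.scale k) (t := 10 * P.scale k) (x := q)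
    (η := η * P.scale k ^ 4) (fun _ _ => sq_nonneg _)
    (fun p hp => hPZ p (P.active_subset k (Finset.mem_filter.1 hp).1))
    (fun p hp => (Finset.mem_filter.1 hp).2) (by linarith [norm_nonneg q]) (by positivity)
    (by linarith [P.scale_le_top k]) (by positivity)
  refine ⟨L, hL.trans_eq ?_⟩
  simp only [scaleDrop]
  ring_nf

lemma fitError_nonneg (hη : 0 ≤ η) (k : ℕ) (a : E4) : 0 ≤ fitError I P C η k a := by
  have hC : 0 < C := hI.2.2.2.2.1
  refine Set.indicator_nonneg (fun a _ => add_nonneg (mul_nonneg (by positivity) ?_) hη) a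
  exact Finset.sum_nonneg fun q hq =>
    mul_nonneg (sq_nonneg _) (scaleDrop_nonneg hI htop hPZ (Finset.mem_filter.1 hq).1)

lemma le_fitError (ha : a ∈ P.active k) : η ≤ fitError I P C η k a := by
  have hC : 0 < C := hI.2.2.2.2.1
  rw [fitError, Set.indicator_of_mem (Finset.mem_coe.2 ha)]
  refine le_add_of_nonneg_left (mul_nonneg (by positivity) ?_)
  exact Finset.sum_nonneg fun q hq =>
    mul_nonneg (sq_nonneg _) (scaleDrop_nonneg hI htop hPZ (Finset.mem_filter.1 hq).1)

lemma exists_affinePlane_sum_le_fitError (hZm : MeasurableSet Z) (hZ : Z ⊆ ball 0 R) (hη : 0 < η)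
    (k : ℕ) (hq : q ∈ P.active k) :
    ∃ L : AffinePlane E4, ∀ a ∈ P.active k, ‖q - a‖ < 8 * P.scale k →
      ∑ p ∈ P.active k with ‖p - q‖ < 10 * P.scale k, P.radius p ^ 2 * ‖L.displacement p‖ ^ 2 ≤
        fitError I P C η k a * P.scale k ^ 4 := by
  have hC : 0 < C := hI.2.2.2.2.1
  have hs := P.scale_pos k
  obtain ⟨L, hL⟩ := exists_affinePlane_sum_active_le hI htop hPZ hZm hZ hη k (P.active_subset k hq)
  refine ⟨L, fun a ha hqa => hL.trans ?_⟩
  rw [fitError, Set.indicator_of_mem (Finset.mem_coe.2 ha)]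
  calc _ ≤ 100 * C * P.scale k ^ 2 * ∑ p ∈ P.active k with ‖p - a‖ < 20 * P.scale k,
          P.radius p ^ 2 * scaleDrop I P k p + η * P.scale k ^ 4 := by
        gcongr 100 * C * P.scale k ^ 2 * ?_ + η * P.scale k ^ 4
        exact sum_filter_le_sum_filter subset_rfl
          (fun p hp => mul_nonneg (sq_nonneg _) (scaleDrop_nonneg hI htop hPZ hp))
          fun p _ hp => by linarith [norm_sub_le_norm_sub_add_norm_sub p q a]
    _ = _ := by field_simp

/- Interchange the two sums over neighbouring points: the mass near each `q` is at most
`K * (20 * scale k) ^ 2`. -/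
lemma sum_radius_sq_mul_fitError_le (hη : 0 ≤ η)
    (hupper : ∀ a ∈ P.centers, ∀ u, P.radius a ≤ u →
      ∑ q ∈ P.centers with ‖q - a‖ < u, P.radius q ^ 2 ≤ K * u ^ 2) (k : ℕ) :
    ∑ a ∈ P.centers, P.radius a ^ 2 * fitError I P C η k a ≤
      40000 * C * K * ∑ q ∈ P.centers,
          P.radius q ^ 2 * (P.active k : Set E4).indicator (scaleDrop I P k) q +
        η * ∑ a ∈ P.centers, P.radius a ^ 2 := by
  have hC : 0 < C := hI.2.2.2.2.1
  have hs := P.scale_pos k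
  have hmass : ∀ q ∈ P.active k,
      ∑ a ∈ P.active k with ‖a - q‖ < 20 * P.scale k, P.radius a ^ 2 ≤ 400 * K * P.scale k ^ 2 :=
    fun q hq => calc _ ≤ ∑ a ∈ P.centers with ‖a - q‖ < 20 * P.scale k, P.radius a ^ 2 :=
          sum_filter_le_sum_filter (P.active_subset k) (fun _ _ => sq_nonneg _) fun _ _ h => h
      _ ≤ K * (20 * P.scale k) ^ 2 :=
          hupper q (P.active_subset k hq) _ (by linarith [P.radius_le_scale hq])
      _ = _ := by ring
  have hswap : ∑ a ∈ P.active k, P.radius a ^ 2 *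
        ∑ q ∈ P.active k with ‖q - a‖ < 20 * P.scale k, P.radius q ^ 2 * scaleDrop I P k q =
      ∑ q ∈ P.active k, P.radius q ^ 2 * scaleDrop I P k q *
        ∑ a ∈ P.active k with ‖a - q‖ < 20 * P.scale k, P.radius a ^ 2 := by
    simp only [Finset.mul_sum, Finset.sum_filter]
    rw [Finset.sum_comm]
    refine Finset.sum_congr rfl fun q _ => Finset.sum_congr rfl fun a _ => ?_
    rw [norm_sub_rev q a]
    split_ifs <;> ring
  simp only [fitError, sum_mul_indicator_active]
  calc _ = 100 * C / P.scale k ^ 2 * ∑ q ∈ P.active k, P.radius q ^ 2 * scaleDrop I P k q *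
            ∑ a ∈ P.active k with ‖a - q‖ < 20 * P.scale k, P.radius a ^ 2 +
          η * ∑ a ∈ P.active k, P.radius a ^ 2 := by
        rw [← hswap, Finset.mul_sum, Finset.mul_sum, ← Finset.sum_add_distrib]
        exact Finset.sum_congr rfl fun a _ => by ring
    _ ≤ 100 * C / P.scale k ^ 2 * ∑ q ∈ P.active k, P.radius q ^ 2 * scaleDrop I P k q *
            (400 * K * P.scale k ^ 2) + η * ∑ a ∈ P.centers, P.radius a ^ 2 := by
        gcongr with q hq
        · exact mul_nonneg (sq_nonneg _) (scaleDrop_nonneg hI htop hPZ hq)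
        · exact hmass q hq
        · exact P.active_subset k
    _ = _ := by
        rw [← Finset.sum_mul]
        field_simp
        ring

lemma sum_radius_sq_mul_sum_fitError_le (hK : 0 ≤ K) (hη : 0 ≤ η)
    (hPtop : ∀ p ∈ P.centers, P.radius p ≤ P.top)
    (hdrop : ∀ p ∈ P.centers, I p (128 * R) - I p (P.radius p / 2) ≤ τ)
    (hupper : ∀ a ∈ P.centers, ∀ u, P.radius a ≤ u →
      ∑ q ∈ P.centers with ‖q - a‖ < u, P.radius q ^ 2 ≤ K * u ^ 2) (n : ℕ) :
    ∑ a ∈ P.centers, P.radius a ^ 2 * ∑ k ∈ Finset.range n, fitError I P C η k a ≤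
      (40000 * C * K * τ + n * η) * ∑ a ∈ P.centers, P.radius a ^ 2 := by
  have hC : 0 < C := hI.2.2.2.2.1
  calc _ = ∑ k ∈ Finset.range n, ∑ a ∈ P.centers, P.radius a ^ 2 * fitError I P C η k a := by
        simp only [Finset.mul_sum]
        exact Finset.sum_comm
    _ ≤ ∑ k ∈ Finset.range n, (40000 * C * K * ∑ q ∈ P.centers,
          P.radius q ^ 2 * (P.active k : Set E4).indicator (scaleDrop I P k) q +
            η * ∑ a ∈ P.centers, P.radius a ^ 2) :=
        Finset.sum_le_sum fun k _ => sum_radius_sq_mul_fitError_le hI htop hPZ hη hupper k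
    _ = 40000 * C * K * ∑ q ∈ P.centers, P.radius q ^ 2 *
          ∑ k ∈ Finset.range n, (P.active k : Set E4).indicator (scaleDrop I P k) q +
            n * η * ∑ a ∈ P.centers, P.radius a ^ 2 := by
        rw [Finset.sum_add_distrib, ← Finset.mul_sum, Finset.sum_comm, Finset.sum_const,
          Finset.card_range, nsmul_eq_mul, ← mul_assoc (n : ℝ)]
        simp only [Finset.mul_sum]
    _ ≤ 40000 * C * K * ∑ q ∈ P.centers, P.radius q ^ 2 * τ +
          n * η * ∑ a ∈ P.centers, P.radius a ^ 2 := by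
        gcongr with q hq
        exact sum_scaleDrop_le hI htop hPZ hq (hPtop q hq) (hdrop q hq) n
    _ = _ := by rw [← Finset.sum_mul]; ring

end Taming

lemma sum_fitError_le {N : ℕ} (hN : ∀ k ≥ N, P.active k = ∅)
    (hnonneg : ∀ k, 0 ≤ fitError I P C η k a) (n : ℕ) :
    ∑ k ∈ Finset.range n, fitError I P C η k a ≤ ∑ k ∈ Finset.range N, fitError I P C η k a := by
  have hzero : ∀ k ∉ Finset.range N, fitError I P C η k a = 0 := fun k hk => by
    rw [fitError, hN k (by simpa using hk), Finset.coe_empty, Set.indicator_empty]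
  have hsum : HasSum (fun k => fitError I P C η k a) _ := hasSum_sum_of_ne_finset_zero hzero
  exact sum_le_hasSum _ (fun k _ => hnonneg k) hsum

end SeparatedBalls

/-! ### The packing estimate -/

section Packing

namespace SeparatedBalls

/-- `s` bounds the total squared fitting error that still forces a family with lower density `c`,
upper density `K` and ratio `ρ` to satisfy the packing estimate. -/
def IsFitThreshold (E : Type*) [NormedAddCommGroup E] [InnerProductSpace ℝ E] (c K ρ s : ℝ) :
    Prop :=
  ∀ (P : SeparatedBalls E) (G : Finset E) (L : ℕ → E → AffinePlane E) (η : ℕ → E → ℝ) (x : E),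
    P.ratio = ρ → P.IsFittedOn G L η c K s → (∀ a ∈ G, ‖a - x‖ ≤ P.top / 100) →
      ∑ a ∈ G, P.radius a ^ 2 ≤ 1024 * P.top ^ 2

lemma exists_isFitThreshold (E : Type*) [NormedAddCommGroup E] [InnerProductSpace ℝ E] {c K ρ : ℝ}
    (hc : 0 < c) (hK : 0 ≤ K) (hρ : 0 < ρ) (hKρ : 9 * (25 * K) * ρ < c / 2) :
    ∃ s > 0, IsFitThreshold E c K ρ s := by
  set κ := ρ ^ 2 / (100000 * (1 + 2 * (64 * K / c)))
  set M := 1 + 8 / c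
  have hM : 1 ≤ M := le_add_of_nonneg_right (by positivity)
  refine ⟨κ ^ 2 / ((1400 / ρ ^ 2 * M) ^ 2 * 131074), by positivity, ?_⟩
  rintro P G L η x rfl hfit hx
  have hMc : 8 ≤ M ^ 2 * c := by
    calc 8 ≤ M * c := by
          rw [add_mul, div_mul_cancel₀ _ hc.ne']
          linarith
      _ ≤ M ^ 2 * c := by gcongr; exact le_self_pow₀ hM two_ne_zero
  refine (hfit.isFlatOn hM hMc hKρ (κ := κ) (by positivity) ?_ ?_).sum_radius_sq_le hx
  · rw [div_mul_cancel₀ _ (by positivity)]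
  · rw [← mul_assoc, mul_div_cancel₀ _ (by positivity)]

variable {R : ℝ} {Z : Set E4} {I : E4 → ℝ → ℝ} {Λ : ℝ} {epsFn : ℝ → ℝ → ℝ → ℝ} {C η τ c K s : ℝ}
  {P : SeparatedBalls E4} {G : Finset E4} (hI : IsTamingFunctionWith R Z I Λ epsFn C)
  (htop : 5 * P.top ≤ R) (hPZ : ∀ p ∈ P.centers, p ∈ Z)

include hI htop hPZ

lemma exists_isFittedOn (hZm : MeasurableSet Z) (hZ : Z ⊆ ball 0 R) (hη : 0 < η) (hc : 0 < c)
    (hK : 0 ≤ K)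
    (hupper : ∀ a ∈ P.centers, ∀ u, P.radius a ≤ u →
      ∑ q ∈ P.centers with ‖q - a‖ < u, P.radius q ^ 2 ≤ K * u ^ 2)
    (hG : G ⊆ P.active 0)
    (hlower : ∀ a ∈ G, ∀ k, a ∈ P.active k →
      c * P.scale k ^ 2 ≤ ∑ q ∈ P.active k with ‖q - a‖ < P.scale k, P.radius q ^ 2)
    (hs : ∀ a ∈ G, ∀ n, ∑ k ∈ Finset.range n, fitError I P C η k a ≤ s) :
    ∃ L, P.IsFittedOn G L (fun k a => √(fitError I P C η k a)) c K s := by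
  choose! L hL using fun k q => exists_affinePlane_sum_le_fitError hI htop hPZ hZm hZ hη k (q := q)
  have hsqrt : ∀ k a, √(fitError I P C η k a) ^ 2 = fitError I P C η k a := fun k a =>
    Real.sq_sqrt (fitError_nonneg hI htop hPZ hη.le k a)
  exact ⟨L, {
    c_pos := hc
    K_nonneg := hK
    subset := hG
    nonneg := fun _ _ _ => Real.sqrt_nonneg _
    pos := fun a _ k hak => Real.sqrt_pos.2 (hη.trans_le (le_fitError hI htop hPZ hak))
    sum_sq_le := fun a ha n => by simpa only [hsqrt] using hs a ha n
    lower := hlower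
    upper := hupper
    sum_displacement_le := fun a _ k hak q hq hqa => by
      simpa only [hsqrt] using hL k q hq a hak hqa }⟩

lemma mul_sum_filter_lt_sum_fitError_le (hK : 0 ≤ K) (hη : 0 ≤ η)
    (hPtop : ∀ p ∈ P.centers, P.radius p ≤ P.top)
    (hdrop : ∀ p ∈ P.centers, I p (128 * R) - I p (P.radius p / 2) ≤ τ)
    (hupper : ∀ a ∈ P.centers, ∀ u, P.radius a ≤ u →
      ∑ q ∈ P.centers with ‖q - a‖ < u, P.radius q ^ 2 ≤ K * u ^ 2)
    (hG : G ⊆ P.centers) (N : ℕ) :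
    s * ∑ a ∈ G with s < ∑ k ∈ Finset.range N, fitError I P C η k a, P.radius a ^ 2 ≤
      (40000 * C * K * τ + N * η) * ∑ a ∈ P.centers, P.radius a ^ 2 := by
  refine le_trans ?_
    (sum_radius_sq_mul_sum_fitError_le hI htop hPZ hK hη hPtop hdrop hupper N)
  rw [Finset.mul_sum]
  refine (Finset.sum_le_sum fun a ha => ?_).trans (Finset.sum_le_sum_of_subset_of_nonneg
    ((Finset.filter_subset _ _).trans hG) fun a _ _ => mul_nonneg (sq_nonneg _)
      (Finset.sum_nonneg fun k _ => fitError_nonneg hI htop hPZ hη k a))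
  rw [mul_comm]
  gcongr
  exact (Finset.mem_filter.1 ha).2.le

/- By Chebyshev's inequality the points whose total fitting error exceeds the threshold carry little
mass; the others satisfy the packing estimate for fitted families. -/
lemma sum_radius_sq_le_of_dense (hZm : MeasurableSet Z) (hZ : Z ⊆ ball 0 R) (hc : 0 < c)
    (hK : 0 ≤ K) (hs0 : 0 < s) (hs : IsFitThreshold E4 c K P.ratio s) (hτ : 0 < τ)
    (hτs : (40000 * C * K + 1) * τ * ∑ p ∈ P.centers, P.radius p ^ 2 ≤ s * P.top ^ 2)
    (hPtop : ∀ p ∈ P.centers, P.radius p ≤ P.top)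
    (hdrop : ∀ p ∈ P.centers, I p (128 * R) - I p (P.radius p / 2) ≤ τ)
    (hupper : ∀ a ∈ P.centers, ∀ u, P.radius a ≤ u →
      ∑ q ∈ P.centers with ‖q - a‖ < u, P.radius q ^ 2 ≤ K * u ^ 2)
    (hG : G ⊆ P.active 0) {x : E4} (hx : ∀ a ∈ G, ‖a - x‖ ≤ P.top / 100)
    (hlower : ∀ a ∈ G, ∀ k, a ∈ P.active k →
      c * P.scale k ^ 2 ≤ ∑ q ∈ P.active k with ‖q - a‖ < P.scale k, P.radius q ^ 2) :
    ∑ a ∈ G, P.radius a ^ 2 ≤ 1025 * P.top ^ 2 := by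
  obtain ⟨N, hN⟩ := P.exists_active_eq_empty
  set η := τ / (N + 1)
  have hη : 0 < η := by positivity
  have hNη : N * η ≤ τ := by
    rw [mul_div_assoc', div_le_iff₀ (by positivity)]
    linarith
  set T : E4 → ℝ := fun a => ∑ k ∈ Finset.range N, fitError I P C η k a
  have hnonneg := fitError_nonneg hI htop hPZ hη.le
  have hgood : ∑ a ∈ G with ¬ s < T a, P.radius a ^ 2 ≤ 1024 * P.top ^ 2 := by
    have hsub : G.filter (fun a => ¬ s < T a) ⊆ G := Finset.filter_subset _ _
    obtain ⟨L, hL⟩ := exists_isFittedOn hI htop hPZ hZm hZ hη hc hK hupper (hsub.trans hG)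
      (fun a ha => hlower a (hsub ha)) fun a ha n =>
        (sum_fitError_le hN (fun k => hnonneg k a) n).trans (not_lt.1 (Finset.mem_filter.1 ha).2)
    exact hs P _ L _ x rfl hL fun a ha => hx a (hsub ha)
  have hbad : ∑ a ∈ G with s < T a, P.radius a ^ 2 ≤ P.top ^ 2 := by
    refine le_of_mul_le_mul_left ?_ hs0
    calc _ ≤ (40000 * C * K * τ + N * η) * ∑ a ∈ P.centers, P.radius a ^ 2 :=
          mul_sum_filter_lt_sum_fitError_le hI htop hPZ hK hη.le hPtop hdrop hupper
            (hG.trans (P.active_subset 0)) N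
      _ ≤ (40000 * C * K + 1) * τ * ∑ a ∈ P.centers, P.radius a ^ 2 := by
          gcongr
          linarith
      _ ≤ s * P.top ^ 2 := hτs
  rw [← Finset.sum_filter_add_sum_filter_not G fun a => s < T a]
  linarith

end SeparatedBalls

variable {Z : Set E4} {I : E4 → ℝ → ℝ} {Λ : ℝ} {epsFn : ℝ → ℝ → ℝ → ℝ} {C τ K ρ s : ℝ} {n : ℕ}

lemma packingBound_zero (hK : 625 ≤ K) : PackingBound Z I τ K 0 := fun x₀ r₀ S r h hlow =>
  have hr₀ := h.scale_pos
  calc _ ≤ 625 * r₀ ^ 2 :=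
        h.sum_sq_le_of_large fun p hp => by linarith [hlow p hp, pow_zero (1 / 2 : ℝ)]
    _ ≤ K * r₀ ^ 2 := by gcongr

lemma IsPinchedFamily.sum_sq_le_of_dense {x₀ : E4} {r₀ : ℝ} {S G : Finset E4} {r : E4 → ℝ}
    (h : IsPinchedFamily Z I τ x₀ r₀ S r) (hI : IsTamingFunctionWith 2 Z I Λ epsFn C)
    (hZm : MeasurableSet Z) (hZ : Z ⊆ ball 0 2) (hPB : PackingBound Z I τ K n) (hK : 1 ≤ K)
    (hlow : ∀ p ∈ S, (1 / 2) ^ (n + 1) * r₀ ≤ r p) (hρ : 0 < ρ) (hρ1 : ρ ≤ 1) (hs0 : 0 < s)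
    (hs : SeparatedBalls.IsFitThreshold E4 (1 / 40000) (20480 * K) ρ s) (hτ : 0 < τ)
    (hτs : (40000 * C * (20480 * K) + 1) * τ * (20480 * K) ≤ s)
    {P : SeparatedBalls E4} (hP : P = h.separatedBalls hρ hρ1) (hG : G ⊆ P.active 0)
    (hlower : ∀ a ∈ G, ∀ k, a ∈ P.active k →
      1 / 40000 * P.scale k ^ 2 ≤ ∑ q ∈ P.active k with ‖q - a‖ < P.scale k, r q ^ 2) :
    ∑ p ∈ G, r p ^ 2 ≤ 1025 * (100 * r₀) ^ 2 := by
  have hr₀ := h.scale_pos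
  have hscale := h.scale_le
  have hC : 0 < C := hI.2.2.2.2.1
  have hGS : G ⊆ S := hG.trans ((P.active_subset 0).trans_eq (by rw [hP]; rfl))
  have hτtop : (40000 * C * (20480 * K) + 1) * τ * ∑ p ∈ S, r p ^ 2 ≤ s * (100 * r₀) ^ 2 :=
    calc _ ≤ (40000 * C * (20480 * K) + 1) * τ * (5120 * K * r₀ ^ 2) := by
          gcongr
          exact h.sum_sq_le hPB hK hlow
      _ ≤ (40000 * C * (20480 * K) + 1) * τ * (20480 * K * r₀ ^ 2) := by gcongr; norm_num
      _ = (40000 * C * (20480 * K) + 1) * τ * (20480 * K) * r₀ ^ 2 := by ring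
      _ ≤ s * (100 * r₀) ^ 2 := by gcongr; linarith
  subst hP
  refine SeparatedBalls.sum_radius_sq_le_of_dense (P := h.separatedBalls hρ hρ1) hI
    (by simp only [separatedBalls]; linarith) h.mem hZm hZ (by norm_num) (by linarith) hs0 hs hτ
    hτtop (fun p hp => (h.radius_le p hp).trans (by simp only [separatedBalls]; linarith))
    (fun p hp => (h.drop_le p hp).trans_eq' (by norm_num; rfl))
    (fun a ha u hu => h.sum_sq_ball_le hPB hK hlow ha hu) hG (x := x₀) (fun a ha => ?_) hlower
  have := h.norm_sub_lt a (hGS ha)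
  simp only [separatedBalls]
  linarith

lemma PackingBound.succ (hPB : PackingBound Z I τ K n) (hI : IsTamingFunctionWith 2 Z I Λ epsFn C)
    (hZm : MeasurableSet Z) (hZ : Z ⊆ ball 0 2) (hK : 20000000 ≤ K) (hρ : 0 < ρ) (hρ1 : ρ ≤ 1)
    (hs0 : 0 < s) (hs : SeparatedBalls.IsFitThreshold E4 (1 / 40000) (20480 * K) ρ s) (hτ : 0 < τ)
    (hτρ : C * τ * (4 * (20480 * K) + 1) ≤ 10 ^ 6 * ρ ^ 4)
    (hτs : (40000 * C * (20480 * K) + 1) * τ * (20480 * K) ≤ s) :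
    PackingBound Z I τ K (n + 1) := by
  classical
  intro x₀ r₀ S r h hlow
  have hr₀ := h.scale_pos
  have hmass : ∑ p ∈ S, r p ^ 2 ≤ 20480 * K * r₀ ^ 2 := by
    refine (h.sum_sq_le hPB (by linarith) hlow).trans ?_
    gcongr
    norm_num
  obtain ⟨P, hP⟩ : ∃ P, P = h.separatedBalls hρ hρ1 := ⟨_, rfl⟩
  set A := P.active 0
  set light : E4 → Prop := fun p => ∃ k, p ∈ P.active k ∧
    ∑ q ∈ P.active k with ‖q - p‖ < P.scale k, r q ^ 2 ≤ 1 / 40000 * P.scale k ^ 2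
  have hA : A ⊆ S := (P.active_subset 0).trans_eq (by rw [hP]; rfl)
  have hlarge : ∑ p ∈ S \ A, r p ^ 2 ≤ 64 * r₀ ^ 2 := by
    refine (h.mono Finset.sdiff_subset).sum_sq_le_of_ratio_lt hI hZm hZ hτ
      ((Finset.sum_le_sum_of_subset_of_nonneg Finset.sdiff_subset
        fun _ _ _ => sq_nonneg _).trans hmass) hρ (fun p hp => ?_) hτρ
    rw [Finset.mem_sdiff, SeparatedBalls.mem_active, P.scale_zero, hP] at hp
    exact (not_le.1 fun hle => hp.2 ⟨hp.1, hle⟩).le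
  have hlight : ∑ p ∈ A with light p, r p ^ 2 ≤ K / 4 * r₀ ^ 2 :=
    h.sum_sq_le_of_light hI hPB (by linarith) hlow hρ hρ1 hP fun p hp => (Finset.mem_filter.1 hp).2
  have hdense : ∑ p ∈ A with ¬ light p, r p ^ 2 ≤ 1025 * (100 * r₀) ^ 2 :=
    h.sum_sq_le_of_dense hI hZm hZ hPB (by linarith) hlow hρ hρ1 hs0 hs hτ hτs hP
      (Finset.filter_subset _ _) fun p hp k hpk =>
        (not_le.1 fun hle => (Finset.mem_filter.1 hp).2 ⟨k, hpk, hle⟩).le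
  rw [← Finset.sum_sdiff hA, ← Finset.sum_filter_add_sum_filter_not A light]
  nlinarith [sq_nonneg r₀]

theorem exists_packingBound (hI : IsTamingFunctionWith 2 Z I Λ epsFn C) (hZm : MeasurableSet Z)
    (hZ : Z ⊆ ball 0 2) : ∃ τ > 0, ∀ n, PackingBound Z I τ 20000000 n := by
  have hC : 0 < C := hI.2.2.2.2.1
  set K : ℝ := 20000000 with hK
  set ρ : ℝ := 1 / 10 ^ 19 with hρ
  obtain ⟨s, hs0, hs⟩ := SeparatedBalls.exists_isFitThreshold E4 (c := 1 / 40000) (K := 20480 * K)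
    (ρ := ρ) (by norm_num) (by positivity) (by positivity) (by rw [hK, hρ]; norm_num)
  set τ := min (10 ^ 6 * ρ ^ 4 / (C * (4 * (20480 * K) + 1)))
    (s / ((40000 * C * (20480 * K) + 1) * (20480 * K)))
  have hτ : 0 < τ := lt_min (by positivity) (by positivity)
  have hτρ : τ * (C * (4 * (20480 * K) + 1)) ≤ 10 ^ 6 * ρ ^ 4 :=
    (le_div_iff₀ (by positivity)).1 (min_le_left _ _)
  have hτs : τ * ((40000 * C * (20480 * K) + 1) * (20480 * K)) ≤ s :=
    (le_div_iff₀ (by positivity)).1 (min_le_right _ _)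
  refine ⟨τ, hτ, fun n => ?_⟩
  induction n with
  | zero => exact packingBound_zero (by norm_num)
  | succ n ih =>
    exact ih.succ hI hZm hZ le_rfl (by positivity) (by rw [hρ]; norm_num) hs0 hs hτ
      (by linarith) (by linarith)

end Packing

/-! ### Lines and the pinching property -/

section Lines

variable {E : Type*} [NormedAddCommGroup E] [NormedSpace ℝ E]

/-- `S` lies in the closed `ε`-neighbourhood of some line. -/
def IsNearLine (S : Set E) (ε : ℝ) : Prop :=
  ∃ V : AffineSubspace ℝ E, (V : Set E).Nonempty ∧ Module.finrank ℝ V.direction = 1 ∧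
    ∀ z ∈ S, infDist z (V : Set E) ≤ ε

lemma isNearLine_of_forall_infDist_le {S : Set E} {ε : ℝ} {a b : E} (hab : a ≠ b)
    (h : ∀ z ∈ S, infDist z line[ℝ, a, b] ≤ ε) : IsNearLine S ε := by
  refine ⟨line[ℝ, a, b], ⟨a, left_mem_affineSpan_pair ℝ a b⟩, ?_, h⟩
  rw [direction_affineSpan, vectorSpan_pair, vsub_eq_sub]
  exact finrank_span_singleton (sub_ne_zero.2 hab)

lemma isNearLine_of_subset_closedBall [Nontrivial E] {S : Set E} {ε : ℝ} {a : E}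
    (h : S ⊆ closedBall a ε) : IsNearLine S ε := by
  obtain ⟨b, hb⟩ := exists_ne a
  exact isNearLine_of_forall_infDist_le hb.symm fun z hz =>
    (infDist_le_dist_of_mem (left_mem_affineSpan_pair ℝ a b)).trans (h hz)

lemma exists_le_infDist_line_of_not_isNearLine [Nontrivial E] {S : Set E} {ε : ℝ} (hε : 0 < ε)
    (h : ¬ IsNearLine S ε) : ∃ p : Fin 3 → E, (∀ i, p i ∈ S) ∧ ε ≤ dist (p 0) (p 1) ∧
      ε ≤ infDist (p 2) line[ℝ, p 0, p 1] := by
  have hfar : ∀ a b : E, a ≠ b → ∃ z ∈ S, ε < infDist z line[ℝ, a, b] := fun a b hab => by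
    by_contra! hle
    exact h (isNearLine_of_forall_infDist_le hab hle)
  obtain ⟨a, ha⟩ : S.Nonempty := by
    by_contra! hempty
    exact h (isNearLine_of_subset_closedBall (a := 0) (by simp [hempty]))
  obtain ⟨e, he⟩ := exists_ne a
  obtain ⟨b, hb, hbe⟩ := hfar a e he.symm
  have hab : ε < dist a b := dist_comm b a ▸ hbe.trans_le
    (infDist_le_dist_of_mem (left_mem_affineSpan_pair ℝ a e))
  obtain ⟨c, hc, hcab⟩ := hfar a b (dist_pos.1 (hε.trans hab))
  refine ⟨![a, b, c], fun i => ?_, hab.le, hcab.le⟩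
  fin_cases i
  exacts [ha, hb, hc]

/- A point `y = a + t (c - a)` of the line through `a` and `c` is far from `b` because `b` is far
from `a` if `t` is small, and because `c` is far from `a + t⁻¹ (b - a)` otherwise. -/
lemma sq_div_le_infDist_line {a b c : E} {ε M : ℝ} (hε : 0 < ε) (hab : ε ≤ dist a b)
    (hac : dist a c ≤ M) (hc : ε ≤ infDist c line[ℝ, a, b]) :
    ε ^ 2 / (2 * M) ≤ infDist b line[ℝ, a, c] := by
  have hεM : ε ≤ M := hc.trans ((infDist_le_dist_of_mem (left_mem_affineSpan_pair ℝ a b)).trans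
    (dist_comm c a ▸ hac))
  have hM : 0 < M := hε.trans_le hεM
  rw [le_infDist ⟨a, left_mem_affineSpan_pair ℝ a c⟩]
  intro y hy
  obtain ⟨t, rfl⟩ := mem_affineSpan_pair_iff_exists_lineMap_eq.1 hy
  rw [div_le_iff₀ (by positivity)]
  rcases le_or_gt (|t| * M) (ε / 2) with ht | ht
  · have hy : dist a (AffineMap.lineMap a c t) ≤ |t| * M := by
      rw [dist_left_lineMap, Real.norm_eq_abs]
      gcongr
    have hby : ε / 2 ≤ dist b (AffineMap.lineMap a c t) := by
      linarith [dist_triangle_right a b (AffineMap.lineMap a c t)]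
    nlinarith
  · have ht0 : t ≠ 0 := by
      rintro rfl
      simp only [abs_zero, zero_mul] at ht
      linarith
    have hdist : dist b (AffineMap.lineMap a c t) =
        |t| * dist c (AffineMap.lineMap a b t⁻¹) := by
      rw [dist_comm c, dist_eq_norm, dist_eq_norm, ← Real.norm_eq_abs, ← norm_smul,
        AffineMap.lineMap_apply_module', AffineMap.lineMap_apply_module', add_sub_assoc,
        smul_add, smul_inv_smul₀ ht0]
      congr 1
      module
    have hcy : ε ≤ dist c (AffineMap.lineMap a b t⁻¹) :=
      hc.trans (infDist_le_dist_of_mem (AffineMap.lineMap_mem_affineSpan_pair _ _ _))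
    rw [hdist]
    nlinarith [mul_le_mul_of_nonneg_left hcy (abs_nonneg t)]

lemma sq_div_le_infDist_affineSpan_compl {p : Fin 3 → E} {ε M : ℝ} (hε : 0 < ε)
    (hM : ∀ i j, dist (p i) (p j) ≤ M) (h01 : ε ≤ dist (p 0) (p 1))
    (h2 : ε ≤ infDist (p 2) line[ℝ, p 0, p 1]) (j : Fin 3) :
    ε ^ 2 / (2 * M) ≤ infDist (p j) (affineSpan ℝ (p '' {j}ᶜ) : AffineSubspace ℝ E) := by
  have hεM : ε ≤ M := h01.trans (hM 0 1)
  have himage : p '' {0}ᶜ = {p 1, p 2} ∧ p '' {1}ᶜ = {p 0, p 2} ∧ p '' {2}ᶜ = {p 0, p 1} := by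
    refine ⟨?_, ?_, ?_⟩ <;> ext y <;> simp [Fin.exists_fin_succ, eq_comm]
  fin_cases j
  · change _ ≤ infDist (p 0) (affineSpan ℝ (p '' {0}ᶜ))
    rw [himage.1]
    exact sq_div_le_infDist_line hε (dist_comm (p 0) _ ▸ h01) (hM 1 2) (Set.pair_comm (p 0) _ ▸ h2)
  · change _ ≤ infDist (p 1) (affineSpan ℝ (p '' {1}ᶜ))
    rw [himage.2.1]
    exact sq_div_le_infDist_line hε h01 (hM 0 2) h2
  · change _ ≤ infDist (p 2) (affineSpan ℝ (p '' {2}ᶜ))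
    rw [himage.2.2]
    refine le_trans ?_ h2
    rw [div_le_iff₀ (by linarith)]
    nlinarith

end Lines

section Covering

/-- The set `D_δ(t) = B(1) ∩ {z ∈ Z : I(z, t/20) ≥ Λ - δ}` of points of almost maximal `I`. -/
def nearMaxSet (Z : Set E4) (I : E4 → ℝ → ℝ) (Λ δ t : ℝ) : Set E4 :=
  ball 0 1 ∩ {z | z ∈ Z ∧ Λ - δ ≤ I z (1 / 10 * t / 2)}

variable {Z : Set E4} {I : E4 → ℝ → ℝ} {Λ : ℝ} {epsFn : ℝ → ℝ → ℝ → ℝ} {C τ δ K r s : ℝ} {x p : E4}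

lemma IsTamingFunctionWith.drop_le_of_not_isNearLine (hI : IsTamingFunctionWith 2 Z I Λ epsFn C)
    (hZ : Z ⊆ ball 0 2) (hτ : 0 < τ) (hδ : δ < epsFn (1 / 10) (1 / 10000) (τ / 2))
    (hδτ : δ ≤ τ / 2) (hp : p ∈ Z) (hr : 0 < r) (hr2 : r ≤ 2)
    (h : ¬ IsNearLine (nearMaxSet Z I Λ δ r ∩ ball p r) (2 * (1 / 100) * r)) :
    I p 256 - I p (1 / 10 * r / 2) ≤ τ := by
  obtain ⟨hbound, -, -, hpinch, -⟩ := hI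
  obtain ⟨q, hq, h01, h2⟩ := exists_le_infDist_line_of_not_isNearLine (by positivity) h
  have hqp : ∀ i, q i ∈ Z ∩ closedBall p r := fun i =>
    ⟨(hq i).1.2.1, ball_subset_closedBall (hq i).2⟩
  have hdist : ∀ i j, dist (q i) (q j) ≤ 2 * r := fun i j => by
    linarith [dist_triangle_right (q i) (q j) p, mem_ball.1 (hq i).2, mem_ball.1 (hq j).2]
  have hindep : ∀ j, 1 / 10000 * r ≤
      infDist (q j) (affineSpan ℝ (q '' {j}ᶜ) : AffineSubspace ℝ E4) := fun j =>
    (sq_div_le_infDist_affineSpan_compl (by positivity) hdist h01 h2 j).trans_eq' (by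
      field_simp
      norm_num)
  have hosc : |I p (1 / 10 * r / 2) - I (q 0) (1 / 10 * r / 2)| < τ / 2 :=
    (hpinch (1 / 10) (by norm_num) (1 / 10000) (by norm_num) (τ / 2) (half_pos hτ)).2 p (hZ hp) r
      ⟨hr, hr2⟩ q hqp hindep (fun i => by
        linarith [(hbound _ (hqp i).1 (2 * r) ⟨by positivity, by linarith⟩).2, (hq i).1.2.2])
      p ⟨hp, mem_closedBall_self hr.le⟩ (q 0) (hqp 0)
  linarith [(abs_lt.1 hosc).1, (hq 0).1.2.2, (hbound p hp 256 (by norm_num)).2]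

/-! ### Admissible coverings -/

/-- An `s`-admissible covering of `Z ∩ B(x, r)` by balls `B(c i, ρ i)` with volume constant `K`: a
ball of radius larger than `s` meets the corresponding set `D_δ` close to a line only. -/
structure IsAdmissibleCovering (Z : Set E4) (I : E4 → ℝ → ℝ) (Λ δ : ℝ) (x : E4) (r s K : ℝ)
    {ι : Type*} [Fintype ι] (c : ι → E4) (ρ : ι → ℝ) : Prop where
  subset : Z ∩ ball x r ⊆ ⋃ i, ball (c i) (ρ i)
  le_radius : ∀ i, 1 / 10 * s ≤ ρ i
  le_or_isNearLine : ∀ i, ρ i ≤ s ∨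
    IsNearLine (nearMaxSet Z I Λ δ (ρ i) ∩ ball (c i) (ρ i)) (2 * (1 / 100) * ρ i)
  sum_sq_le : ∑ i, ρ i ^ 2 ≤ K * r ^ 2

lemma IsAdmissibleCovering.comp_equiv {ι κ : Type*} [Fintype ι] [Fintype κ] {c : ι → E4}
    {ρ : ι → ℝ} (h : IsAdmissibleCovering Z I Λ δ x r s K c ρ) (e : κ ≃ ι) :
    IsAdmissibleCovering Z I Λ δ x r s K (c ∘ e) (ρ ∘ e) where
  subset := h.subset.trans_eq (e.surjective.iUnion_comp fun i => ball (c i) (ρ i)).symm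
  le_radius k := h.le_radius (e k)
  le_or_isNearLine k := h.le_or_isNearLine (e k)
  sum_sq_le := (e.sum_comp fun i => ρ i ^ 2).trans_le h.sum_sq_le

/- For large `r` a single ball does: its radius is so large that any line through `0` lies within
`2ρ/100` of the whole unit ball. -/
lemma isAdmissibleCovering_singleton (hZ : Z ⊆ ball 0 2) (hr : 1 / 250 ≤ r) (hs : s < r) :
    IsAdmissibleCovering Z I Λ δ x r s 625050001 (fun _ : Unit => 0) fun _ => 100 + r where
  subset := (Set.inter_subset_left.trans hZ).trans
    ((ball_subset_ball (by linarith)).trans (Set.subset_iUnion_of_subset () subset_rfl))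
  le_radius _ := by linarith
  le_or_isNearLine _ := Or.inr (isNearLine_of_subset_closedBall (a := 0) fun z hz =>
    closedBall_subset_closedBall (by linarith) (ball_subset_closedBall hz.1.1))
  sum_sq_le := by
    rw [Finset.univ_unique, Finset.sum_singleton]
    nlinarith

lemma exists_isGreedyNet_of_subset_closedBall {F : Type*} [NormedAddCommGroup F] [NormedSpace ℝ F]
    [FiniteDimensional ℝ F] {S : Set F} {u : F → ℝ} {y : F} {R t : ℝ} (ht : 0 < t)
    (hS : S ⊆ closedBall y R) (htu : ∀ p ∈ S, t ≤ u p) (hfin : (u '' S).Finite) :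
    ∃ N, IsGreedyNet S u N := by
  rcases S.eq_empty_or_nonempty with rfl | ⟨o, ho⟩
  · exact ⟨∅, by simp, by simp, by simp⟩
  refine exists_isGreedyNet ht htu hfin fun N hN hsep => Nat.le_floor
    (a := (2 * (R + 1) + t) ^ Module.finrank ℝ F / t ^ Module.finrank ℝ F) ?_
  have hR : 0 ≤ R := dist_nonneg.trans (hS ho)
  rw [le_div_iff₀ (by positivity)]
  refine card_mul_pow_finrank_le N y ht (by positivity) (fun p hp => ?_) fun p hp q hq hpq => ?_
  · rw [← dist_eq_norm]
    exact (mem_closedBall.1 (hS (hN hp))).trans (by linarith)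
  · exact (hsep p hp q hq hpq).trans_eq (dist_eq_norm p q)

lemma exists_first_index {X : Type*} (Q : X → ℕ → Prop) (N : ℕ) :
    ∃ k : X → ℕ, ∀ p, k p ≤ N ∧ (k p = N ∨ Q p (k p)) ∧ ∀ j < k p, ¬ Q p j := by
  classical
  have hex : ∀ p, ∃ k, k = N ∨ Q p k := fun p => ⟨N, Or.inl rfl⟩
  exact ⟨fun p => Nat.find (hex p), fun p => ⟨Nat.find_le (Or.inl rfl), Nat.find_spec (hex p),
    fun j hj hQ => Nat.find_min (hex p) hj (Or.inr hQ)⟩⟩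

lemma sum_sq_le_of_drop_le (hPB : ∀ n, PackingBound Z I τ K n) (hr : 0 < r) (hr1 : r ≤ 1 / 250)
    {S : Finset E4} {k : E4 → ℕ} {N : ℕ} (hS : ↑S ⊆ Z ∩ ball x r) (hk : ∀ p ∈ S, k p ≤ N)
    (hsep : ∀ p ∈ S, ∀ q ∈ S, p ≠ q → (1 / 10) ^ k p * r ≤ dist p q)
    (hdrop : ∀ p ∈ S, k p ≠ 0 → I p 256 - I p ((1 / 10) ^ k p * r / 2) ≤ τ) :
    ∑ p ∈ S, ((1 / 10) ^ k p * r) ^ 2 ≤ (K + 625) * r ^ 2 := by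
  have hnear : ∀ p ∈ S, ‖p - x‖ < r := fun p hp => dist_eq_norm p x ▸ (hS hp).2
  simp only [dist_eq_norm] at hsep
  have htop : ∑ p ∈ S with k p = 0, ((1 / 10) ^ k p * r) ^ 2 ≤ 625 * r ^ 2 := by
    rw [Finset.sum_congr rfl fun p hp => by rw [(Finset.mem_filter.1 hp).2, pow_zero, one_mul],
      Finset.sum_const, nsmul_eq_mul]
    gcongr
    refine card_le_of_half_separated hr (fun p hp => (hnear p (Finset.mem_filter.1 hp).1).le)
      fun p hp q hq hpq => ?_
    rw [Finset.mem_filter] at hp hq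
    have hpq := hsep p hp.1 q hq.1 hpq
    rw [hp.2] at hpq
    linarith
  have hpinched : IsPinchedFamily Z I τ x r (S.filter fun p => ¬ k p = 0)
      fun p => (1 / 10) ^ k p * r := by
    have hsub := Finset.filter_subset (fun p => ¬ k p = 0) S
    exact {
      scale_pos := hr
      scale_le := hr1
      mem := fun p hp => (hS (hsub hp)).1
      norm_sub_lt := fun p hp => hnear p (hsub hp)
      radius_pos := fun p _ => by positivity
      radius_le := fun p _ => mul_le_of_le_one_left hr.le
        (pow_le_one₀ (by norm_num) (by norm_num))
      radius_le_norm_sub := fun p hp q hq => hsep p (hsub hp) q (hsub hq)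
      drop_le := fun p hp => hdrop p (hsub hp) (Finset.mem_filter.1 hp).2 }
  have hlower := hPB (4 * N) x r _ _ hpinched fun p hp => by
    calc (1 / 2) ^ (4 * N) * r ≤ (1 / 10) ^ N * r := by
          rw [pow_mul]
          gcongr
          norm_num
      _ ≤ (1 / 10) ^ k p * r := by
          gcongr ?_ * r
          exact pow_le_pow_of_le_one (by norm_num) (by norm_num)
            (hk p (Finset.mem_filter.1 hp).1)
  rw [← Finset.sum_filter_add_sum_filter_not S fun p => k p = 0]
  linarith

/- The radius at `p` is the first of the numbers `r/10ᵏ` that is at most `s` or at which `D_δ` is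
close to a line; as the previous one is not, the pinching property bounds the drop of `I` at `p`. -/
lemma exists_isAdmissibleCovering_of_le (hI : IsTamingFunctionWith 2 Z I Λ epsFn C)
    (hZ : Z ⊆ ball 0 2) (hτ : 0 < τ) (hδ : δ < epsFn (1 / 10) (1 / 10000) (τ / 2))
    (hδτ : δ ≤ τ / 2) (hPB : ∀ n, PackingBound Z I τ K n) (hr1 : r ≤ 1 / 250) (hs : 0 < s)
    (hsr : s < r) (x : E4) : ∃ (S : Finset E4) (ρ : E4 → ℝ),
      IsAdmissibleCovering Z I Λ δ x r s (K + 625) (fun p : S => (p : E4)) fun p => ρ p := by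
  have hr := hs.trans hsr
  obtain ⟨m, hm⟩ := exists_nat_pow_near_of_lt_one (div_pos hs hr) ((div_le_one hr).2 hsr.le)
    (by norm_num : (0 : ℝ) < 1 / 10) (by norm_num)
  rw [lt_div_iff₀ hr, div_le_iff₀ hr] at hm
  obtain ⟨k, hk⟩ := exists_first_index (fun p k => IsNearLine
    (nearMaxSet Z I Λ δ ((1 / 10) ^ k * r) ∩ ball p ((1 / 10) ^ k * r))
    (2 * (1 / 100) * ((1 / 10) ^ k * r))) (m + 1)
  have hle : ∀ p, (1 / 10) ^ (m + 1) * r ≤ (1 / 10) ^ k p * r := fun p => by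
    gcongr ?_ * r
    exact pow_le_pow_of_le_one (by norm_num) (by norm_num) (hk p).1
  obtain ⟨S, hS⟩ := exists_isGreedyNet_of_subset_closedBall (S := Z ∩ ball x r)
    (u := fun p => (1 / 10) ^ k p * r) (t := (1 / 10) ^ (m + 1) * r) (by positivity)
    (Set.inter_subset_right.trans ball_subset_closedBall) (fun p _ => hle p)
    (((Set.finite_Iic (m + 1)).image fun k => (1 / 10 : ℝ) ^ k * r).subset
      (Set.image_subset_iff.2 fun p _ => ⟨k p, (hk p).1, rfl⟩))
  refine ⟨S, fun p => (1 / 10) ^ k p * r, fun p hp => ?_, fun p => ?_, fun p => ?_, ?_⟩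
  · obtain ⟨q, hq, -, hpq⟩ := hS.exists_mem p hp
    exact Set.mem_iUnion.2 ⟨⟨q, hq⟩, hpq⟩
  · exact (hle p).trans' (by rw [pow_succ', mul_assoc]; gcongr; exact hm.2)
  · exact (hk p).2.1.imp_left fun hkp => by simpa only [hkp] using hm.1.le
  · rw [Finset.sum_coe_sort S fun p => ((1 / 10) ^ k p * r) ^ 2]
    refine sum_sq_le_of_drop_le hPB hr hr1 hS.subset (fun p _ => (hk p).1) hS.le_dist
      fun p hp hkp => ?_
    obtain ⟨j, hj⟩ := Nat.exists_eq_succ_of_ne_zero hkp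
    have hjr : (1 / 10) ^ j * r ≤ r :=
      mul_le_of_le_one_left hr.le (pow_le_one₀ (by norm_num) (by norm_num))
    rw [hj, Nat.succ_eq_add_one, pow_succ', mul_assoc]
    exact hI.drop_le_of_not_isNearLine hZ hτ hδ hδτ (hS.subset hp).1 (by positivity)
      (by linarith) ((hk p).2.2 j (by omega))

theorem exists_isAdmissibleCovering (hI : IsTamingFunctionWith 2 Z I Λ epsFn C)
    (hZm : MeasurableSet Z) (hZ : Z ⊆ ball 0 2) :
    ∃ δ > 0, ∀ (x : E4) (r s : ℝ), 0 < s → s < r → ∃ (n : ℕ) (c : Fin n → E4) (ρ : Fin n → ℝ),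
      IsAdmissibleCovering Z I Λ δ x r s 625050001 c ρ := by
  obtain ⟨τ, hτ, hPB⟩ := exists_packingBound hI hZm hZ
  have hε : 0 < epsFn (1 / 10) (1 / 10000) (τ / 2) :=
    (hI.2.2.2.1 (1 / 10) (by norm_num) (1 / 10000) (by norm_num) (τ / 2) (half_pos hτ)).1
  refine ⟨min (epsFn (1 / 10) (1 / 10000) (τ / 2) / 2) (τ / 2), by positivity,
    fun x r s hs hsr => ?_⟩
  rcases le_or_gt r (1 / 250) with hsmall | hlarge
  · obtain ⟨S, ρ, h⟩ := exists_isAdmissibleCovering_of_le hI hZ hτ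
      ((min_le_left _ _).trans_lt (half_lt_self hε)) (min_le_right _ _) hPB hsmall hs hsr x
    have h' := h.comp_equiv S.equivFin.symm
    exact ⟨S.card, _, _, { h' with sum_sq_le := h'.sum_sq_le.trans (by gcongr; norm_num) }⟩
  · exact ⟨1, _, _, (isAdmissibleCovering_singleton hZ hlarge.le hsr).comp_equiv
      (Equiv.equivPUnit (Fin 1))⟩

end Covering

/-- Covering lemma (Lemma 9.5 of the paper): `s`-admissible coverings exist. -/
theorem stmt_5 (Z : Set E4) (hZm : MeasurableSet Z) (hZ : Z ⊆ ball (0:E4) 2)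
    (I : E4 → ℝ → ℝ) (Λ : ℝ) (epsFn : ℝ → ℝ → ℝ → ℝ) (C : ℝ)
    (hI : IsTamingFunctionWith 2 Z I Λ epsFn C) :
    ∃ K₁ > (1:ℝ), ∃ β' ∈ Set.Ioc (0:ℝ) (1/100), ∃ δ > (0:ℝ),
      ∀ (x : E4) (r : ℝ), 0 < r → ball x r ⊆ ball (0:E4) 2 →
      ∀ s ∈ Set.Ioo (0:ℝ) r,
      ∃ (n : ℕ) (c : Fin n → E4) (ρ : Fin n → ℝ),
        -- the balls cover Z ∩ B_x(r)
        (Z ∩ ball x r ⊆ ⋃ i, ball (c i) (ρ i)) ∧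
        -- (1) each radius is at least βs, with β = 1/10
        (∀ i, (1/10) * s ≤ ρ i) ∧
        -- (2) either r_i ≤ s, or B_{x_i}(r_i) ∩ D_δ(r_i) lies in the 2β̄r_i-neighborhood
        -- of a 1-dimensional affine subspace, where
        -- D_δ(t) = B(1) ∩ {z ∈ Z : I(z, βt/2) ≥ Λ − δ}
        (∀ i, ρ i ≤ s ∨
          ∃ V : AffineSubspace ℝ E4, (V : Set E4).Nonempty ∧
            Module.finrank ℝ V.direction = 1 ∧
            ∀ z ∈ (ball (0:E4) 1 ∩ {z | z ∈ Z ∧ Λ - δ ≤ I z ((1/10) * ρ i / 2)})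
                ∩ ball (c i) (ρ i),
              Metric.infDist z (V : Set E4) ≤ 2 * β' * ρ i) ∧
        -- (3) bounded 2-dimensional volume
        (∑ i, (ρ i) ^ 2 ≤ K₁ * r ^ 2) := by
  obtain ⟨δ, hδ, hcover⟩ := exists_isAdmissibleCovering hI hZm hZ
  refine ⟨625050001, by norm_num, 1 / 100, by norm_num, δ, hδ, fun x r _ _ s hs => ?_⟩
  obtain ⟨n, c, ρ, h⟩ := hcover x r s hs.1 hs.2
  exact ⟨n, c, ρ, h.subset, h.le_radius, h.le_or_isNearLine, h.sum_sq_le⟩
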